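/- arXiv:2503.02536 — 2 statements merged into one kernel-verified Lean document; each statement's English description precedes it below -/
import Mathlib

section
/- Assume m ≥ n+1 and that f_1,…,f_m satisfy the SNC hypothesis. Then there exist elements g_1,…,g_{n−1} of the ideal I_{m+1}(Q^s_{∖1}) ⊆ S that form a regular sequence on S (i.e., each g_k is a nonzerodivisor on S/(g_1,…,g_{k−1}), and (g_1,…,g_{n−1}) ≠ S). -/
open MvPolynomial

noncomputable section

/-- The polynomial ring `R = ℂ[x_1,…,x_n]`. -/
abbrev Rp (n : ℕ) := MvPolynomial (Fin n) ℂ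

/-- The polynomial ring `S = ℂ[s_1,…,s_m,x_1,…,x_n]`; `Sum.inl i ↦ s_i`, `Sum.inr j ↦ x_j`. -/
abbrev Sp (n m : ℕ) := MvPolynomial (Fin m ⊕ Fin n) ℂ

/-- The inclusion `R ⊆ S`. -/
def toS (n m : ℕ) : Rp n →ₐ[ℂ] Sp n m := rename Sum.inr

/-- Column index set for `Q_{∖1}`: diagonal columns `2,…,m` and the `n` Jacobian columns. -/
abbrev Col (n m : ℕ) := {k : Fin m // (k : ℕ) ≠ 0} ⊕ Fin n

/-- The SNC (strict normal crossing) hypothesis, via the Jacobian criterion. -/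
def SNC (n m : ℕ) (f : Fin m → Rp n) : Prop :=
  (∀ i, Irreducible (f i)) ∧
  ∀ I : Finset (Fin m), 1 ≤ I.card → I.card ≤ n →
    ∀ p : Fin n → ℂ, p ≠ 0 → (∀ i ∈ I, eval p (f i) = 0) →
      (Matrix.of fun (i : I) (j : Fin n) => eval p (pderiv j (f i.1))).rank = I.card

/-- The matrix `Q = (diag(f_1,…,f_m) | J_f)`. -/
def Qmat (n m : ℕ) (f : Fin m → Rp n) : Matrix (Fin m) (Fin m ⊕ Fin n) (Rp n) :=
  Matrix.of fun i => Sum.elim (fun k => if i = k then f i else 0) (fun j => pderiv j (f i))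

/-- The matrix `Q_{∖1}`, obtained from `Q` by deleting the first column. -/
def Q1 (n m : ℕ) (f : Fin m → Rp n) : Matrix (Fin m) (Col n m) (Rp n) :=
  Matrix.of fun i => Sum.elim (fun k => if i = (k : Fin m) then f i else 0)
    (fun j => pderiv j (f i))

/-- The matrix `Q^s_{∖1}`: `Q_{∖1}` (over `S`) with the row `(s_2,…,s_m,0,…,0)` appended. -/
def Qs1 (n m : ℕ) (f : Fin m → Rp n) : Matrix (Option (Fin m)) (Col n m) (Sp n m) :=
  Matrix.of fun i? c =>
    i?.elim (Sum.elim (fun k : {k : Fin m // (k : ℕ) ≠ 0} => (X (Sum.inl (k : Fin m)) : Sp n m)) (fun _ : Fin n => (0 : Sp n m)) c)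
      (fun i => toS n m (Q1 n m f i c))

/-- The ideal generated by all `k × k` minors of a matrix. -/
def minorsIdeal {A : Type*} [CommRing A] {ι κ : Type*} (k : ℕ) (M : Matrix ι κ A) : Ideal A :=
  Ideal.span {x | ∃ r : Fin k → ι, ∃ c : Fin k → κ,
    Function.Injective r ∧ Function.Injective c ∧ x = (M.submatrix r c).det}

/-- `h_j = Σ_i s_i·(Π_{k≠i} f_k)·∂f_i/∂x_j`. -/
def hpoly (n m : ℕ) (f : Fin m → Rp n) (j : Fin n) : Sp n m :=
  ∑ i, X (Sum.inl i) * toS n m (((Finset.univ.erase i).prod f) * pderiv j (f i))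

/-- The linear form `Σ_i d_i·s_i`. -/
def linForm (n m : ℕ) (d : Fin m → ℕ) : Sp n m := ∑ i, (d i : Sp n m) * X (Sum.inl i)

/-- The likelihood ideal `I_A`: contraction to `S` of the ideal `⟨h_1,…,h_n⟩` of `S_f`. -/
def IA (n m : ℕ) (f : Fin m → Rp n) : Ideal (Sp n m) :=
  (Ideal.span (Set.range fun j =>
      algebraMap (Sp n m) (Localization.Away (toS n m (∏ i, f i))) (hpoly n m f j))).comap
    (algebraMap (Sp n m) (Localization.Away (toS n m (∏ i, f i))))

/-!
In a polynomial ring over a field `k`, an ideal such that the quotient by each prime over it has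
transcendence degree at most `dim - c` contains a regular sequence of length `c`. So it suffices
that, at each point `(a, p)` over an extension field of `k` where the bordered matrix has dependent
rows, the field `k(a, p)` has transcendence degree at most `m + 1`.

If `p = 0` this is clear. If `p ≠ 0`, Euler's formula and the normal crossing condition show that
the dependence involves the bordering row, and it becomes `a i = -(f i)(p) * c i` for `i ≠ i₀` with
`∑ i, c i • df i (p) = 0`. The `f i` have no common zero but the origin, so `k(p)` is algebraic over
the `(f i)(p)`. If those with `i ∈ T` form a transcendence basis, the derivations dual to it
express every `c i` through the `c i` with `i ∉ T`. Hence `p` and `c` generate a field of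
transcendence degree at most `|T| + |Tᶜ| = m`, and `a i₀` adds at most one.
-/

section RegularSequences

open RingTheory.Sequence CategoryTheory Abelian

universe u

lemma subsingleton_linearMap_quotient_of_subsingleton_ext {R : Type u} [CommRing R]
    (N M : ModuleCat.{u} R) {bs : List R} (hbs : IsWeaklyRegular M bs)
    (hext : ∀ i ≤ bs.length, Subsingleton (Ext N M i)) :
    Subsingleton (N →ₗ[R] M ⧸ (Ideal.ofList bs • ⊤ : Submodule R M)) := by
  induction bs generalizing M with
  | nil =>
    have hhom : Subsingleton (N ⟶ M) := Ext.addEquiv₀.subsingleton_congr.mp (hext 0 le_rfl)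
    have hlin : Subsingleton (N →ₗ[R] M) := ModuleCat.homAddEquiv.symm.subsingleton
    let e : (M ⧸ (Ideal.ofList ([] : List R) • ⊤ : Submodule R M)) ≃ₗ[R] M :=
      Submodule.quotEquivOfEqBot _ (by simp)
    exact (LinearEquiv.congrRight (M := N) e).toEquiv.subsingleton
  | cons b bs ih =>
    obtain ⟨hb, hbs⟩ := (isWeaklyRegular_cons_iff M b bs).mp hbs
    have hext_quot (i : ℕ) (hi : i ≤ bs.length) :
        Subsingleton (Ext N (ModuleCat.of R (QuotSMulTop b M)) i) := by
      have zero_i := AddCommGrpCat.isZero_of_iff_subsingleton.mpr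
        (hext i (hi.trans (Nat.le_succ _)))
      have zero_succ := AddCommGrpCat.isZero_of_iff_subsingleton.mpr
        (hext (i + 1) (Nat.succ_le_succ hi))
      exact AddCommGrpCat.subsingleton_of_isZero <| ShortComplex.Exact.isZero_of_both_zeros
        (Ext.covariant_sequence_exact₃' N hb.smulShortComplex_shortExact i (i + 1) rfl)
        (zero_i.eq_zero_of_src _) (zero_succ.eq_zero_of_tgt _)
    have := ih (ModuleCat.of R (QuotSMulTop b M)) hbs hext_quot
    exact (LinearEquiv.congrRight (M := N)
      (Submodule.quotOfListConsSMulTopEquivQuotSMulTopInner M b bs)).toEquiv.subsingleton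

lemma length_le_of_forall_mul_mem_ofList {R : Type u} [CommRing R] [IsNoetherianRing R]
    {as bs : List R} (has : IsWeaklyRegular R as) (hbs : IsWeaklyRegular R bs) {z : R}
    (hz : z ∉ Ideal.ofList bs) (haz : ∀ a ∈ as, a * z ∈ Ideal.ofList bs) :
    as.length ≤ bs.length := by
  by_contra! hlt
  -- `z` induces a nonzero map `R ⧸ (as) → R ⧸ (bs)`, but by Rees' theorem the `Ext i` of these
  -- modules into `R` vanish for `i < as.length`, which leaves no room for such a map.
  let J : Ideal R := Ideal.ofList as
  let φ : (R ⧸ J) →ₗ[R] R ⧸ (Ideal.ofList bs • ⊤ : Submodule R R) :=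
    Submodule.liftQ J (LinearMap.toSpanSingleton R _ (Submodule.Quotient.mk z)) <| by
      refine Submodule.span_le.mpr fun a ha => ?_
      rw [SetLike.mem_coe, LinearMap.mem_ker, LinearMap.toSpanSingleton_apply,
        ← Submodule.Quotient.mk_smul, Submodule.Quotient.mk_eq_zero]
      simpa using haz a ha
  have hφ : φ (Submodule.Quotient.mk 1) ≠ 0 := by
    rw [Submodule.liftQ_apply, LinearMap.toSpanSingleton_apply, one_smul, Ne,
      Submodule.Quotient.mk_eq_zero]
    simpa using hz
  have hJ : J ≠ ⊤ := fun hJ => hφ <| by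
    rw [(Submodule.Quotient.mk_eq_zero J).mpr (hJ ▸ Submodule.mem_top), map_zero]
  have has' : IsRegular R as := ⟨has, by simpa [eq_comm] using hJ⟩
  have hsupp : Module.support R (ModuleCat.of R (R ⧸ J)) ⊆ PrimeSpectrum.zeroLocus J := by
    change Module.support R (R ⧸ J) ⊆ _
    rw [Module.support_eq_zeroLocus, Ideal.annihilator_quotient]
  have hext := ModuleCat.subsingleton_ext_of_exists_isRegular J (ModuleCat.of R (R ⧸ J)) hsupp
    (ModuleCat.of R R)
    (by change J • (⊤ : Submodule R R) < ⊤; simpa [lt_top_iff_ne_top] using hJ)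
    as (fun _ ha => Ideal.subset_span ha) has'
  have := subsingleton_linearMap_quotient_of_subsingleton_ext (ModuleCat.of R (R ⧸ J))
    (ModuleCat.of R R) hbs fun i hi => hext i (hi.trans_lt hlt)
  exact hφ (DFunLike.congr_fun (Subsingleton.elim (α := (R ⧸ J) →ₗ[R] _) φ 0) _)

lemma isSMulRegular_quotient_map_C_of_monic {A : Type*} [CommRing A] (a : Ideal A)
    {q : Polynomial A} (hq : q.Monic) :
    IsSMulRegular (Polynomial A ⧸ a.map (algebraMap A (Polynomial A))) q := by
  have mem_iff (y : Polynomial A) : y ∈ a.map (algebraMap A (Polynomial A)) ↔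
      y.map (Ideal.Quotient.mk a) = 0 := by
    rw [Polynomial.algebraMap_eq, Ideal.mem_map_C_iff, Polynomial.ext_iff]
    simp only [Polynomial.coeff_map, Ideal.Quotient.eq_zero_iff_mem, Polynomial.coeff_zero]
  refine isSMulRegular_iff_right_eq_zero_of_smul.mpr fun x hx => ?_
  obtain ⟨x, rfl⟩ := Ideal.Quotient.mk_surjective x
  rw [← Ideal.Quotient.mk_eq_mk, ← Submodule.Quotient.mk_smul, smul_eq_mul,
    Ideal.Quotient.mk_eq_mk, Ideal.Quotient.eq_zero_iff_mem, mem_iff, Polynomial.map_mul] at hx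
  rwa [Ideal.Quotient.eq_zero_iff_mem, mem_iff, ← (hq.map _).mul_right_eq_zero_iff]

lemma isWeaklyRegular_map_ringEquiv {A B : Type*} [CommRing A] [CommRing B] (e : A ≃+* B)
    {rs : List A} (hrs : IsWeaklyRegular A rs) : IsWeaklyRegular B (rs.map e) :=
  (AddEquiv.isWeaklyRegular_congr (e := e.toAddEquiv) <| List.forall₂_map_right_iff.mpr <|
    List.forall₂_same.mpr fun r _ x => map_mul e r x).mp hrs

lemma exists_isWeaklyRegular_aeval_of_monic {A τ : Type*} [CommRing A] [Finite τ]
    (p : τ → Polynomial A) (hp : ∀ i, (p i).Monic) :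
    ∃ as : List (MvPolynomial τ A), as.length = Nat.card τ ∧
      (∀ a ∈ as, ∃ i, a = Polynomial.aeval (X i) (p i)) ∧
      IsWeaklyRegular (MvPolynomial τ A) as := by
  induction τ using Finite.induction_empty_option with
  | of_equiv e ih =>
    obtain ⟨as, hlen, hmem, hreg⟩ := ih (p ∘ e) (fun i => hp _)
    refine ⟨as.map (renameEquiv A e).toRingEquiv, by rw [List.length_map, hlen, Nat.card_congr e],
      List.forall_mem_map.mpr fun a ha => ?_, isWeaklyRegular_map_ringEquiv _ hreg⟩
    obtain ⟨i, rfl⟩ := hmem a ha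
    exact ⟨e i, by
      rw [← rename_X (R := A) e i, Polynomial.aeval_algHom_apply]; rfl⟩
  | h_empty => exact ⟨[], by simp, by simp, by simp⟩
  | @h_option τ _ ih =>
    obtain ⟨as, hlen, hmem, hreg⟩ := ih (p ∘ some) (fun i => hp _)
    let e := (optionEquivLeft A τ).symm
    let ψ : MvPolynomial τ A →ₐ[A] Polynomial (MvPolynomial τ A) := IsScalarTower.toAlgHom A _ _
    let q : Polynomial (MvPolynomial τ A) := Polynomial.aeval Polynomial.X (p none)
    have hq : q.Monic := by
      have := (hp none).map (algebraMap A (MvPolynomial τ A))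
      rwa [← Polynomial.mapAlg_eq_map, Polynomial.mapAlg] at this
    have hreg_append : IsWeaklyRegular (Polynomial (MvPolynomial τ A)) (as.map ψ ++ [q]) := by
      rw [isWeaklyRegular_append_iff, isWeaklyRegular_singleton_iff, smul_eq_mul, Ideal.mul_top]
      refine ⟨hreg.of_flat, ?_⟩
      have := isSMulRegular_quotient_map_C_of_monic (Ideal.ofList as) hq
      rwa [Ideal.map_ofList] at this
    refine ⟨(as.map ψ ++ [q]).map e.toRingEquiv, by simp [hlen], ?_,
      isWeaklyRegular_map_ringEquiv _ hreg_append⟩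
    have he : ∀ a ∈ as.map ψ ++ [q], ∃ i, e a = Polynomial.aeval (X i) (p i) := by
      intro a ha
      rcases List.mem_append.mp ha with ha | ha
      · obtain ⟨b, hb, rfl⟩ := List.mem_map.mp ha
        obtain ⟨i, rfl⟩ := hmem b hb
        refine ⟨some i, ?_⟩
        rw [← Polynomial.aeval_algHom_apply, ← AlgEquiv.coe_toAlgHom,
          ← Polynomial.aeval_algHom_apply]
        exact congrArg (Polynomial.aeval · (p (some i))) (optionEquivLeft_symm_C_X A τ i)
      · obtain rfl := List.mem_singleton.mp ha
        refine ⟨none, ?_⟩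
        rw [← AlgEquiv.coe_toAlgHom, ← Polynomial.aeval_algHom_apply]
        exact congrArg (Polynomial.aeval · (p none)) (optionEquivLeft_symm_X A τ)
    exact List.forall_mem_map.mpr he

lemma length_le_of_isAssociatedPrime_of_isLocalization {A B : Type*} [CommRing A]
    [IsNoetherianRing A] [CommRing B] [Algebra A B] (M : Submonoid A) [IsLocalization M B]
    {rs : List A} (hrs : IsWeaklyRegular A rs) {P : Ideal A}
    (hP : IsAssociatedPrime P (A ⧸ Ideal.ofList rs)) (hMP : Disjoint (M : Set A) P) {as : List B}
    (has : IsWeaklyRegular B as) (hasP : ∀ a ∈ as, a ∈ P.map (algebraMap A B)) :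
    as.length ≤ rs.length := by
  have : IsNoetherianRing B := IsLocalization.isNoetherianRing M B ‹_›
  obtain ⟨-, z, hz⟩ := isAssociatedPrime_iff.mp hP
  obtain ⟨z, rfl⟩ := Ideal.Quotient.mk_surjective z
  have mem_P (x : A) : x ∈ P ↔ x * z ∈ Ideal.ofList rs := by
    rw [hz, Submodule.mem_colon_singleton, Submodule.mem_bot, ← Ideal.Quotient.mk_eq_mk,
      ← Submodule.Quotient.mk_smul, Submodule.Quotient.mk_eq_zero, smul_eq_mul]
  let I : Ideal B := Ideal.ofList (rs.map (algebraMap A B))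
  have hI : I = (Ideal.ofList rs).map (algebraMap A B) := (Ideal.map_ofList _ _).symm
  have hzI : algebraMap A B z ∉ I := by
    rw [hI, IsLocalization.algebraMap_mem_map_algebraMap_iff M B]
    rintro ⟨m, hm, hmz⟩
    exact Set.disjoint_left.mp hMP hm ((mem_P m).mpr hmz)
  have hPI : P.map (algebraMap A B) ≤ I.colon {algebraMap A B z} := by
    refine Ideal.map_le_iff_le_comap.mpr fun x hx => ?_
    rw [Ideal.mem_comap, Submodule.mem_colon_singleton, smul_eq_mul, ← map_mul, hI]
    exact Ideal.mem_map_of_mem _ ((mem_P x).mp hx)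
  have := length_le_of_forall_mul_mem_ofList has (hrs.of_isLocalization B M) hzI
    fun a ha => Submodule.mem_colon_singleton.mp (hPI (hasP a ha))
  rwa [List.length_map] at this

lemma card_le_length_of_isAssociatedPrime {D A τ : Type*} [CommRing D] [IsDomain D]
    [CommRing A] [IsNoetherianRing A] [Finite τ] (e : MvPolynomial τ D ≃+* A) {rs : List A}
    (hrs : IsWeaklyRegular A rs) {P : Ideal A} (hP : IsAssociatedPrime P (A ⧸ Ideal.ofList rs))
    (hC : ∀ c, e (C c) ∈ P → c = 0)
    (halg : ∀ i, ∃ q : Polynomial D, q ≠ 0 ∧ e (Polynomial.aeval (X i) q) ∈ P) :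
    Nat.card τ ≤ rs.length := by
  -- Inverting `D ∖ {0}` makes every `q i` monic up to a unit, so that the extension of `P` contains
  -- a weakly regular sequence with one member for each `i`.
  let K := FractionRing D
  let B := MvPolynomial τ K
  let := algebraMvPolynomial (σ := τ) (R := D) (S := K)
  let M := (nonZeroDivisors D).map (C : D →+* MvPolynomial τ D)
  have : IsLocalization M B := isLocalization (nonZeroDivisors D) K
  let := ((algebraMap (MvPolynomial τ D) B).comp e.symm.toRingHom).toAlgebra
  have : IsLocalization (M.map e) B := IsLocalization.isLocalization_of_base_ringEquiv M B e
  have hMP : Disjoint (M.map e : Set A) P := by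
    rw [Set.disjoint_left]
    rintro _ ⟨_, ⟨c, hc, rfl⟩, rfl⟩ hcP
    exact nonZeroDivisors.ne_zero hc (hC c hcP)
  choose q hq hqP using halg
  have hqK (i : τ) : (q i).map (algebraMap D K) ≠ 0 :=
    (Polynomial.map_ne_zero_iff (IsFractionRing.injective D K)).mpr (hq i)
  obtain ⟨as, hlen, hmem, has⟩ := exists_isWeaklyRegular_aeval_of_monic _
    fun i => Polynomial.monic_mul_leadingCoeff_inv (hqK i)
  rw [← hlen]
  refine length_le_of_isAssociatedPrime_of_isLocalization (M.map e) hrs hP hMP has fun a ha => ?_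
  obtain ⟨i, rfl⟩ := hmem a ha
  rw [map_mul]
  refine Ideal.mul_mem_right _ _ ?_
  convert Ideal.mem_map_of_mem (algebraMap A B) (hqP i) using 1
  change _ = algebraMap (MvPolynomial τ D) B (e.symm (e _))
  rw [e.symm_apply_apply, Polynomial.aeval_map_algebraMap, ← Polynomial.aeval_algebraMap_apply]
  exact congrArg (Polynomial.aeval · (q i)) (map_X (algebraMap D K) i).symm

lemma exists_isTranscendenceBasis_restrict {F A ι : Type*} [CommRing F] [CommRing A]
    [IsDomain A] [Algebra F A] [FaithfulSMul F A] {x : ι → A}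
    (hx : Algebra.IsAlgebraic (Algebra.adjoin F (Set.range x)) A) :
    ∃ T : Set ι, IsTranscendenceBasis F (fun t : T => x t) := by
  obtain ⟨t, hts, htb⟩ := exists_isTranscendenceBasis_subset (R := F) (Set.range x)
  obtain ⟨T, -, hT⟩ := Set.SurjOn.exists_bijOn_subset (f := x) (s := Set.univ) (t := t)
    (by rwa [Set.SurjOn, Set.image_univ])
  exact ⟨T, (isTranscendenceBasis_image hT.injOn).mpr (hT.image_eq ▸ htb)⟩

lemma exists_polynomial_eval₂_aeval_eq_zero {F A ι : Type*} [CommRing F] [Nontrivial F]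
    [CommRing A] [Algebra F A] {x : ι → A} (hx : IsTranscendenceBasis F x) (a : A) :
    ∃ q : Polynomial (MvPolynomial ι F), q ≠ 0 ∧
      q.eval₂ (aeval x : MvPolynomial ι F →ₐ[F] A).toRingHom a = 0 := by
  obtain ⟨q, hq, hqa⟩ := hx.isAlgebraic.isAlgebraic a
  let ε : MvPolynomial ι F ≃ₐ[F] Algebra.adjoin F (Set.range x) := hx.1.aevalEquiv
  refine ⟨q.map (ε.symm : _ →+* _), (Polynomial.map_ne_zero_iff ε.symm.injective).mpr hq, ?_⟩
  rw [Polynomial.eval₂_map, ← hqa, Polynomial.aeval_def]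
  congr 1
  ext y
  obtain ⟨y, rfl⟩ := ε.surjective y
  exact congrArg (aeval x) (ε.symm_apply_apply y)

lemma isAlgebraic_adjoin_range_mk_X {F σ : Type*} [CommRing F] (P : Ideal (MvPolynomial σ F))
    [Nontrivial (MvPolynomial σ F ⧸ P)] :
    Algebra.IsAlgebraic (Algebra.adjoin F (Set.range fun i => Ideal.Quotient.mkₐ F P (X i)))
      (MvPolynomial σ F ⧸ P) := by
  have adjoin_eq_top : Algebra.adjoin F (Set.range fun i => Ideal.Quotient.mkₐ F P (X i)) = ⊤ := by
    rw [← (AlgHom.range_eq_top (Ideal.Quotient.mkₐ F P)).mpr Ideal.Quotient.mk_surjective,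
      ← Algebra.map_top, ← adjoin_range_X, AlgHom.map_adjoin, ← Set.range_comp]
    rfl
  rw [adjoin_eq_top]
  exact ⟨fun a => isAlgebraic_algebraMap (⟨a, trivial⟩ : (⊤ : Subalgebra F _))⟩

lemma card_le_length_add_trdeg_of_isAssociatedPrime {F σ : Type*} [Field F] [Finite σ]
    {rs : List (MvPolynomial σ F)} (hrs : IsWeaklyRegular (MvPolynomial σ F) rs)
    {P : Ideal (MvPolynomial σ F)}
    (hP : IsAssociatedPrime P (MvPolynomial σ F ⧸ Ideal.ofList rs)) :
    (Nat.card σ : Cardinal) ≤ rs.length + Algebra.trdeg F (MvPolynomial σ F ⧸ P) := by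
  classical
  have := hP.isPrime
  let π := Ideal.Quotient.mkₐ F P
  obtain ⟨T, hT⟩ := exists_isTranscendenceBasis_restrict (isAlgebraic_adjoin_range_mk_X P)
  let e : MvPolynomial ↥Tᶜ (MvPolynomial T F) ≃ₐ[F] MvPolynomial σ F :=
    (sumAlgEquiv F ↥Tᶜ T).symm.trans
      (renameEquiv F ((Equiv.sumComm _ _).trans (Equiv.Set.sumCompl T)))
  have π_e_X (i : ↥Tᶜ) : π (e (X i)) = π (X i) := by simp [e]
  have π_e_C (c : MvPolynomial T F) : π (e (C c)) = aeval (fun t : T => π (X t)) c := by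
    have : (π.comp e.toAlgHom).comp (IsScalarTower.toAlgHom F (MvPolynomial T F) _) =
        aeval fun t : T => π (X t) := by
      ext t
      simp [e, algebraMap_eq]
    exact DFunLike.congr_fun this c
  have hlen : Nat.card ↥Tᶜ ≤ rs.length := by
    refine card_le_length_of_isAssociatedPrime e.toRingEquiv hrs hP (fun c hc => ?_) fun i => ?_
    · exact algebraicIndependent_iff.mp hT.1 c
        ((π_e_C c).symm.trans (Ideal.Quotient.eq_zero_iff_mem.mpr hc))
    · obtain ⟨q, hq, hqi⟩ := exists_polynomial_eval₂_aeval_eq_zero hT (π (X i))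
      refine ⟨q, hq, Ideal.Quotient.eq_zero_iff_mem.mp ?_⟩
      change (π.toRingHom.comp e.toRingEquiv.toRingHom) _ = _
      rw [← hqi, Polynomial.aeval_def, Polynomial.hom_eval₂]
      congr 1
      · exact RingHom.ext π_e_C
      · exact π_e_X i
  have hTcard : (Nat.card T : Cardinal) = Algebra.trdeg F (MvPolynomial σ F ⧸ P) := by
    have := hT.lift_cardinalMk_eq_trdeg
    rw [← Nat.cast_card, Cardinal.lift_natCast] at this
    simpa using this
  rw [← Nat.card_congr (Equiv.Set.sumCompl T), Nat.card_sum, Nat.cast_add, add_comm, hTcard]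
  gcongr

lemma exists_isWeaklyRegular_of_trdeg_add_le {F σ : Type*} [Field F] [Finite σ]
    {I : Ideal (MvPolynomial σ F)} {k : ℕ}
    (hI : ∀ P : Ideal (MvPolynomial σ F), P.IsPrime → I ≤ P →
      Algebra.trdeg F (MvPolynomial σ F ⧸ P) + k ≤ Nat.card σ) :
    ∃ rs : List (MvPolynomial σ F), rs.length = k ∧ (∀ r ∈ rs, r ∈ I) ∧
      IsWeaklyRegular (MvPolynomial σ F) rs := by
  induction k with
  | zero => exact ⟨[], rfl, by simp, by simp⟩
  | succ k ih =>
    obtain ⟨rs, hlen, hmem, hrs⟩ := ih fun P hP hIP => (hI P hP hIP).trans' (by gcongr; simp)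
    let S := MvPolynomial σ F
    let M := S ⧸ Ideal.ofList rs
    by_cases hs : Subsingleton ((S ⧸ I) →ₗ[S] M)
    · obtain ⟨r, hr, hrM⟩ := IsSMulRegular.subsingleton_linearMap_iff.mp hs
      rw [Ideal.annihilator_quotient] at hr
      refine ⟨rs ++ [r], by simp [hlen], ?_, ?_⟩
      · simpa [or_imp, forall_and] using ⟨hmem, hr⟩
      · rw [isWeaklyRegular_append_iff, isWeaklyRegular_singleton_iff, smul_eq_mul, Ideal.mul_top]
        exact ⟨hrs, hrM⟩
    · exfalso
      rw [not_subsingleton_iff_nontrivial] at hs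
      obtain ⟨φ, hφ⟩ := exists_ne (0 : (S ⧸ I) →ₗ[S] M)
      let w : M := φ (Submodule.Quotient.mk 1)
      have hw : w ≠ 0 := fun hw => hφ (by ext; exact hw)
      obtain ⟨P, hP, hle⟩ := exists_le_isAssociatedPrime_of_isNoetherianRing S w hw
      have hIP : I ≤ P := fun y hy => hle <| by
        rw [Submodule.mem_colon_singleton, Submodule.mem_bot, ← map_smul,
          ← Submodule.Quotient.mk_smul,
          (Submodule.Quotient.mk_eq_zero I).mpr (by simpa using hy), map_zero]
      have htrdeg_le := hI P hP.isPrime hIP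
      have hcard_le := card_le_length_add_trdeg_of_isAssociatedPrime hrs hP
      obtain ⟨t, ht⟩ := Cardinal.lt_aleph0.mp
        ((le_self_add.trans htrdeg_le).trans_lt (Cardinal.natCast_lt_aleph0))
      rw [ht, hlen] at hcard_le
      rw [ht] at htrdeg_le
      norm_cast at htrdeg_le hcard_le
      omega

lemma isRegular_of_forall_mem {A : Type*} [CommRing A] {I : Ideal A} (hI : I ≠ ⊤) {rs : List A}
    (hrs : IsWeaklyRegular A rs) (hrsI : ∀ r ∈ rs, r ∈ I) : IsRegular A rs := by
  refine ⟨hrs, fun h => hI (top_le_iff.mp ?_)⟩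
  calc (⊤ : Ideal A) = Ideal.ofList rs := by rw [h, smul_eq_mul, Ideal.mul_top]
    _ ≤ I := Ideal.span_le.mpr hrsI

lemma exists_fin_of_isRegular {A : Type*} [CommRing A] {rs : List A} {n : ℕ}
    (hrs : IsRegular A rs) (hn : rs.length = n) :
    ∃ g : Fin n → A, (∀ k, g k ∈ rs) ∧
      (∀ k x, g k * x ∈ Ideal.span {y | ∃ j, j < k ∧ y = g j} →
        x ∈ Ideal.span {y | ∃ j, j < k ∧ y = g j}) ∧
      Ideal.span (Set.range g) ≠ ⊤ := by
  subst hn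
  refine ⟨rs.get, rs.get_mem, fun k x hx => ?_, ?_⟩
  · have hspan : Ideal.span {y | ∃ j, j < k ∧ y = rs.get j} = Ideal.ofList (rs.take k) := by
      congr 1
      ext y
      simp only [List.get_eq_getElem, Set.mem_ofPred_eq, List.mem_take_iff_getElem]
      constructor
      · rintro ⟨j, hj, rfl⟩
        exact ⟨j, lt_min hj j.2, rfl⟩
      · rintro ⟨j, hj, rfl⟩
        exact ⟨⟨j, (lt_min_iff.mp hj).2⟩, (lt_min_iff.mp hj).1, rfl⟩
    have hreg := isSMulRegular_iff_right_eq_zero_of_smul.mp (hrs.regular_mod_prev k k.2)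
      (Submodule.Quotient.mk x)
    rw [← Submodule.Quotient.mk_smul, Submodule.Quotient.mk_eq_zero, Submodule.Quotient.mk_eq_zero,
      smul_eq_mul, smul_eq_mul, Ideal.mul_top, ← hspan] at hreg
    exact hreg hx
  · have hrange : Set.range rs.get = {r | r ∈ rs} := Set.range_list_get rs
    have := hrs.top_ne_smul
    rwa [smul_eq_mul, Ideal.mul_top, ne_comm, Ideal.ofList, ← hrange] at this

end RegularSequences

section Minors

lemma minorsIdeal_map {A B ρ κ : Type*} [CommRing A] [CommRing B] (φ : A →+* B) (k : ℕ)
    (M : Matrix ρ κ A) : (minorsIdeal k M).map φ = minorsIdeal k (M.map φ) := by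
  rw [minorsIdeal, minorsIdeal, Ideal.map_span]
  congr 1
  ext x
  constructor
  · rintro ⟨_, ⟨r, c, hr, hc, rfl⟩, rfl⟩
    exact ⟨r, c, hr, hc, RingHom.map_det φ _⟩
  · rintro ⟨r, c, hr, hc, rfl⟩
    exact ⟨_, ⟨r, c, hr, hc, rfl⟩, RingHom.map_det φ _⟩

variable {K ρ κ : Type*} [Field K] [Finite ρ] [Fintype κ]

lemma exists_linearIndependent_row_submatrix (M : Matrix ρ κ K) {k : ℕ} (hk : k ≤ M.rank) :
    ∃ r : Fin k → ρ, LinearIndependent K (M.submatrix r id).row := by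
  obtain ⟨ρ', a, ha, hspan, hli⟩ := exists_linearIndependent' K M.row
  have := Finite.of_injective a ha
  have := Fintype.ofFinite ρ'
  have hcard : Fintype.card (Fin k) ≤ Fintype.card ρ' := by
    rwa [← finrank_span_eq_card hli, hspan, ← M.rank_eq_finrank_span_row, Fintype.card_fin]
  obtain ⟨e⟩ := Function.Embedding.nonempty_of_card_le hcard
  exact ⟨a ∘ e, hli.comp e e.injective⟩

lemma le_rank_iff_minorsIdeal_ne_bot {M : Matrix ρ κ K} {k : ℕ} :
    k ≤ M.rank ↔ minorsIdeal k M ≠ ⊥ := by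
  rw [minorsIdeal, Ne, Ideal.span_eq_bot]
  push Not
  constructor
  · intro hk
    obtain ⟨r, hr⟩ := exists_linearIndependent_row_submatrix M hk
    obtain ⟨c, hc⟩ := exists_linearIndependent_row_submatrix (M.submatrix r id).transpose (k := k)
      (by rw [Matrix.rank_transpose, hr.rank_matrix, Fintype.card_fin])
    have hdet : (M.submatrix r c).det ≠ 0 := by
      rw [← Matrix.det_transpose, ← isUnit_iff_ne_zero, ← Matrix.isUnit_iff_isUnit_det]
      exact Matrix.linearIndependent_rows_iff_isUnit.mp hc
    have hr_inj : Function.Injective r := fun i j hij =>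
      hr.injective (congrArg M.row hij)
    have hc_inj : Function.Injective c := fun i j hij =>
      hc.injective (congrArg (M.submatrix r id).transpose.row hij)
    exact ⟨_, ⟨r, c, hr_inj, hc_inj, rfl⟩, hdet⟩
  · rintro ⟨_, ⟨r, c, -, -, rfl⟩, hdet⟩
    simpa [Matrix.rank_of_det_ne_zero hdet] using M.rank_submatrix_le r c

lemma linearIndependent_row_iff_rank_eq {ρ : Type*} [Fintype ρ] {M : Matrix ρ κ K} :
    LinearIndependent K M.row ↔ M.rank = Fintype.card ρ := by
  rw [linearIndependent_iff_card_eq_finrank_span, M.rank_eq_finrank_span_row, eq_comm]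
  rfl

lemma linearIndependent_row_map_iff_not_minorsIdeal_le_ker {A ρ κ : Type*} [CommRing A] [Fintype ρ]
    [Finite κ] (φ : A →+* K) (M : Matrix ρ κ A) :
    LinearIndependent K (M.map φ).row ↔ ¬ minorsIdeal (Fintype.card ρ) M ≤ RingHom.ker φ := by
  cases nonempty_fintype κ
  rw [linearIndependent_row_iff_rank_eq, ← Ideal.map_eq_bot_iff_le_ker, minorsIdeal_map, ← Ne,
    ← le_rank_iff_minorsIdeal_ne_bot]
  exact ⟨Eq.ge, (M.map φ).rank_le_card_height.antisymm⟩

lemma card_lt_of_mulVec_eq_zero {ρ : Type*} [Fintype ρ] {M : Matrix ρ κ K}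
    (hM : LinearIndependent K M.row) {p : κ → K} (hp : p ≠ 0) (hMp : M.mulVec p = 0) :
    Fintype.card ρ < Fintype.card κ := by
  have hker : M.mulVecLin.ker ≠ ⊥ := (Submodule.ne_bot_iff _).mpr ⟨p, hMp, hp⟩
  rw [← linearIndependent_row_iff_rank_eq.mp hM, ← Module.finrank_fintype_fun_eq_card K,
    ← M.mulVecLin.finrank_range_add_finrank_ker]
  exact Nat.lt_add_of_pos_right (Nat.pos_of_ne_zero (Submodule.finrank_eq_zero.not.mpr hker))

end Minors

section Gradients

variable {k ι σ : Type*} [Field k] [Fintype σ]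

/-- The normal crossing condition for the hypersurfaces `f i = 0` in projective space over `K`:
at each common zero, away from the origin, of at most `#σ` of the `f i`, their gradients are
linearly independent. -/
def HasIndependentGradients (K : Type*) [Field K] [Algebra k K] (f : ι → MvPolynomial σ k) : Prop :=
  ∀ p : σ → K, p ≠ 0 → ∀ I : Finset ι, I.card ≤ Fintype.card σ → (∀ i ∈ I, aeval p (f i) = 0) →
    LinearIndependent K fun (i : I) (j : σ) => aeval p (pderiv j (f i))

lemma SNC.hasIndependentGradients {n m : ℕ} {f : Fin m → Rp n} (hf : SNC n m f) :
    HasIndependentGradients ℂ f := by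
  intro p hp I hI hpI
  rcases I.eq_empty_or_nonempty with rfl | hne
  · exact linearIndependent_empty_type
  · refine linearIndependent_row_iff_rank_eq (M := Matrix.of fun (i : I) (j : Fin n) =>
      aeval p (pderiv j (f i))) |>.mpr ?_
    rw [Fintype.card_coe]
    exact hf.2 I hne.card_pos (by simpa using hI) p hp hpI

lemma X_mem_radical_of_zeroLocus_subset {σ Ω : Type*} [Finite σ] [Field Ω] [Algebra k Ω]
    [IsAlgClosed Ω] {I : Ideal (MvPolynomial σ k)} (hI : zeroLocus Ω I ⊆ {0}) (j : σ) :
    X j ∈ I.radical := by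
  rw [← vanishingIdeal_zeroLocus_eq_radical (K := Ω), mem_vanishingIdeal_iff]
  intro p hp
  rw [hI hp, aeval_X, Pi.zero_apply]

lemma HasIndependentGradients.of_isAlgClosed {Ω : Type*} [Field Ω] [Algebra k Ω] [IsAlgClosed Ω]
    {f : ι → MvPolynomial σ k} (hf : HasIndependentGradients Ω f) (K : Type*) [Field K]
    [Algebra k K] : HasIndependentGradients K f := by
  -- The Nullstellensatz over `Ω` turns the condition on gradients into ideal memberships over
  -- `k`, which hold in every extension field.
  intro p hp I hI hpI
  let J : Matrix I σ (MvPolynomial σ k) := Matrix.of fun i j => pderiv j (f i)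
  let 𝔞 : Ideal (MvPolynomial σ k) := Ideal.span (f '' I) ⊔ minorsIdeal (Fintype.card I) J
  by_contra hdep
  have hX (j : σ) : X j ∈ 𝔞.radical := by
    refine X_mem_radical_of_zeroLocus_subset (Ω := Ω) (fun q hq => ?_) j
    by_contra hq0
    refine (linearIndependent_row_map_iff_not_minorsIdeal_le_ker (aeval q : _ →ₐ[k] Ω).toRingHom
      J).mp (hf q hq0 I hI fun i hi => ?_) fun g hg => ?_
    · exact hq (f i) (Ideal.mem_sup_left (Ideal.subset_span ⟨i, hi, rfl⟩))
    · exact hq g (Ideal.mem_sup_right hg)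
  have h𝔞 : 𝔞 ≤ RingHom.ker (aeval p : MvPolynomial σ k →ₐ[k] K) := by
    refine sup_le (Ideal.span_le.mpr ?_) ?_
    · rintro _ ⟨i, hi, rfl⟩
      exact hpI i hi
    · by_contra hle
      exact hdep ((linearIndependent_row_map_iff_not_minorsIdeal_le_ker
        (aeval p : _ →ₐ[k] K).toRingHom J).mpr hle)
  refine hp (funext fun j => ?_)
  simpa using (RingHom.ker_isPrime (aeval p : _ →ₐ[k] K)).radical_le_iff.mpr h𝔞 (hX j)

lemma sum_aeval_pderiv_mul_eq {A : Type*} [CommRing A] [Algebra k A] {g : MvPolynomial σ k} {d : ℕ}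
    (hg : g.IsHomogeneous d) (p : σ → A) :
    ∑ j, aeval p (pderiv j g) * p j = d * aeval p g := by
  simpa [mul_comm] using congrArg (aeval p) hg.sum_X_mul_pderiv

variable {K : Type*} [Field K] [Algebra k K]

lemma HasIndependentGradients.card_lt {f : ι → MvPolynomial σ k} (hf : HasIndependentGradients K f)
    {d : ι → ℕ} (hfd : ∀ i, (f i).IsHomogeneous (d i)) {p : σ → K} (hp : p ≠ 0) {I : Finset ι}
    (hI : ∀ i ∈ I, aeval p (f i) = 0) : I.card < Fintype.card σ := by
  have card_ne (J : Finset ι) (hJI : J ⊆ I) : J.card ≠ Fintype.card σ := by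
    intro hJ
    have hJp : ∀ i ∈ J, aeval p (f i) = 0 := fun i hi => hI i (hJI hi)
    refine (card_lt_of_mulVec_eq_zero (M := Matrix.of fun (i : J) j => aeval p (pderiv j (f i)))
      (hf p hp J hJ.le hJp) hp ?_).ne ((Fintype.card_coe J).trans hJ)
    ext i
    rw [Pi.zero_apply, ← mul_zero (d i : K), ← hJp i i.2, ← sum_aeval_pderiv_mul_eq (hfd i)]
    rfl
  by_contra! hle
  obtain ⟨J, hJI, hJ⟩ := Finset.exists_subset_card_eq hle
  exact card_ne J hJI hJ

lemma HasIndependentGradients.X_mem_radical_span [Fintype ι] [IsAlgClosed K]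
    {f : ι → MvPolynomial σ k} (hf : HasIndependentGradients K f) {d : ι → ℕ}
    (hfd : ∀ i, (f i).IsHomogeneous (d i)) (hcard : Fintype.card σ ≤ Fintype.card ι) (j : σ) :
    X j ∈ (Ideal.span (Set.range f)).radical := by
  refine X_mem_radical_of_zeroLocus_subset (Ω := K) (fun p hp => ?_) j
  by_contra hp0
  exact (hf.card_lt hfd hp0 (I := Finset.univ)
    fun i _ => hp (f i) (Ideal.subset_span ⟨i, rfl⟩)).not_ge hcard

lemma HasIndependentGradients.eq_zero_of_mul_aeval_eq_zero [CharZero k] [Fintype ι]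
    {f : ι → MvPolynomial σ k} (hf : HasIndependentGradients K f) {d : ι → ℕ}
    (hfd : ∀ i, (f i).IsHomogeneous (d i)) {i₀ : ι} (hd : d i₀ ≠ 0) {p : σ → K}
    (hp : p ≠ 0) {w : ι → K}
    (hwf : ∀ i ≠ i₀, w i * aeval p (f i) = 0)
    (hwj : ∀ j, ∑ i, w i * aeval p (pderiv j (f i)) = 0) : w = 0 := by
  classical
  have := charZero_of_injective_algebraMap (algebraMap k K).injective
  have euler : ∑ i, w i * (d i * aeval p (f i)) = 0 := by
    calc ∑ i, w i * (d i * aeval p (f i))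
        = ∑ j, (∑ i, w i * aeval p (pderiv j (f i))) * p j := by
          simp only [← sum_aeval_pderiv_mul_eq (hfd _), Finset.mul_sum, Finset.sum_mul, mul_assoc]
          exact Finset.sum_comm
      _ = 0 := by simp only [hwj, zero_mul, Finset.sum_const_zero]
  have mul_aeval (i : ι) : w i * aeval p (f i) = 0 := by
    rcases eq_or_ne i i₀ with rfl | hi
    · rw [Finset.sum_eq_single i (fun l _ hl => by rw [mul_left_comm, hwf l hl, mul_zero])
        (by simp), mul_left_comm] at euler
      exact (mul_eq_zero.mp euler).resolve_left (Nat.cast_ne_zero.mpr hd)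
    · exact hwf i hi
  let Z : Finset ι := {i | aeval p (f i) = 0}
  have hZ : ∀ i ∈ Z, aeval p (f i) = 0 := fun i hi => (Finset.mem_filter.mp hi).2
  have w_eq_zero {i : ι} (hi : i ∉ Z) : w i = 0 :=
    (mul_eq_zero.mp (mul_aeval i)).resolve_right fun h => hi (by simpa [Z] using h)
  have hli := Fintype.linearIndependent_iff.mp (hf p hp Z (hf.card_lt hfd hp hZ).le hZ)
    (fun i => w i) <| by
      ext j
      rw [Pi.zero_apply, ← hwj j, Finset.sum_apply]
      simp only [Pi.smul_apply, smul_eq_mul]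
      rw [Finset.sum_coe_sort Z fun i => w i * aeval p (pderiv j (f i))]
      exact Finset.sum_subset Z.subset_univ fun i _ hi => by rw [w_eq_zero hi, zero_mul]
  ext i
  by_cases hi : i ∈ Z
  · exact hli ⟨i, hi⟩
  · exact w_eq_zero hi

end Gradients

section Integrality

lemma aeval_smul_of_isHomogeneous {R A σ : Type*} [CommSemiring R] [CommSemiring A] [Algebra R A]
    {g : MvPolynomial σ R} {d : ℕ} (hg : g.IsHomogeneous d) (t : A) (p : σ → A) :
    aeval (t • p) g = t ^ d * aeval p g := by
  rw [aeval_def, aeval_def, eval₂_eq, eval₂_eq, Finset.mul_sum]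
  refine Finset.sum_congr rfl fun e he => ?_
  have he : ∑ i ∈ e.support, e i = d := by
    rw [← hg (mem_support_iff.mp he), Finsupp.weight_apply, Finsupp.sum]
    simp
  simp only [Pi.smul_apply, smul_eq_mul, mul_pow, Finset.prod_mul_distrib,
    Finset.prod_pow_eq_pow_sum, he]
  ring

variable {k ι σ K : Type*} [Field k] [Field K] [Algebra k K] [Finite σ]

lemma mem_valuationSubring_of_X_mem_radical {f : ι → MvPolynomial σ k} {d : ι → ℕ}
    (hfd : ∀ i, (f i).IsHomogeneous (d i)) (hd : ∀ i, d i ≠ 0)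
    (hX : ∀ j, X j ∈ (Ideal.span (Set.range f)).radical) {p : σ → K} {V : ValuationSubring K}
    (hk : ∀ c : k, algebraMap k K c ∈ V) (hV : ∀ i, aeval p (f i) ∈ V) (j : σ) : p j ∈ V := by
  have : Nonempty σ := ⟨j⟩
  -- Rescale `p` by a coordinate of largest valuation: if that coordinate were not in `V`, all the
  -- `f i` would vanish at the rescaled point modulo the maximal ideal.
  obtain ⟨l, hl⟩ := Finite.exists_max fun j => V.valuation (p j)
  suffices hlV : V.valuation (p l) ≤ 1 from (V.valuation_le_one_iff _).mp ((hl j).trans hlV)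
  by_contra! hlV
  have hpl : p l ≠ 0 := (V.valuation.ne_zero_iff).mp (zero_lt_one.trans hlV).ne'
  have hq (j : σ) : ((p l)⁻¹ • p) j ∈ V := by
    rw [← V.valuation_le_one_iff, Pi.smul_apply, smul_eq_mul, map_mul, map_inv₀]
    exact inv_mul_le_one_of_le₀ (hl j) zero_le
  let ψ : MvPolynomial σ k →+* V :=
    eval₂Hom ((algebraMap k K).codRestrict V hk) fun j => ⟨_, hq j⟩
  have hψ (g : MvPolynomial σ k) : (ψ g : K) = aeval ((p l)⁻¹ • p) g :=
    hom_eval₂ g _ V.subtype _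
  have hspan : Ideal.span (Set.range f) ≤ (IsLocalRing.maximalIdeal V).comap ψ := by
    rw [Ideal.span_le]
    rintro _ ⟨i, rfl⟩
    rw [SetLike.mem_coe, Ideal.mem_comap, V.valuation_lt_one_iff, hψ,
      aeval_smul_of_isHomogeneous (hfd i), map_mul, map_pow, map_inv₀]
    exact mul_lt_one_of_lt_of_le (pow_lt_one₀ zero_le (inv_lt_one_of_one_lt₀ hlV) (hd i))
      ((V.valuation_le_one_iff _).mpr (hV i))
  have hXl := (Ideal.IsPrime.comap ψ).radical_le_iff.mpr hspan (hX l)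
  rw [Ideal.mem_comap, V.valuation_lt_one_iff, hψ] at hXl
  simp [hpl] at hXl

lemma isIntegral_adjoin_range_aeval {f : ι → MvPolynomial σ k} {d : ι → ℕ}
    (hfd : ∀ i, (f i).IsHomogeneous (d i)) (hd : ∀ i, d i ≠ 0)
    (hX : ∀ j, X j ∈ (Ideal.span (Set.range f)).radical) (p : σ → K) (j : σ) :
    IsIntegral (Algebra.adjoin k (Set.range fun i => aeval p (f i))) (p j) := by
  let A := Algebra.adjoin k (Set.range fun i => aeval p (f i))
  have hcl : Subring.closure (A : Set K) = A.toSubring := Subring.closure_eq A.toSubring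
  have hmem : p j ∈ (integralClosure (Subring.closure (A : Set K)) K).toSubring := by
    rw [← iInf_valuationSubring_superset, Subring.mem_iInf]
    rintro ⟨V, hV⟩
    exact mem_valuationSubring_of_X_mem_radical hfd hd hX (fun c => hV (A.algebraMap_mem c))
      (fun i => hV (Algebra.subset_adjoin ⟨i, rfl⟩)) j
  rw [hcl] at hmem
  exact hmem

end Integrality

section DualDerivations

open scoped TensorProduct in
lemma exists_derivation_algebraMap_eq {R A B M : Type*} [CommRing R] [CommRing A] [CommRing B]
    [Algebra R A] [Algebra R B] [Algebra A B] [IsScalarTower R A B] [Algebra.FormallyEtale A B]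
    [AddCommGroup M] [Module R M] [Module A M] [Module B M] [IsScalarTower A B M]
    [IsScalarTower R A M] [IsScalarTower R B M] (δ : Derivation R A M) :
    ∃ D : Derivation R B M, ∀ a, D (algebraMap A B a) = δ a := by
  let φ : Ω[B⁄R] →ₗ[B] M := (LinearMap.liftBaseChange B δ.liftKaehlerDifferential) ∘ₗ
    (KaehlerDifferential.tensorKaehlerEquivOfFormallyEtale R A B).symm.toLinearMap
  refine ⟨φ.compDer (KaehlerDifferential.D R B), fun a => ?_⟩
  refine (congrArg (LinearMap.liftBaseChange B δ.liftKaehlerDifferential)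
    (KaehlerDifferential.tensorKaehlerEquivOfFormallyEtale_symm_D_algebraMap R A B a)).trans ?_
  rw [LinearMap.liftBaseChange_tmul, one_smul, Derivation.liftKaehlerDifferential_comp_D]

lemma formallyEtale_of_isAlgebraic {A L : Type*} [CommRing A] [CharZero A] [Field L]
    [Algebra A L] [FaithfulSMul A L] [Algebra.IsAlgebraic A L] : Algebra.FormallyEtale A L := by
  have := IsDomain.of_faithfulSMul A L
  let := FractionRing.liftAlgebra A L
  have : CharZero (FractionRing A) :=
    charZero_of_injective_algebraMap (IsFractionRing.injective A (FractionRing A))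
  have : Algebra.IsAlgebraic (FractionRing A) L :=
    (IsFractionRing.comap_isAlgebraic_iff (A := A)).mp ‹_›
  have : Algebra.FormallyEtale A (FractionRing A) := .of_isLocalization (nonZeroDivisors A)
  have : Algebra.FormallyEtale (FractionRing A) L := .of_isSeparable _ _
  exact .comp A (FractionRing A) L

lemma exists_dual_derivation {k L ι : Type*} [Field k] [CharZero k] [Field L] [Algebra k L]
    [DecidableEq ι] {x : ι → L} (hx : IsTranscendenceBasis k x) (i : ι) :
    ∃ D : Derivation k L L, ∀ j, D (x j) = if i = j then 1 else 0 := by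
  let : Algebra (MvPolynomial ι k) L := (aeval x).toRingHom.toAlgebra
  have algebraMap_eq (g : MvPolynomial ι k) : algebraMap (MvPolynomial ι k) L g = aeval x g := rfl
  have : IsScalarTower k (MvPolynomial ι k) L := .of_algebraMap_eq fun c => by
    rw [algebraMap_eq, AlgHom.commutes]
  have : FaithfulSMul (MvPolynomial ι k) L := (faithfulSMul_iff_algebraMap_injective _ _).mpr hx.1
  have : Algebra.IsAlgebraic (MvPolynomial ι k) L :=
    ⟨exists_polynomial_eval₂_aeval_eq_zero hx⟩
  have := formallyEtale_of_isAlgebraic (A := MvPolynomial ι k) (L := L)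
  obtain ⟨D, hD⟩ := exists_derivation_algebraMap_eq (B := L)
    ((Algebra.linearMap (MvPolynomial ι k) L).compDer (pderiv i))
  refine ⟨D, fun j => ?_⟩
  calc D (x j) = D (aeval x (X j)) := by rw [aeval_X]
    _ = aeval x (pderiv i (X j)) := hD (X j)
    _ = if i = j then 1 else 0 := by simp [pderiv_X, Pi.single_apply, eq_comm]

lemma derivation_aeval_eq_sum {R A M σ : Type*} [CommRing R] [CommRing A] [Algebra R A]
    [AddCommGroup M] [Module R M] [Module A M] [Fintype σ] (D : Derivation R A M)
    (p : σ → A) (g : MvPolynomial σ R) : D (aeval p g) = ∑ j, aeval p (pderiv j g) • D (p j) := by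
  classical
  induction g using MvPolynomial.induction_on with
  | C a => simp
  | add g h hg hh => simp only [map_add, hg, hh, add_smul, Finset.sum_add_distrib]
  | mul_X g i hg =>
    simp only [map_mul, aeval_X, Derivation.leibniz, hg, Finset.smul_sum, pderiv_X, map_add,
      smul_eq_mul, add_smul, Finset.sum_add_distrib, mul_smul]
    congr 1
    rw [Finset.sum_eq_single i] <;> simp +contextual [eq_comm]

end DualDerivations

section AlgebraicDependence

open AlgebraicIndependent

lemma sum_derivation_aeval_smul_eq_zero {R A M ι σ : Type*} [CommRing R] [CommRing A] [Algebra R A]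
    [AddCommGroup M] [Module A M] [Fintype ι] [Finite σ] {f : ι → MvPolynomial σ R} {p : σ → A}
    {c : ι → M} (hc : ∀ j, ∑ i, aeval p (pderiv j (f i)) • c i = 0) (D : Derivation R A A) :
    ∑ i, D (aeval p (f i)) • c i = 0 := by
  cases nonempty_fintype σ
  calc ∑ i, D (aeval p (f i)) • c i
      = ∑ j, D (p j) • ∑ i, aeval p (pderiv j (f i)) • c i := by
        simp only [derivation_aeval_eq_sum, Finset.sum_smul, Finset.smul_sum, smul_smul,
          smul_eq_mul, mul_comm (D _)]
        exact Finset.sum_comm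
    _ = 0 := by simp only [hc, smul_zero, Finset.sum_const_zero]

lemma exists_isTranscendenceBasis_forall_mem_span {k L M ι σ : Type*} [Field k] [CharZero k]
    [Field L] [Algebra k L] [AddCommGroup M] [Module L M] [Fintype ι] [Finite σ]
    {f : ι → MvPolynomial σ k} {p : σ → L} {c : ι → M}
    (hL : Algebra.IsAlgebraic (Algebra.adjoin k (Set.range fun i => aeval p (f i))) L)
    (hc : ∀ j, ∑ i, aeval p (pderiv j (f i)) • c i = 0) :
    ∃ T : Set ι, IsTranscendenceBasis k (fun t : T => aeval p (f t)) ∧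
      ∀ i, c i ∈ Submodule.span L (c '' Tᶜ) := by
  classical
  -- A derivation dual to a member `f t (p)` of the basis, applied to `∑ i, c i • df i (p) = 0`,
  -- isolates `c t`.
  obtain ⟨T, hT⟩ := exists_isTranscendenceBasis_restrict hL
  have mem_of_notMem {i : ι} (hi : i ∉ T) : c i ∈ Submodule.span L (c '' Tᶜ) :=
    Submodule.subset_span ⟨i, hi, rfl⟩
  refine ⟨T, hT, fun t => ?_⟩
  by_cases ht : t ∈ T
  · obtain ⟨D, hD⟩ := exists_dual_derivation hT ⟨t, ht⟩
    have hsum := sum_derivation_aeval_smul_eq_zero hc D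
    rw [← Finset.add_sum_erase _ _ (Finset.mem_univ t), hD ⟨t, ht⟩, if_pos rfl, one_smul] at hsum
    rw [eq_neg_of_add_eq_zero_left hsum]
    refine neg_mem (sum_mem fun i hi => ?_)
    by_cases hiT : i ∈ T
    · rw [hD ⟨i, hiT⟩, if_neg fun h => Finset.ne_of_mem_erase hi (congrArg Subtype.val h).symm,
        zero_smul]
      exact zero_mem _
    · exact Submodule.smul_mem _ _ (mem_of_notMem hiT)
  · exact mem_of_notMem ht

variable {k K : Type*} [Field k] [Field K] [Algebra k K]

/-- The relative algebraic closure of `k(s)` in `K`, as an intermediate field of `K / k`; its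
elements form the closure of `s` in the algebraic matroid of `K / k`. -/
def relAlgebraicClosure (k : Type*) {K : Type*} [Field k] [Field K] [Algebra k K] (s : Set K) :
    IntermediateField k K :=
  (algebraicClosure (IntermediateField.adjoin k s) K).restrictScalars k

lemma mem_relAlgebraicClosure_iff {s : Set K} {z : K} :
    z ∈ relAlgebraicClosure k s ↔ IsAlgebraic (Algebra.adjoin k s) z := by
  rw [relAlgebraicClosure, IntermediateField.mem_restrictScalars, mem_algebraicClosure_iff,
    IntermediateField.isAlgebraic_adjoin_iff]

lemma coe_relAlgebraicClosure (s : Set K) :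
    (relAlgebraicClosure k s : Set K) = (matroid k K).closure s := by
  ext z
  rw [SetLike.mem_coe, mem_relAlgebraicClosure_iff, matroid_closure_eq, SetLike.mem_coe,
    Subalgebra.mem_algebraicClosure]

lemma subset_relAlgebraicClosure (s : Set K) : s ⊆ relAlgebraicClosure k s := by
  rw [coe_relAlgebraicClosure]
  exact (matroid k K).subset_closure s (Set.subset_univ s)

lemma isAlgebraic_adjoin_image_iff {R A B : Type*} [CommRing R] [CommRing A] [CommRing B]
    [Algebra R A] [Algebra R B] {φ : A →ₐ[R] B} (hφ : Function.Injective φ) {s : Set A} {z : A} :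
    IsAlgebraic (Algebra.adjoin R (φ '' s)) (φ z) ↔ IsAlgebraic (Algebra.adjoin R s) z := by
  let e := (Algebra.adjoin R s).equivMapOfInjective φ hφ
  rw [← AlgHom.map_adjoin]
  exact ⟨fun h => h.of_ringHom_of_comp_eq e φ e.surjective hφ rfl,
    fun h => h.ringHom_of_comp_eq e φ e.injective rfl⟩

lemma relAlgebraicClosure_mono {s t : Set K} (hst : s ⊆ t) :
    relAlgebraicClosure k s ≤ relAlgebraicClosure k t := by
  rw [← SetLike.coe_subset_coe, coe_relAlgebraicClosure, coe_relAlgebraicClosure]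
  exact (matroid k K).closure_subset_closure hst

lemma eRk_le_of_subset_relAlgebraicClosure {s t : Set K}
    (hst : s ⊆ relAlgebraicClosure k t) : (matroid k K).eRk s ≤ (matroid k K).eRk t := by
  rw [coe_relAlgebraicClosure] at hst
  exact ((matroid k K).eRk_mono hst).trans_eq ((matroid k K).eRk_closure_eq t)

lemma range_sumElim_subset_relAlgebraicClosure {ι σ : Type*} {f : ι → MvPolynomial σ k}
    {a c : ι → K} {p : σ → K} {i₀ : ι} (ha : ∀ i ≠ i₀, a i = -(aeval p (f i) * c i)) :
    Set.range (Sum.elim a p) ⊆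
      relAlgebraicClosure k (insert (a i₀) (Set.range p ∪ Set.range c)) := by
  let B := insert (a i₀) (Set.range p ∪ Set.range c)
  have hB : B ⊆ relAlgebraicClosure k B := subset_relAlgebraicClosure B
  let p' (j : σ) : relAlgebraicClosure k B := ⟨p j, hB (.inr (.inl ⟨j, rfl⟩))⟩
  have aeval_mem (g : MvPolynomial σ k) : aeval p g ∈ relAlgebraicClosure k B :=
    aeval_algebraMap_apply K p' g ▸ (aeval p' g).2
  rw [Set.Sum.elim_range]
  refine Set.union_subset (Set.range_subset_iff.mpr fun i => ?_)
    (Set.range_subset_iff.mpr fun j => (p' j).2)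
  rcases eq_or_ne i i₀ with rfl | hi
  · exact hB (.inl rfl)
  · rw [ha i hi]
    exact neg_mem (mul_mem (aeval_mem _) (hB (.inr (.inr ⟨i, rfl⟩))))

variable {ι σ : Type*} [CharZero k] [Fintype ι] [Finite σ] {f : ι → MvPolynomial σ k}
  {p : σ → K} {c : ι → K}

lemma exists_subset_relAlgebraicClosure_image_union_image_compl
    (hp : ∀ j, p j ∈ relAlgebraicClosure k (Set.range fun i => aeval p (f i)))
    (hc : ∀ j, ∑ i, aeval p (pderiv j (f i)) * c i = 0) :
    ∃ T : Set ι, Set.range p ∪ Set.range c ⊆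
      relAlgebraicClosure k ((fun i => aeval p (f i)) '' T ∪ c '' Tᶜ) := by
  let L := relAlgebraicClosure k (Set.range fun i => aeval p (f i))
  let p' (j : σ) : L := ⟨p j, hp j⟩
  have coe_aeval (g : MvPolynomial σ k) : (aeval p' g : K) = aeval p g :=
    (aeval_algebraMap_apply K p' g).symm
  have image_aeval (T : Set ι) :
      L.val '' ((fun i => aeval p' (f i)) '' T) = (fun i => aeval p (f i)) '' T := by
    rw [← Set.image_comp]
    exact Set.image_congr fun i _ => coe_aeval (f i)
  have hL : Algebra.IsAlgebraic (Algebra.adjoin k (Set.range fun i => aeval p' (f i))) L := by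
    refine ⟨fun z => (isAlgebraic_adjoin_image_iff L.val.injective).mp ?_⟩
    rw [← Set.image_univ, image_aeval, Set.image_univ]
    exact mem_relAlgebraicClosure_iff.mp z.2
  obtain ⟨T, hT, hcT⟩ := exists_isTranscendenceBasis_forall_mem_span hL (c := c) fun j => by
    simpa only [← coe_aeval] using! hc j
  let F := relAlgebraicClosure k ((fun i => aeval p (f i)) '' T ∪ c '' Tᶜ)
  have coe_mem_F (z : L) : (z : K) ∈ F := by
    refine relAlgebraicClosure_mono Set.subset_union_left ?_
    rw [mem_relAlgebraicClosure_iff, ← image_aeval]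
    refine (isAlgebraic_adjoin_image_iff (φ := L.val) L.val.injective).mpr ?_
    rw [Set.image_eq_range]
    exact hT.isAlgebraic.isAlgebraic z
  refine ⟨T, Set.union_subset (Set.range_subset_iff.mpr fun j => coe_mem_F (p' j))
    (Set.range_subset_iff.mpr fun i => ?_)⟩
  exact Submodule.span_induction (Set.subset_union_right.trans (subset_relAlgebraicClosure _))
    F.zero_mem (fun _ _ _ _ => F.add_mem) (fun z _ _ => F.mul_mem (coe_mem_F z)) (hcT i)

lemma eRk_range_union_range_le
    (hp : ∀ j, p j ∈ relAlgebraicClosure k (Set.range fun i => aeval p (f i)))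
    (hc : ∀ j, ∑ i, aeval p (pderiv j (f i)) * c i = 0) :
    (matroid k K).eRk (Set.range p ∪ Set.range c) ≤ Fintype.card ι := by
  obtain ⟨T, hT⟩ := exists_subset_relAlgebraicClosure_image_union_image_compl hp hc
  let y (i : ι) : K := aeval p (f i)
  calc (matroid k K).eRk (Set.range p ∪ Set.range c)
      ≤ (matroid k K).eRk (y '' T ∪ c '' Tᶜ) := eRk_le_of_subset_relAlgebraicClosure hT
    _ ≤ (y '' T).encard + (c '' Tᶜ).encard :=
        ((matroid k K).eRk_le_encard _).trans (Set.encard_union_le _ _)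
    _ ≤ T.encard + Tᶜ.encard := add_le_add (Set.encard_image_le _ _) (Set.encard_image_le _ _)
    _ = Fintype.card ι := by
        rw [Set.encard_add_encard_compl, Set.encard_univ, ENat.card_eq_coe_fintype_card]

end AlgebraicDependence

section BorderedMatrix

open AlgebraicIndependent

variable {k K ι σ : Type*} [Field k] [Field K] [Algebra k K] [DecidableEq ι]

/-- The matrix `Q = (diag(f) | J_f)` with only those diagonal columns kept whose index satisfies
`q`, bordered by the row of the new variables `s_i` in these columns and `0` in the Jacobian ones.
As in `Qs1`, the variable `s_i` is `X (Sum.inl i)`, and `none` indexes the bordering row. -/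
def borderedMatrix (q : ι → Prop) (f : ι → MvPolynomial σ k) :
    Matrix (Option ι) ({i // q i} ⊕ σ) (MvPolynomial (ι ⊕ σ) k) :=
  Matrix.of fun i? c => i?.elim (Sum.elim (fun l => X (Sum.inl l.1)) 0 c) fun i =>
    rename Sum.inr (Sum.elim (fun l => if i = l.1 then f i else 0) (fun j => pderiv j (f i)) c)

lemma Qs1_eq_borderedMatrix (n m : ℕ) (f : Fin m → Rp n) :
    Qs1 n m f = borderedMatrix (fun i : Fin m => (i : ℕ) ≠ 0) f := by
  rfl

variable [Fintype ι] {q : ι → Prop} {f : ι → MvPolynomial σ k} {a : ι → K} {p : σ → K}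

lemma vecMul_borderedMatrix_map_inl (v : Option ι → K) (l : {i // q i}) :
    Matrix.vecMul v ((borderedMatrix q f).map (aeval (Sum.elim a p))) (Sum.inl l) =
      v none * a l + v (some l) * aeval p (f l) := by
  simp [Matrix.vecMul, dotProduct, Fintype.sum_option, borderedMatrix, aeval_rename, apply_ite]

lemma vecMul_borderedMatrix_map_inr (v : Option ι → K) (j : σ) :
    Matrix.vecMul v ((borderedMatrix q f).map (aeval (Sum.elim a p))) (Sum.inr j) =
      ∑ i, v (some i) * aeval p (pderiv j (f i)) := by
  simp [Matrix.vecMul, dotProduct, Fintype.sum_option, borderedMatrix, aeval_rename]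

variable [CharZero k] [Fintype σ] {d : ι → ℕ} {i₀ : ι}

lemma exists_forall_eq_neg_mul_aeval (hf : HasIndependentGradients K f)
    (hfd : ∀ i, (f i).IsHomogeneous (d i)) (hd : d i₀ ≠ 0) (hq : ∀ i ≠ i₀, q i) (hp : p ≠ 0)
    (hdep : ¬ LinearIndependent K ((borderedMatrix q f).map (aeval (Sum.elim a p))).row) :
    ∃ c : ι → K, (∀ i ≠ i₀, a i = -(aeval p (f i) * c i)) ∧
      ∀ j, ∑ i, aeval p (pderiv j (f i)) * c i = 0 := by
  obtain ⟨v, hv, o, hvo⟩ := Fintype.not_linearIndependent_iff.mp hdep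
  replace hv := (Matrix.vecMul_eq_sum v _).trans hv
  have hvf (i : ι) (hi : i ≠ i₀) : v none * a i + v (some i) * aeval p (f i) = 0 :=
    (vecMul_borderedMatrix_map_inl v ⟨i, hq i hi⟩).symm.trans (congrFun hv _)
  have hvj (j : σ) : ∑ i, v (some i) * aeval p (pderiv j (f i)) = 0 :=
    (vecMul_borderedMatrix_map_inr v j).symm.trans (congrFun hv _)
  have v_none_ne_zero : v none ≠ 0 := by
    intro hnone
    have hsome : (fun i => v (some i)) = 0 :=
      hf.eq_zero_of_mul_aeval_eq_zero hfd hd hp (fun i hi => by simpa [hnone] using hvf i hi) hvj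
    exact hvo (o.rec hnone fun i => congrFun hsome i)
  refine ⟨fun i => v (some i) / v none, fun i hi => ?_, fun j => ?_⟩
  · field_simp
    linear_combination hvf i hi
  · calc ∑ i, aeval p (pderiv j (f i)) * (v (some i) / v none)
        = (∑ i, v (some i) * aeval p (pderiv j (f i))) / v none := by
          rw [Finset.sum_div]
          exact Finset.sum_congr rfl fun i _ => by ring
      _ = 0 := by rw [hvj, zero_div]

lemma eRk_range_sumElim_le (hf : HasIndependentGradients K f)
    (hfd : ∀ i, (f i).IsHomogeneous (d i)) (hd : ∀ i, d i ≠ 0)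
    (hX : ∀ j, X j ∈ (Ideal.span (Set.range f)).radical) (hq : ∀ i ≠ i₀, q i)
    (hdep : ¬ LinearIndependent K ((borderedMatrix q f).map (aeval (Sum.elim a p))).row) :
    (matroid k K).eRk (Set.range (Sum.elim a p)) ≤ Fintype.card ι + 1 := by
  rcases eq_or_ne p 0 with rfl | hp
  · have hsub : Set.range (Sum.elim a (0 : σ → K)) ⊆ relAlgebraicClosure k (Set.range a) := by
      rw [Set.Sum.elim_range]
      refine Set.union_subset (subset_relAlgebraicClosure _) ?_
      exact Set.range_subset_iff.mpr fun _ => zero_mem (relAlgebraicClosure k _)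
    calc (matroid k K).eRk (Set.range (Sum.elim a 0))
        ≤ (Set.range a).encard :=
          (eRk_le_of_subset_relAlgebraicClosure hsub).trans ((matroid k K).eRk_le_encard _)
      _ ≤ Fintype.card ι := by
        rw [← Set.image_univ, ← ENat.card_eq_coe_fintype_card, ← Set.encard_univ]
        exact Set.encard_image_le _ _
      _ ≤ Fintype.card ι + 1 := le_self_add
  · obtain ⟨c, hac, hc⟩ := exists_forall_eq_neg_mul_aeval hf hfd (hd i₀) hq hp hdep
    have hpF (j : σ) : p j ∈ relAlgebraicClosure k (Set.range fun i => aeval p (f i)) :=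
      mem_relAlgebraicClosure_iff.mpr (isIntegral_adjoin_range_aeval hfd hd hX p j).isAlgebraic
    calc (matroid k K).eRk (Set.range (Sum.elim a p))
        ≤ (matroid k K).eRk (insert (a i₀) (Set.range p ∪ Set.range c)) :=
          eRk_le_of_subset_relAlgebraicClosure (range_sumElim_subset_relAlgebraicClosure hac)
      _ ≤ (matroid k K).eRk (Set.range p ∪ Set.range c) + 1 :=
          (matroid k K).eRk_insert_le_add_one _ _
      _ ≤ Fintype.card ι + 1 := by gcongr; exact eRk_range_union_range_le hpF hc

end BorderedMatrix

section Codimension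

open AlgebraicIndependent

lemma toENat_trdeg_le_eRk_image {R A B : Type*} [CommRing R] [Nontrivial R] [CommRing A]
    [IsDomain A] [CommRing B] [NoZeroDivisors B] [Algebra R A] [Algebra R B] [FaithfulSMul R A]
    [FaithfulSMul R B] {φ : A →ₐ[R] B} (hφ : Function.Injective φ) {s : Set A}
    (hs : Algebra.IsAlgebraic (Algebra.adjoin R s) A) :
    (Algebra.trdeg R A).toENat ≤ (matroid R B).eRk (φ '' s) := by
  obtain ⟨t, hts, ht⟩ := exists_isTranscendenceBasis_subset (R := R) s
  have hindep : (matroid R B).Indep (φ '' t) := by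
    rw [matroid_indep_iff, Set.image_eq_range]
    exact (ht.1.map' hφ).coe_range
  calc (Algebra.trdeg R A).toENat = t.encard := by
        rw [← ht.cardinalMk_eq_trdeg, Set.toENat_cardinalMk]
    _ = (φ '' t).encard := (hφ.encard_image t).symm
    _ ≤ (matroid R B).eRk (φ '' s) := hindep.encard_le_eRk_of_subset (Set.image_mono hts)

variable {k ι σ : Type*} [Field k] [Fintype ι] [DecidableEq ι]
  {f : ι → MvPolynomial σ k} {q : ι → Prop}

lemma minorsIdeal_borderedMatrix_ne_top [Finite σ] :
    minorsIdeal (Fintype.card ι + 1) (borderedMatrix q f) ≠ ⊤ := by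
  let φ : MvPolynomial (ι ⊕ σ) k →ₐ[k] k := aeval 0
  refine ne_top_of_le_ne_top (RingHom.ker_ne_top φ.toRingHom) (not_not.mp fun hle => ?_)
  rw [← Fintype.card_option] at hle
  have hli := (linearIndependent_row_map_iff_not_minorsIdeal_le_ker _ _).mpr hle
  refine hli.ne_zero none ?_
  ext (l | j) <;> simp [borderedMatrix, φ]

variable [CharZero k] [Fintype σ] {d : ι → ℕ} {i₀ : ι}

lemma trdeg_quotient_le_of_minorsIdeal_borderedMatrix_le {Ω : Type*} [Field Ω]
    [Algebra k Ω] [IsAlgClosed Ω] (hf : HasIndependentGradients Ω f)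
    (hcard : Fintype.card σ ≤ Fintype.card ι) (hfd : ∀ i, (f i).IsHomogeneous (d i))
    (hd : ∀ i, d i ≠ 0) (hq : ∀ i ≠ i₀, q i)
    {P : Ideal (MvPolynomial (ι ⊕ σ) k)} [P.IsPrime]
    (hP : minorsIdeal (Fintype.card ι + 1) (borderedMatrix q f) ≤ P) :
    Algebra.trdeg k (MvPolynomial (ι ⊕ σ) k ⧸ P) ≤ Fintype.card ι + 1 := by
  let A := MvPolynomial (ι ⊕ σ) k ⧸ P
  let K := FractionRing A
  let φ : A →ₐ[k] K := IsScalarTower.toAlgHom k A K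
  let a (i : ι) : K := φ (Ideal.Quotient.mkₐ k P (X (Sum.inl i)))
  let p (j : σ) : K := φ (Ideal.Quotient.mkₐ k P (X (Sum.inr j)))
  have hap : φ ∘ (fun t => Ideal.Quotient.mkₐ k P (X t)) = Sum.elim a p := by
    ext (i | j) <;> rfl
  have hφ : φ.comp (Ideal.Quotient.mkₐ k P) = aeval (Sum.elim a p) :=
    algHom_ext fun t => by rw [aeval_X, ← hap]; rfl
  have hdep : ¬ LinearIndependent K ((borderedMatrix q f).map (aeval (Sum.elim a p))).row := by
    intro hli
    refine (linearIndependent_row_map_iff_not_minorsIdeal_le_ker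
      (aeval (Sum.elim a p) : _ →ₐ[k] K).toRingHom _).mp hli fun g hg => ?_
    rw [Fintype.card_option] at hg
    change aeval (Sum.elim a p) g = 0
    rw [← hφ, AlgHom.comp_apply, Ideal.Quotient.mkₐ_eq_mk,
      Ideal.Quotient.eq_zero_iff_mem.mpr (hP hg), map_zero]
  have htrdeg := toENat_trdeg_le_eRk_image (φ := φ) (IsFractionRing.injective A K)
    (isAlgebraic_adjoin_range_mk_X P)
  rw [← Set.range_comp, hap] at htrdeg
  have heRk := eRk_range_sumElim_le (hf.of_isAlgClosed K) hfd hd (hf.X_mem_radical_span hfd hcard)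
    hq hdep
  exact_mod_cast Cardinal.toENat_le_natCast.mp (htrdeg.trans heRk)

theorem minors_contain_regular_sequence_general {Ω : Type*} [Field Ω] [Algebra k Ω] [IsAlgClosed Ω]
    [Nonempty σ] (hf : HasIndependentGradients Ω f) (hcard : Fintype.card σ ≤ Fintype.card ι)
    (hfd : ∀ i, (f i).IsHomogeneous (d i)) (hd : ∀ i, d i ≠ 0) (hq : ∀ i ≠ i₀, q i) :
    ∃ rs : List (MvPolynomial (ι ⊕ σ) k), rs.length = Fintype.card σ - 1 ∧
      (∀ r ∈ rs, r ∈ minorsIdeal (Fintype.card ι + 1) (borderedMatrix q f)) ∧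
      RingTheory.Sequence.IsRegular (MvPolynomial (ι ⊕ σ) k) rs := by
  set I := minorsIdeal (Fintype.card ι + 1) (borderedMatrix q f)
  have hcodim (P : Ideal (MvPolynomial (ι ⊕ σ) k)) (_ : P.IsPrime) (hIP : I ≤ P) :
      Algebra.trdeg k (MvPolynomial (ι ⊕ σ) k ⧸ P) + ((Fintype.card σ - 1 : ℕ) : Cardinal) ≤
        Nat.card (ι ⊕ σ) :=
    calc _ ≤ ((Fintype.card ι + 1 : ℕ) : Cardinal) + ((Fintype.card σ - 1 : ℕ) : Cardinal) := by
          gcongr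
          exact_mod_cast trdeg_quotient_le_of_minorsIdeal_borderedMatrix_le hf hcard hfd hd hq hIP
      _ = Nat.card (ι ⊕ σ) := by
        have := Fintype.card_pos (α := σ)
        rw [Nat.card_sum, Nat.card_eq_fintype_card, Nat.card_eq_fintype_card]
        norm_cast
        omega
  obtain ⟨rs, hlen, hrs, hreg⟩ := exists_isWeaklyRegular_of_trdeg_add_le hcodim
  refine ⟨rs, hlen, hrs, isRegular_of_forall_mem minorsIdeal_borderedMatrix_ne_top hreg hrs⟩

end Codimension

/-- `I_{m+1}(Q^s_{∖1})` contains a regular sequence of length `n−1`. -/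
theorem minors_contain_regular_sequence (n m : ℕ) (hn : 2 ≤ n) (hm : n + 1 ≤ m)
    (f : Fin m → Rp n) (d : Fin m → ℕ)
    (hf0 : ∀ i, f i ≠ 0) (hfh : ∀ i, (f i).IsHomogeneous (d i)) (hd : ∀ i, 1 ≤ d i)
    (hsnc : SNC n m f) :
    ∃ g : Fin (n - 1) → Sp n m,
      (∀ k, g k ∈ minorsIdeal (m + 1) (Qs1 n m f)) ∧
      (∀ k : Fin (n - 1), ∀ x : Sp n m,
        g k * x ∈ Ideal.span {y | ∃ j : Fin (n - 1), j < k ∧ y = g j} →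
          x ∈ Ideal.span {y | ∃ j : Fin (n - 1), j < k ∧ y = g j}) ∧
      Ideal.span (Set.range g) ≠ ⊤ := by
  have : Nonempty (Fin n) := ⟨0, by omega⟩
  have hcard : Fintype.card (Fin n) ≤ Fintype.card (Fin m) := by
    rw [Fintype.card_fin, Fintype.card_fin]
    omega
  obtain ⟨rs, hlen, hmem, hreg⟩ := minors_contain_regular_sequence_general
    (q := fun i : Fin m => (i : ℕ) ≠ 0) (i₀ := ⟨0, by omega⟩) hsnc.hasIndependentGradients hcard
    hfh (fun i => Nat.one_le_iff_ne_zero.mp (hd i)) (fun i hi => Fin.val_ne_of_ne hi)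
  rw [Fintype.card_fin] at hlen hmem
  obtain ⟨g, hg, hg_reg, hg_top⟩ := exists_fin_of_isRegular hreg hlen
  exact ⟨g, fun k => Qs1_eq_borderedMatrix n m f ▸ hmem _ (hg k), hg_reg, hg_top⟩
end
end

section
/- Assume m ≥ n+1 and that f_1,…,f_m satisfy the SNC hypothesis. Define the pre-likelihood ideal I_0 ⊆ S as the ideal generated by all elements Σ_{i=1}^m s_i·a_i, where (a_1,…,a_m,b_1,…,b_n) ∈ R^m × R^n ranges over all solutions of the equations f_i·a_i + Σ_{j=1}^n b_j·∂f_i/∂x_j = 0 for i = 1,…,m (i.e., over the kernel of Q). Then I_0 = I_A; that is, every SNC arrangement is gentle. -/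
open MvPolynomial

noncomputable section

/-- The pre-likelihood ideal `I_0`, generated by the elements `Σ_i s_i·a_i` where
`(a, b)` ranges over the kernel of `Q`. -/
def preI (n m : ℕ) (f : Fin m → Rp n) : Ideal (Sp n m) :=
  Ideal.span {P | ∃ a : Fin m → Rp n, ∃ b : Fin n → Rp n,
    (∀ i, f i * a i + ∑ j, b j * pderiv j (f i) = 0) ∧
    P = ∑ i, X (Sum.inl i) * toS n m (a i)}

/-!
Let `Q^s_{∖1}` have rows `ρ_0 = (s_2,…,s_m,0,…,0)` and `ρ_1,…,ρ_m`, and let `I` be the ideal of its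
maximal minors. Such a minor is the value at `ρ_0` of a functional which kills the `ρ_i`, `i ≥ 1`,
so `I ⊆ I_0`; by Euler's relation also `Σ d_i s_i ∈ I_0`. Let `h_j'` be `h_j` after the elimination
of `s_1` through `Σ d_i s_i = 0`. Contractions of exterior products of the rows show that
`f² h_j' ∈ I`. Hence `I_A ⊆ I_0` as soon as `f` is a nonzerodivisor modulo `I`, which is a
consequence of normal crossing.

A component of `V(I + (f_i))` inside `x = 0` has dimension at most `m`. At the generic point of
any other one, `ρ_1,…,ρ_m` are independent, so `ρ_0 = Σ c_l ρ_l`, that is, `s_l = c_l f_l` for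
`l ≥ 2` and `Σ c_l ∇f_l = 0`. For derivations `D` of the residue field this makes the vectors
`(D c_l, D f_l)`, `l ≠ i`, span an isotropic subspace, so that they contribute at most `m - 1` to
the dimension, and `s_1`, on which `I` does not depend, contributes `1`. As `S` is Cohen–Macaulay of
dimension `m + n`, some `a_1,…,a_{n-1} ∈ I` form a regular sequence together with `f_i`, and a
relative form of the de Rham–Saito division lemma then shows that `f_i` is a nonzerodivisor modulo
`I`.
-/

section Depth

open CategoryTheory Abelian RingTheory.Sequence

universe u

variable {A M N : Type u} [CommRing A] [AddCommGroup M] [Module A M] [AddCommGroup N] [Module A N]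

variable (A M N) in
/-- `Ext^i(N, M) = 0` for all `i < c`; for finite modules over a Noetherian ring this says that the
depth of `M` with respect to the annihilator of `N` is at least `c`. -/
def ExtVanishesBelow (c : ℕ) : Prop :=
  ∀ i < c, Subsingleton (Ext (ModuleCat.of A N) (ModuleCat.of A M) i)

lemma ext_smul_eq_zero_of_mem_annihilator {r : A} (hr : r ∈ Module.annihilator A N) {i : ℕ}
    (x : Ext (ModuleCat.of A N) (ModuleCat.of A M) i) : r • x = 0 := by
  have h : r • 𝟙 (ModuleCat.of A N) = 0 := by
    ext v
    exact Module.mem_annihilator.1 hr v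
  rw [← Ext.mk₀_id_comp x, ← Ext.smul_comp, ← Ext.mk₀_smul, h, Ext.mk₀_zero, Ext.zero_comp]

lemma ExtVanishesBelow.of_quotSMulTop {c : ℕ} {r : A} (hM : IsSMulRegular M r)
    (hN : r ∈ Module.annihilator A N) (h : ExtVanishesBelow A (QuotSMulTop r M) N c) :
    ExtVanishesBelow A M N (c + 1) := by
  intro i hi
  refine subsingleton_of_forall_eq 0 fun x => ?_
  have hS := hM.smulShortComplex_shortExact (M := ModuleCat.of A M)
  have hx : x.comp (Ext.mk₀ (r • 𝟙 (ModuleCat.of A M))) (add_zero i) = 0 := by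
    rw [← Ext.smul_eq_comp_mk₀]
    exact ext_smul_eq_zero_of_mem_annihilator hN x
  cases i with
  | zero =>
    have := hS.mono_f
    exact Ext.postcomp_mk₀_injective_of_mono (ModuleCat.of A N)
      ((ModuleCat.of A M).smulShortComplex r).f (hx.trans (map_zero _).symm)
  | succ i =>
    obtain ⟨y, rfl⟩ := Ext.covariant_sequence_exact₁ _ hS x hx rfl
    have : Subsingleton (Ext _ ((ModuleCat.of A M).smulShortComplex r).X₃ i) := h i (by omega)
    obtain rfl := Subsingleton.elim y 0
    exact Ext.zero_comp ..

lemma ExtVanishesBelow.quotSMulTop {c : ℕ} {r : A} (hM : IsSMulRegular M r)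
    (h : ExtVanishesBelow A M N (c + 1)) : ExtVanishesBelow A (QuotSMulTop r M) N c := by
  intro i hi
  refine subsingleton_of_forall_eq 0 fun x => ?_
  have hS := hM.smulShortComplex_shortExact (M := ModuleCat.of A M)
  obtain ⟨y, rfl⟩ := Ext.covariant_sequence_exact₃ _ hS x rfl ((h (i + 1) (by omega)).elim _ _)
  have : Subsingleton (Ext _ ((ModuleCat.of A M).smulShortComplex r).X₂ i) := h i (by omega)
  obtain rfl := Subsingleton.elim y 0
  exact Ext.zero_comp ..

lemma extVanishesBelow_length_of_isWeaklyRegular {rs : List A} (hM : IsWeaklyRegular M rs)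
    (hN : ∀ r ∈ rs, r ∈ Module.annihilator A N) : ExtVanishesBelow A M N rs.length := by
  induction rs generalizing M with
  | nil => exact fun i hi => absurd hi (Nat.not_lt_zero i)
  | cons r rs ih =>
    rw [isWeaklyRegular_cons_iff] at hM
    rw [List.forall_mem_cons] at hN
    exact (ih hM.2 hN.2).of_quotSMulTop hM.1 hN.1

lemma ExtVanishesBelow.subsingleton_linearMap {c : ℕ} (h : ExtVanishesBelow A M N (c + 1)) :
    Subsingleton (N →ₗ[A] M) := by
  have := h 0 c.succ_pos
  refine subsingleton_of_forall_eq 0 fun φ => ?_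
  have hφ : Ext.mk₀ (ModuleCat.ofHom φ) = 0 := Subsingleton.elim _ _
  rw [Ext.mk₀_eq_zero_iff] at hφ
  exact congrArg ModuleCat.Hom.hom hφ

end Depth

section PolynomialRing

variable {k σ : Type*} [Field k]

/-- The endomorphism of the polynomial ring evaluating the variables in `T` at the coordinates of
the point `p` and fixing the other variables. -/
def partialEval [DecidableEq σ] (p : σ → k) (T : Finset σ) :
    MvPolynomial σ k →ₐ[k] MvPolynomial σ k :=
  aeval fun j => if j ∈ T then C (p j) else X j

lemma ker_partialEval [DecidableEq σ] (p : σ → k) (T : Finset σ) :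
    RingHom.ker (partialEval p T) = Ideal.span ((fun i => X i - C (p i)) '' (T : Set σ)) := by
  set I := Ideal.span ((fun i => X i - C (p i)) '' (T : Set σ))
  have hI : (Ideal.Quotient.mkₐ k I).comp (partialEval p T) = Ideal.Quotient.mkₐ k I := by
    ext j
    by_cases hj : j ∈ T
    · have hmem : X j - C (p j) ∈ I := Ideal.subset_span ⟨j, hj, rfl⟩
      simpa [partialEval, hj] using (Ideal.Quotient.eq.2 hmem).symm
    · simp [partialEval, hj]
  refine le_antisymm (fun P hP => ?_) (Ideal.span_le.2 ?_)
  · rw [← Ideal.Quotient.eq_zero_iff_mem, ← Ideal.Quotient.mkₐ_eq_mk k, ← hI, AlgHom.comp_apply,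
      RingHom.mem_ker.1 hP, map_zero]
  · rintro _ ⟨j, hj, rfl⟩
    have hj : j ∈ T := hj
    simp [partialEval, hj]

lemma isSMulRegular_X_sub_C_of_notMem [DecidableEq σ] (p : σ → k) {T : Finset σ} {i : σ}
    (hi : i ∉ T) :
    IsSMulRegular (MvPolynomial σ k ⧸ RingHom.ker (partialEval p T)) (X i - C (p i)) := by
  rw [isSMulRegular_quotient_iff_mem_of_smul_mem]
  intro P hP
  rw [smul_eq_mul, RingHom.mem_ker, map_mul] at hP
  refine (mul_eq_zero.1 hP).resolve_left fun h => ?_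
  simpa [partialEval, hi] using congrArg (eval fun _ => p i + 1) h

lemma isWeaklyRegular_X_sub_C (p : σ → k) {l : List σ} (hl : l.Nodup) :
    RingTheory.Sequence.IsWeaklyRegular (MvPolynomial σ k) (l.map fun i => X i - C (p i)) := by
  classical
  refine ⟨fun i hi => ?_⟩
  have hi' : i < l.length := by simpa using hi
  have hspan : Ideal.ofList ((l.map fun i => X i - C (p i)).take i) • ⊤ =
      RingHom.ker (partialEval p (l.take i).toFinset) := by
    rw [ker_partialEval, smul_eq_mul, Ideal.mul_top, ← List.map_take, Ideal.ofList]
    congr 1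
    ext
    simp only [List.mem_map, Set.mem_ofPred_eq, Set.mem_image, Finset.mem_coe, List.mem_toFinset]
  rw [hspan, List.getElem_map]
  refine isSMulRegular_X_sub_C_of_notMem p fun h => ?_
  rw [List.mem_toFinset, List.mem_take_iff_getElem] at h
  obtain ⟨j, hj, h⟩ := h
  have := (hl.getElem_inj_iff).1 h
  omega

end PolynomialRing

section PolynomialRingDepth

universe u
variable {k σ : Type u} [Field k]

lemma extVanishesBelow_card_of_isMaximal [IsAlgClosed k] [Fintype σ] (P : Ideal (MvPolynomial σ k))
    [P.IsMaximal] :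
    ExtVanishesBelow (MvPolynomial σ k) (MvPolynomial σ k) (MvPolynomial σ k ⧸ P)
      (Fintype.card σ) := by
  obtain ⟨p, hp⟩ := isMaximal_iff_eq_vanishingIdeal_singleton.1 ‹P.IsMaximal›
  have h := extVanishesBelow_length_of_isWeaklyRegular (N := MvPolynomial σ k ⧸ P)
    (isWeaklyRegular_X_sub_C p Finset.univ.nodup_toList) (by
      rw [Ideal.annihilator_quotient, hp]
      simp)
  simpa using h

end PolynomialRingDepth

section AssociatedPrimes

open scoped Pointwise

variable {A M : Type*} [CommRing A] [IsNoetherianRing A] [AddCommGroup M] [Module A M]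

lemma notMem_of_isSMulRegular_of_isAssociatedPrime {P : Ideal A} (hP : IsAssociatedPrime P M)
    {y : A} (hy : IsSMulRegular M y) : y ∉ P := fun hyP => by
  have h : y ∈ {r : A | IsSMulRegular M r}ᶜ := by
    rw [← biUnion_associatedPrimes_eq_compl_regular A M]
    exact Set.mem_biUnion (show P ∈ associatedPrimes A M from hP) hyP
  exact h hy

variable [Module.Finite A M]

lemma exists_mem_isSMulRegular (J : Ideal A) (hJ : ∀ P ∈ associatedPrimes A M, ¬ J ≤ P) :
    ∃ a ∈ J, IsSMulRegular M a := by
  by_contra! h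
  obtain ⟨P, hP, hJP⟩ := (J.subset_union_prime_finite (f := id) (associatedPrimes.finite A M) 0 0
    fun P hP _ _ => hP.isPrime).1 (by
      simp only [id]
      rw [biUnion_associatedPrimes_eq_compl_regular A M]
      exact h)
  exact hJ P hP hJP

/-- Nakayama: the elements of `M` killed by `P` form a nonzero submodule, which would be `y`
times itself were it contained in `y M`. -/
lemma exists_le_isAssociatedPrime_quotSMulTop {P Q : Ideal A} (hP : IsAssociatedPrime P M)
    (hPQ : P ≤ Q) (hQ : Q ≠ ⊤) {y : A} (hyQ : y ∈ Q) (hy : IsSMulRegular M y) :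
    ∃ P', IsAssociatedPrime P' (QuotSMulTop y M) ∧ P ≤ P' ∧ y ∈ P' := by
  obtain ⟨v, hv, hvy⟩ : ∃ v : M, (∀ r ∈ P, r • v = 0) ∧ v ∉ y • (⊤ : Submodule A M) := by
    by_contra! h
    set T := Submodule.torsionBySet A M (P : Set A)
    have hT : ∀ v, v ∈ T ↔ ∀ r ∈ P, r • v = 0 := fun v => by
      simp [T, Submodule.mem_torsionBySet_iff]
    have hle : T ≤ Ideal.span {y} • T := by
      intro v hv
      obtain ⟨w, -, rfl⟩ := (Submodule.mem_smul_pointwise_iff_exists _ _ _).1 (h v ((hT v).1 hv))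
      refine Submodule.smul_mem_smul (Ideal.mem_span_singleton_self y) ((hT w).2 fun r hr => ?_)
      exact hy.right_eq_zero_of_smul (by rw [smul_comm, (hT _).1 hv r hr])
    obtain ⟨r, hr, hrT⟩ := Submodule.exists_sub_one_mem_and_smul_eq_zero_of_fg_of_le_smul
      (Ideal.span {y}) T (IsNoetherian.noetherian T) hle
    obtain ⟨-, x, hx⟩ := isAssociatedPrime_iff.1 hP
    have hxP : ∀ r, r ∈ P ↔ r • x = 0 := fun r => by
      rw [hx, Submodule.mem_colon_singleton, Submodule.mem_bot]
    have hrQ : r ∈ Q := hPQ ((hxP r).2 (hrT x ((hT x).2 fun r hr => (hxP r).1 hr)))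
    have h1 : r - 1 ∈ Q := (Ideal.span_singleton_le_iff_mem Q).2 hyQ hr
    exact hQ ((Ideal.eq_top_iff_one Q).2 (by simpa using sub_mem hrQ h1))
  set x : QuotSMulTop y M := Submodule.Quotient.mk v
  have hx : x ≠ 0 := mt (Submodule.Quotient.mk_eq_zero _).1 hvy
  obtain ⟨P', hP', hle⟩ := exists_le_isAssociatedPrime_of_isNoetherianRing A x hx
  have hP'x : ∀ r, r • x = 0 → r ∈ P' := fun r hr => hle (by simpa using hr)
  refine ⟨P', hP', fun r hr => hP'x r ?_, hP'x y ?_⟩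
  · rw [← Submodule.Quotient.mk_smul, hv r hr, Submodule.Quotient.mk_zero]
  · exact (Submodule.Quotient.mk_eq_zero _).2 (Submodule.smul_mem_pointwise_smul v y ⊤ trivial)

end AssociatedPrimes

section TranscendenceDegree

universe u

open Cardinal

lemma trdeg_add_one_le_of_surjective {k : Type*} {A B : Type u} [Field k] [CommRing A] [IsDomain A]
    [Algebra k A] [CommRing B] [IsDomain B] [Algebra k B] (φ : A →ₐ[k] B)
    (hφ : Function.Surjective φ) {y : A} (hy : y ≠ 0) (hφy : φ y = 0) :
    Algebra.trdeg k B + 1 ≤ Algebra.trdeg k A := by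
  obtain ⟨ι, z, hz⟩ := exists_isTranscendenceBasis' k B
  choose w hw using fun i => hφ (z i)
  have hφw : ⇑φ ∘ w = z := funext hw
  have hw : AlgebraicIndependent k w := .of_comp φ (hφw ▸ hz.1)
  have hinj : ∀ r ∈ Algebra.adjoin k (Set.range w), φ r = 0 → r = 0 := by
    intro r hr hφr
    rw [Algebra.adjoin_range_eq_range_aeval] at hr
    obtain ⟨P, rfl⟩ := hr
    have hP : aeval z P = 0 := by
      rw [← hφw]
      exact (comp_aeval_apply w φ P).symm.trans hφr
    rw [(map_eq_zero_iff _ hz.1).1 hP, map_zero]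
  have htr : Transcendental (Algebra.adjoin k (Set.range w)) y := by
    intro hyalg
    obtain ⟨r, hr, hyr⟩ := hyalg.exists_nonzero_dvd (mem_nonZeroDivisors_of_ne_zero hy)
    refine hr (Subtype.ext (hinj _ r.2 (zero_dvd_iff.1 ?_)))
    exact hφy ▸ map_dvd φ hyr
  rw [← hz.cardinalMk_eq_trdeg, ← mk_option]
  exact ((hw.option_iff_transcendental y).2 htr).cardinalMk_le_trdeg

end TranscendenceDegree

section Unmixedness

universe u

open RingTheory.Sequence

variable {k : Type*} {A M : Type u} [Field k] [CommRing A] [IsNoetherianRing A] [Algebra k A]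
  [AddCommGroup M] [Module A M] [Module.Finite A M]

lemma exists_mem_isSMulRegular_of_extVanishesBelow {Q : Ideal A} {c : ℕ}
    (h : ExtVanishesBelow A M (A ⧸ Q) (c + 1)) : ∃ y ∈ Q, IsSMulRegular M y := by
  have := h.subsingleton_linearMap
  simpa only [Ideal.annihilator_quotient] using IsSMulRegular.subsingleton_linearMap_iff.1 this

variable (k) in
lemma le_trdeg_quotient_of_isAssociatedPrime {c : ℕ}
    (h : ∀ Q : Ideal A, Q.IsMaximal → ExtVanishesBelow A M (A ⧸ Q) c) {P : Ideal A}
    (hP : IsAssociatedPrime P M) : (c : Cardinal) ≤ Algebra.trdeg k (A ⧸ P) := by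
  induction c generalizing M P with
  | zero => simp
  | succ c ih =>
    have := hP.isPrime
    obtain ⟨Q, hQ, hPQ⟩ := P.exists_le_maximal hP.isPrime.ne_top
    obtain ⟨y, hyQ, hy⟩ := exists_mem_isSMulRegular_of_extVanishesBelow (h Q hQ)
    obtain ⟨P', hP', hPP', hyP'⟩ :=
      exists_le_isAssociatedPrime_quotSMulTop hP hPQ hQ.ne_top hyQ hy
    have := hP'.isPrime
    have hyP : (Ideal.Quotient.mk P y) ≠ 0 := fun h0 =>
      notMem_of_isSMulRegular_of_isAssociatedPrime hP hy (Ideal.Quotient.eq_zero_iff_mem.1 h0)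
    calc ((c + 1 : ℕ) : Cardinal) = c + 1 := Nat.cast_succ c
      _ ≤ Algebra.trdeg k (A ⧸ P') + 1 := by
        gcongr
        exact ih (fun Q hQ => (h Q hQ).quotSMulTop hy) hP'
      _ ≤ Algebra.trdeg k (A ⧸ P) :=
        trdeg_add_one_le_of_surjective (Ideal.Quotient.factorₐ k hPP')
          (Ideal.Quotient.factor_surjective hPP') hyP (Ideal.Quotient.eq_zero_iff_mem.2 hyP')

variable (k) in
/-- Cohen–Macaulay-type prime avoidance: the associated primes of `M` have dimension at least `c`,
whereas those containing `J` have dimension at most `e`. -/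
lemma exists_isWeaklyRegular_of_trdeg_le {J : Ideal A} {c e r : ℕ} (hr : r + e ≤ c)
    (h : ∀ Q : Ideal A, Q.IsMaximal → ExtVanishesBelow A M (A ⧸ Q) c)
    (hJ : ∀ P : Ideal A, P.IsPrime → Module.annihilator A M ≤ P → J ≤ P →
      Algebra.trdeg k (A ⧸ P) ≤ e) :
    ∃ l : List A, l.length = r ∧ (∀ a ∈ l, a ∈ J) ∧ IsWeaklyRegular M l := by
  induction r generalizing c M with
  | zero => exact ⟨[], rfl, by simp, .nil A M⟩
  | succ r ih =>
    obtain ⟨c, rfl⟩ : ∃ c', c = c' + 1 := ⟨c - 1, by omega⟩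
    obtain ⟨a, haJ, ha⟩ := exists_mem_isSMulRegular (M := M) J fun P hP hJP => by
      have hc := (le_trdeg_quotient_of_isAssociatedPrime k h hP).trans
        (hJ P hP.isPrime (Submodule.annihilator_top.symm.trans_le hP.annihilator_le) hJP)
      have := Nat.cast_le.1 hc
      omega
    obtain ⟨l, hl, hlJ, hreg⟩ := ih (M := QuotSMulTop a M) (c := c) (by omega)
      (fun Q hQ => (h Q hQ).quotSMulTop ha) fun P hP hann hJP =>
        hJ P hP ((LinearMap.annihilator_le_of_surjective _
          (Submodule.mkQ_surjective _)).trans hann) hJP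
    exact ⟨a :: l, by simp [hl], by simpa [haJ] using hlJ,
      (isWeaklyRegular_cons_iff M a l).2 ⟨ha, hreg⟩⟩

end Unmixedness

section Derivations

open Module

lemma exists_derivation_extension (k : Type*) {A L : Type*} [CommRing k] [CommRing A] [CommRing L]
    [Algebra k A] [Algebra k L] [Algebra A L] [IsScalarTower k A L] [Algebra.FormallyEtale A L]
    (d : Derivation k A L) : ∃ D : Derivation k L L, ∀ a, D (algebraMap A L a) = d a := by
  let e := KaehlerDifferential.tensorKaehlerEquivOfFormallyEtale k A L
  refine ⟨(d.liftKaehlerDifferential.liftBaseChange L ∘ₗ e.symm.toLinearMap).compDer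
    (KaehlerDifferential.D k L), fun a => ?_⟩
  change d.liftKaehlerDifferential.liftBaseChange L
    (e.symm (KaehlerDifferential.D k L (algebraMap A L a))) = _
  rw [KaehlerDifferential.tensorKaehlerEquivOfFormallyEtale_symm_D_algebraMap,
    LinearMap.liftBaseChange_tmul, one_smul, Derivation.liftKaehlerDifferential_comp_D]

universe u

variable {k : Type*} {L : Type u} [Field k] [Field L] [Algebra k L]

lemma exists_derivation_of_isTranscendenceBasis [CharZero k] {ι : Type*} {z : ι → L}
    (hz : IsTranscendenceBasis k z) (v : ι → L) : ∃ D : Derivation k L L, ∀ i, D (z i) = v i := by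
  have : CharZero L := charZero_of_injective_algebraMap (algebraMap k L).injective
  let _ : Algebra (MvPolynomial ι k) L := (aeval (R := k) z).toAlgebra
  have : IsScalarTower k (MvPolynomial ι k) L := .of_algHom _
  have : FaithfulSMul (MvPolynomial ι k) L := (faithfulSMul_iff_algebraMap_injective _ _).2 hz.1
  let _ := FractionRing.liftAlgebra (MvPolynomial ι k) L
  have halg : Algebra.IsAlgebraic (MvPolynomial ι k) L := by
    have := hz.isAlgebraic
    exact .of_ringHom_of_comp_eq hz.1.aevalEquiv.toRingEquiv (RingHom.id L)
      hz.1.aevalEquiv.surjective Function.injective_id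
      (RingHom.ext fun P => hz.1.algebraMap_aevalEquiv P)
  have : Algebra.IsAlgebraic (FractionRing (MvPolynomial ι k)) L :=
    (IsFractionRing.comap_isAlgebraic_iff (A := MvPolynomial ι k)).1 halg
  have : Algebra.FormallyEtale (MvPolynomial ι k) (FractionRing (MvPolynomial ι k)) :=
    .of_isLocalization (nonZeroDivisors _)
  have : Algebra.FormallyEtale (FractionRing (MvPolynomial ι k)) L :=
    Algebra.FormallyEtale.of_isSeparable _ L
  have : Algebra.FormallyEtale (MvPolynomial ι k) L :=
    .comp _ (FractionRing (MvPolynomial ι k)) L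
  obtain ⟨D, hD⟩ := exists_derivation_extension k (A := MvPolynomial ι k) (mkDerivation k v)
  refine ⟨D, fun i => ?_⟩
  have := hD (X i)
  rwa [mkDerivation_X, show algebraMap (MvPolynomial ι k) L (X i) = z i from aeval_X z i] at this

variable (k) in
/-- Evaluation of the derivations of `L` at the members of the family `y`. -/
def derivationEval {κ : Type*} (y : κ → L) : Derivation k L L →ₗ[L] κ → L where
  toFun D i := D (y i)
  map_add' _ _ := rfl
  map_smul' _ _ := rfl

variable (k L) in
lemma trdeg_le_rank_derivation [CharZero k] :
    Algebra.trdeg k L ≤ Module.rank L (Derivation k L L) := by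
  classical
  obtain ⟨ι, z, hz⟩ := exists_isTranscendenceBasis' k L
  choose D hD using fun i => exists_derivation_of_isTranscendenceBasis hz (Pi.single i 1)
  have hDeval : derivationEval k z ∘ D = fun i => Pi.single i 1 := by
    ext i j
    exact hD i j
  have hLI : LinearIndependent L D := by
    refine .of_comp (derivationEval k z) ?_
    rw [hDeval]
    exact Pi.linearIndependent_single_one ι L
  rw [← hz.cardinalMk_eq_trdeg]
  exact hLI.cardinal_le_rank

lemma rank_derivation_le_card {κ : Type u} [Fintype κ] {y : κ → L}
    (hy : Function.Injective (derivationEval k y)) :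
    Module.rank L (Derivation k L L) ≤ Fintype.card κ :=
  (LinearMap.rank_le_of_injective _ hy).trans_eq rank_fun'

lemma finrank_le_card_of_isotropic {κ : Type*} [Fintype κ] (U : Submodule L (κ ⊕ κ → L))
    (hU : ∀ u ∈ U, ∀ v ∈ U,
      ∑ i, u (Sum.inl i) * v (Sum.inr i) = ∑ i, v (Sum.inl i) * u (Sum.inr i)) :
    finrank L U ≤ Fintype.card κ := by
  classical
  set B := (Matrix.J κ L).toBilin'
  have hB : ∀ u v, B u v =
      ∑ i, v (Sum.inl i) * u (Sum.inr i) - ∑ i, u (Sum.inl i) * v (Sum.inr i) := by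
    intro u v
    simp [B, Matrix.toBilin'_apply', Matrix.J, Matrix.fromBlocks_mulVec, Matrix.neg_mulVec,
      dotProduct, Fintype.sum_sum_type, mul_comm, sub_eq_neg_add]
  have hnondeg : B.Nondegenerate :=
    (Matrix.nondegenerate_of_det_ne_zero (Matrix.isUnit_det_J κ L).ne_zero).toBilin'
  have hle : U ≤ B.orthogonal U := by
    intro u hu v hv
    rw [hB, hU v hv u hu, sub_self]
  have h1 := Submodule.finrank_mono hle
  have h2 := LinearMap.BilinForm.finrank_orthogonal hnondeg U
  have h3 : finrank L (κ ⊕ κ → L) = Fintype.card κ + Fintype.card κ := by simp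
  have h4 := Submodule.finrank_le U
  omega

/-- A relation `∑ cᵢ D yᵢ = 0` valid for all derivations `D` makes the vectors `(D c, D y)` span an
isotropic subspace: apply it to the commutator of two derivations. -/
lemma rank_derivation_le_card_add_one {κ : Type u} [Fintype κ] {c y : κ → L} {a : L}
    (hcy : ∀ D : Derivation k L L, ∑ i, c i * D (y i) = 0)
    (hinj : ∀ D : Derivation k L L, derivationEval k (Sum.elim c y) D = 0 → D a = 0 → D = 0) :
    Module.rank L (Derivation k L L) ≤ Fintype.card κ + 1 := by
  set Φ := derivationEval k (Sum.elim c y)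
  have hrange : Module.rank L (LinearMap.range Φ) ≤ Fintype.card κ := by
    rw [← finrank_eq_rank]
    refine Nat.cast_le.2 (finrank_le_card_of_isotropic _ ?_)
    rintro _ ⟨D, rfl⟩ _ ⟨E, rfl⟩
    change ∑ i, D (c i) * E (y i) = ∑ i, E (c i) * D (y i)
    have hDE := congrArg D (hcy E)
    have hED := congrArg E (hcy D)
    have hcomm := hcy ⁅D, E⁆
    simp only [map_sum, Derivation.leibniz, smul_eq_mul, map_zero, Derivation.commutator_apply,
      mul_sub, Finset.sum_sub_distrib, Finset.sum_add_distrib] at hDE hED hcomm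
    simp only [mul_comm (E (y _)), mul_comm (D (y _))] at hDE hED
    linear_combination hDE - hED - hcomm
  have hker : Module.rank L (LinearMap.ker Φ) ≤ 1 := by
    refine (LinearMap.rank_le_of_injective
      ((derivationEval k fun _ : PUnit.{u + 1} => a).domRestrict (LinearMap.ker Φ)) ?_).trans_eq
        (by simp)
    rw [injective_iff_map_eq_zero]
    exact fun D hD => Subtype.ext (hinj D D.2 (congrFun hD PUnit.unit))
  rw [← LinearMap.rank_range_add_rank_ker Φ]
  exact add_le_add hrange hker

end Derivations

section Constants

variable {k L : Type*} [CommRing k] [Field L] [Algebra k L]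

/-- The field of constants of a derivation. -/
def constants (D : Derivation k L L) : Subfield L where
  carrier := {l | D l = 0}
  zero_mem' := map_zero D
  one_mem' := D.map_one_eq_zero
  add_mem' ha hb := by simp_all
  neg_mem' ha := by simp_all
  mul_mem' ha hb := by simp_all
  inv_mem' a ha := by simp_all [Derivation.leibniz_inv]

lemma isIntegrallyClosedIn_constants [CharZero L] (D : Derivation k L L) :
    IsIntegrallyClosedIn (constants D).toSubring L := by
  refine Subring.isIntegrallyClosedIn_iff.2 fun {x} hx => ?_
  let D' : Derivation (constants D) L L := Derivation.mk'
    { toFun := D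
      map_add' := D.map_add
      map_smul' := fun c l => by
        have hc : D c = 0 := c.2
        simp [Subfield.smul_def, hc] } D.leibniz
  have hx' : IsIntegral (constants D) x := hx
  have hroot : D' (Polynomial.aeval x (minpoly (constants D) x)) = 0 := by
    rw [minpoly.aeval, map_zero]
  rw [Derivation.map_aeval, smul_eq_mul] at hroot
  exact (mul_eq_zero.1 hroot).resolve_left
    ((minpoly.irreducible hx').separable.aeval_derivative_ne_zero (minpoly.aeval _ x))

end Constants

section Homogeneous

lemma aeval_mul_of_isHomogeneous {k σ L : Type*} [CommRing k] [CommRing L] [Algebra k L]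
    {p : MvPolynomial σ k} {d : ℕ} (hp : p.IsHomogeneous d) (a : L) (u : σ → L) :
    aeval (fun j => a * u j) p = a ^ d * aeval u p := by
  simp only [aeval_def, eval₂_eq, Finset.mul_sum]
  refine Finset.sum_congr rfl fun α hα => ?_
  have hdeg : ∑ j ∈ α.support, α j = d := (hp.degree_eq_sum_deg_support hα).symm
  simp only [mul_pow, Finset.prod_mul_distrib, Finset.prod_pow_eq_pow_sum, hdeg]
  ring

variable {k σ ι L : Type*} [Field k] [Finite σ] [Field L] [Algebra k L]
  {f : ι → MvPolynomial σ k} {d : ι → ℕ}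

/-- If some coordinate of `x` were not in `V`, dividing by the one with the largest valuation would
give a nonzero common zero of the `f i` over the residue field. -/
lemma mem_valuationSubring_of_isHomogeneous (hfh : ∀ i, (f i).IsHomogeneous (d i))
    (hd : ∀ i, d i ≠ 0) (hX : ∀ j, X j ∈ (Ideal.span (Set.range f)).radical)
    (V : ValuationSubring L) (hkV : ∀ c : k, algebraMap k L c ∈ V) {x : σ → L}
    (hfV : ∀ i, aeval x (f i) ∈ V) (j : σ) : x j ∈ V := by
  have : Nonempty σ := ⟨j⟩
  obtain ⟨j₀, hj₀⟩ := Finite.exists_max fun j => V.valuation (x j)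
  by_contra hj
  have hlt : 1 < V.valuation (x j₀) :=
    (not_le.1 (mt (V.valuation_le_one_iff _).1 hj)).trans_le (hj₀ j)
  have hx₀ : x j₀ ≠ 0 := fun h => by simp [h] at hlt
  have huV : ∀ j, x j / x j₀ ∈ V := fun j => by
    rw [← V.valuation_le_one_iff, map_div₀]
    exact div_le_one_of_le₀ (hj₀ j) zero_le
  let _ : Algebra k V := ((algebraMap k L).codRestrict V.toSubring hkV).toAlgebra
  let φ : V →ₐ[k] L := { V.subtype with commutes' := fun _ => rfl }
  let u : σ → V := fun j => ⟨x j / x j₀, huV j⟩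
  have hfu : ∀ i, aeval u (f i) ∈ IsLocalRing.maximalIdeal V := fun i => by
    have hscale := aeval_mul_of_isHomogeneous (hfh i) (x j₀) (φ ∘ u)
    have hxu : (fun j => x j₀ * (φ ∘ u) j) = x := funext fun j => mul_div_cancel₀ _ hx₀
    have hcomp : aeval (φ ∘ u) (f i) = (aeval u (f i) : V) := (comp_aeval_apply u φ (f i)).symm
    rw [hxu, hcomp] at hscale
    have hle := (V.valuation_le_one_iff _).2 (hfV i)
    rw [hscale, map_mul, map_pow] at hle
    rw [V.valuation_lt_one_iff]
    by_contra! hge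
    exact hle.not_gt ((one_lt_pow₀ hlt (hd i)).trans_le (le_mul_of_one_le_right' hge))
  obtain ⟨N, hN⟩ := hX j₀
  have hmem : aeval u (X j₀ ^ N : MvPolynomial σ k) ∈ IsLocalRing.maximalIdeal V := by
    suffices Ideal.span (Set.range f) ≤ (IsLocalRing.maximalIdeal V).comap (aeval u) from this hN
    rw [Ideal.span_le]
    rintro _ ⟨i, rfl⟩
    exact hfu i
  have hu : u j₀ = 1 := Subtype.ext (div_self hx₀)
  rw [map_pow, aeval_X, hu, one_pow] at hmem
  exact (IsLocalRing.maximalIdeal.isMaximal V).ne_top ((Ideal.eq_top_iff_one _).2 hmem)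

lemma derivation_eq_zero_of_isHomogeneous [CharZero L] (hfh : ∀ i, (f i).IsHomogeneous (d i))
    (hd : ∀ i, d i ≠ 0) (hX : ∀ j, X j ∈ (Ideal.span (Set.range f)).radical)
    (D : Derivation k L L) {x : σ → L} (hDf : ∀ i, D (aeval x (f i)) = 0) (j : σ) :
    D (x j) = 0 := by
  have := isIntegrallyClosedIn_constants D
  by_contra hj
  obtain ⟨V, hV, hjV⟩ := Subring.exists_le_valuationSubring_of_isIntegrallyClosedIn
    (R := (constants D).toSubring) hj
  exact hjV (mem_valuationSubring_of_isHomogeneous hfh hd hX V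
    (fun c => hV (D.map_algebraMap c)) (fun i => hV (hDf i)) j)

end Homogeneous

section NormalCrossing

lemma linearIndependent_of_ker_le {R K L m n : Type*} [CommRing R] [Field K] [Field L]
    [Finite m] [Finite n] {φ : R →+* L} {ψ : R →+* K} (hψ : Function.Surjective ψ)
    (h : RingHom.ker φ ≤ RingHom.ker ψ) {M : Matrix m n R}
    (hM : LinearIndependent K (M.map ψ).row) : LinearIndependent L (M.map φ).row := by
  classical
  have := Fintype.ofFinite n
  have := Fintype.ofFinite m
  obtain ⟨B, hB⟩ : ∃ B : Matrix n m K, M.map ψ * B = 1 := by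
    rw [← Matrix.vecMul_injective_iff] at hM
    obtain ⟨g, hg⟩ := (Matrix.vecMulLinear (M.map ψ)).exists_leftInverse_of_injective
      (LinearMap.ker_eq_bot.2 hM)
    refine ⟨(LinearMap.toMatrix' g).transpose, Matrix.ext_of_single_vecMul fun i => ?_⟩
    rw [← Matrix.vecMul_vecMul, Matrix.vecMul_transpose, LinearMap.toMatrix'_mulVec,
      Matrix.vecMul_one]
    exact LinearMap.congr_fun hg _
  choose s hs using hψ
  let B' : Matrix n m R := B.map s
  have hdet : φ (M * B').det ≠ 0 := by
    intro hzero
    have hψB : (M * B').map ψ = 1 := by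
      rw [Matrix.map_mul, Matrix.map_map, show ψ ∘ s = id from funext hs, Matrix.map_id, hB]
    have := h hzero
    rw [RingHom.mem_ker, RingHom.map_det, RingHom.mapMatrix_apply, hψB, Matrix.det_one] at this
    exact one_ne_zero this
  rw [← Matrix.vecMul_injective_iff]
  refine .of_comp (f := fun v => Matrix.vecMul v (B'.map φ)) ?_
  simp only [Function.comp_def, Matrix.vecMul_vecMul, ← Matrix.map_mul]
  rw [Matrix.vecMul_injective_iff_isUnit, Matrix.isUnit_iff_isUnit_det, isUnit_iff_ne_zero]
  rwa [RingHom.map_det] at hdet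

variable {k σ ι : Type*} [Field k] [Fintype σ]

/-- Normal crossing away from the origin, encoded via the Jacobian criterion: wherever at most
`Fintype.card σ` of the polynomials vanish at a point `p ≠ 0`, their gradients at `p` are linearly
independent. -/
def IsNormalCrossing (f : ι → MvPolynomial σ k) : Prop :=
  ∀ I : Finset ι, I.card ≤ Fintype.card σ → ∀ p : σ → k, p ≠ 0 → (∀ i ∈ I, eval p (f i) = 0) →
    LinearIndependent k fun (i : I) j => eval p (pderiv j (f i))

variable {f : ι → MvPolynomial σ k} {d : ι → ℕ}

lemma IsNormalCrossing.ne_zero [Nonempty σ] (hf : IsNormalCrossing f) (i : ι) : f i ≠ 0 := by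
  intro hi
  have hind := hf {i} (by rw [Finset.card_singleton]; exact Fintype.card_pos) (fun _ => 1)
    (fun h => one_ne_zero (congrFun h (Classical.arbitrary σ))) (by simp [hi])
  exact hind.ne_zero ⟨i, Finset.mem_singleton_self i⟩ (by ext j; simp [hi])

lemma IsNormalCrossing.eq_zero_of_card_le (hf : IsNormalCrossing f)
    (hfh : ∀ i, (f i).IsHomogeneous (d i)) {I : Finset ι} (hI : Fintype.card σ ≤ I.card)
    {p : σ → k} (hp : ∀ i ∈ I, eval p (f i) = 0) : p = 0 := by
  by_contra hp0
  obtain ⟨J, hJI, hJ⟩ := Finset.exists_subset_card_eq hI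
  have hspan := (hf J hJ.le p hp0 fun i hi => hp i (hJI hi)).span_eq_top_of_card_eq_finrank'
    (by simp [hJ])
  refine hp0 (dotProduct_eq_zero_iff.1 fun v => ?_)
  have hv : v ∈ Submodule.span k _ := hspan ▸ Submodule.mem_top
  induction hv using Submodule.span_induction with
  | mem v hv =>
    obtain ⟨i, rfl⟩ := hv
    have heuler := congrArg (eval p) (hfh i).sum_X_mul_pderiv
    simpa [hp i (hJI i.2), dotProduct] using heuler
  | zero => exact dotProduct_zero p
  | add v w _ _ hv hw => rw [dotProduct_add, hv, hw, add_zero]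
  | smul a v _ hv => rw [dotProduct_smul, hv, smul_zero]

lemma IsNormalCrossing.X_mem_radical [IsAlgClosed k] [Fintype ι] (hf : IsNormalCrossing f)
    (hfh : ∀ i, (f i).IsHomogeneous (d i)) (hι : Fintype.card σ ≤ Fintype.card ι) (j : σ) :
    X j ∈ (Ideal.span (Set.range f)).radical := by
  rw [← vanishingIdeal_zeroLocus_eq_radical (K := k), mem_vanishingIdeal_iff, zeroLocus_span]
  intro p hp
  have hp0 : p = 0 := hf.eq_zero_of_card_le hfh (I := Finset.univ) hι
    fun i _ => by simpa using hp _ ⟨i, rfl⟩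
  simp [hp0]

lemma IsNormalCrossing.linearIndependent_aeval [IsAlgClosed k] [Finite ι]
    (hf : IsNormalCrossing f) (hfh : ∀ i, (f i).IsHomogeneous (d i))
    {L : Type*} [Field L] [Algebra k L] {x : σ → L} (hx : x ≠ 0) :
    LinearIndependent L
      fun (i : {i // aeval x (f i) = 0}) j => aeval x (pderiv j (f i)) := by
  classical
  have := Fintype.ofFinite ι
  let 𝔮 := RingHom.ker (aeval (R := k) x)
  have : 𝔮.IsPrime := RingHom.ker_isPrime _
  obtain ⟨p, hp, hp0⟩ : ∃ p ∈ zeroLocus k 𝔮, p ≠ 0 := by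
    by_contra! hzero
    refine hx (funext fun j => ?_)
    have hj : X j ∈ 𝔮 := by
      rw [← IsPrime.vanishingIdeal_zeroLocus (K := k) 𝔮, mem_vanishingIdeal_iff]
      intro p hp
      simp [hzero p hp]
    simpa [𝔮] using hj
  have hker : 𝔮 ≤ RingHom.ker (eval p) := fun g hg => by simpa using mem_zeroLocus_iff.1 hp g hg
  let I : Finset ι := {i | aeval x (f i) = 0}
  have hpI : ∀ i ∈ I, eval p (f i) = 0 := fun i hi => hker ((Finset.mem_filter_univ i).1 hi)
  have hI : I.card ≤ Fintype.card σ := by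
    by_contra! hlt
    exact hp0 (hf.eq_zero_of_card_le hfh hlt.le hpI)
  have hind := linearIndependent_of_ker_le (φ := (aeval (R := k) x).toRingHom) (ψ := eval p)
    (M := .of fun (i : I) j => pderiv j (f i)) (fun c => ⟨C c, eval_C c⟩) hker (hf I hI p hp0 hpI)
  exact hind.comp (fun i : {i // aeval x (f i) = 0} => ⟨i, by simpa [I] using i.2⟩)
    fun i j hij => Subtype.ext (congrArg (fun i : I => (i : ι)) hij)

end NormalCrossing

section DimensionBound

lemma derivation_aeval {k σ A : Type*} [Fintype σ] [CommRing k] [CommRing A] [Algebra k A]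
    (D : Derivation k A A) (x : σ → A) (g : MvPolynomial σ k) :
    D (aeval x g) = ∑ j, aeval x (pderiv j g) * D (x j) := by
  classical
  induction g using MvPolynomial.induction_on with
  | C a => simp
  | add p q hp hq => simp only [map_add, hp, hq, add_mul, Finset.sum_add_distrib]
  | mul_X p i hp =>
    simp only [map_mul, map_add, aeval_X, Derivation.leibniz, hp, smul_eq_mul, pderiv_X, add_mul,
      Finset.sum_add_distrib, Pi.single_apply, Finset.mul_sum, mul_assoc, mul_ite, ite_mul, mul_one,
      mul_zero, zero_mul, apply_ite (aeval x), map_zero, Finset.sum_ite_eq,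
      Finset.mem_univ, if_true]

lemma derivation_eq_zero_of_isFractionRing {k A L : Type*} [CommRing k] [CommRing A] [IsDomain A]
    [Field L] [Algebra A L] [IsFractionRing A L] [Algebra k L]
    {D : Derivation k L L} (hD : ∀ a, D (algebraMap A L a) = 0) : D = 0 := by
  ext y
  obtain ⟨a, b, -, rfl⟩ := IsFractionRing.div_surjective (A := A) y
  simp [div_eq_mul_inv, Derivation.leibniz_inv, hD]

lemma mul_aeval_eq_zero_of_sum_mul_pderiv_eq_zero {k σ ι L : Type*} [CommSemiring k] [Finite σ]
    [Fintype ι] [Field L] [CharZero L] [Algebra k L] {f : ι → MvPolynomial σ k} {d : ι → ℕ}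
    (hfh : ∀ i, (f i).IsHomogeneous (d i)) {x : σ → L} {i₀ : ι} (hd : d i₀ ≠ 0) {c : ι → L}
    (hc : ∀ j, ∑ l, c l * aeval x (pderiv j (f l)) = 0)
    (h : ∀ l, l ≠ i₀ → c l * aeval x (f l) = 0) (l : ι) : c l * aeval x (f l) = 0 := by
  rcases ne_or_eq l i₀ with hl | rfl
  · exact h l hl
  have := Fintype.ofFinite σ
  have heuler (i : ι) : ∑ j, x j * aeval x (pderiv j (f i)) = d i * aeval x (f i) := by
    simpa using congrArg (aeval x) (hfh i).sum_X_mul_pderiv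
  have hsum : ∑ i, d i * (c i * aeval x (f i)) = 0 := by
    simp only [mul_left_comm (d _ : L), ← heuler, Finset.mul_sum, mul_left_comm (c _)]
    rw [Finset.sum_comm]
    simp only [← Finset.mul_sum, hc, mul_zero, Finset.sum_const_zero]
  rw [Fintype.sum_eq_single l fun i hi => by rw [h i hi, mul_zero]] at hsum
  exact (mul_eq_zero.1 hsum).resolve_left (Nat.cast_ne_zero.2 hd)

universe u

variable {k : Type*} {σ : Type*} {ι L : Type u} [Field k] [IsAlgClosed k] [Fintype σ]
  [Fintype ι] [Field L] [Algebra k L] {f : ι → MvPolynomial σ k} {d : ι → ℕ}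

lemma IsNormalCrossing.eq_zero_of_sum_mul_pderiv_eq_zero (hf : IsNormalCrossing f)
    (hfh : ∀ i, (f i).IsHomogeneous (d i)) {x : σ → L} (hx : x ≠ 0) {c : ι → L}
    (hc : ∀ j, ∑ l, c l * aeval x (pderiv j (f l)) = 0)
    (h : ∀ l, c l * aeval x (f l) = 0) : c = 0 := by
  classical
  have hsupp (l : ι) (hl : aeval x (f l) ≠ 0) : c l = 0 := (mul_eq_zero.1 (h l)).resolve_right hl
  have hind : LinearIndepOn L (fun l j => aeval x (pderiv j (f l)))
      ↑({l | aeval x (f l) = 0} : Finset ι) := by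
    rw [Finset.coe_filter_univ]
    exact hf.linearIndependent_aeval hfh hx
  have hzero := linearIndepOn_finset_iff.1 hind c ?_
  · refine funext fun l => ?_
    by_cases hl : aeval x (f l) = 0
    exacts [hzero l (by simpa using hl), hsupp l hl]
  · refine (Finset.sum_subset (Finset.subset_univ _) fun l _ hl => ?_).trans
      (funext fun j => (Finset.sum_apply _ _ _).trans (hc j))
    rw [hsupp l (by simpa using hl), zero_smul]

/-- A relation between the gradients at an `L`-point `x` may be differentiated; if `D` kills all
its coefficients but the `i`-th, only `D cᵢ` times a nonzero gradient is left. -/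
lemma IsNormalCrossing.derivation_coeff_eq_zero (hf : IsNormalCrossing f)
    (hfh : ∀ i, (f i).IsHomogeneous (d i)) {x : σ → L} (hx : x ≠ 0) {i : ι}
    (hi : aeval x (f i) = 0) {c : ι → L} (hc : ∀ j, ∑ l, c l * aeval x (pderiv j (f l)) = 0)
    {D : Derivation k L L} (hDx : ∀ j, D (x j) = 0) (hDc : ∀ l, l ≠ i → D (c l) = 0) :
    D (c i) = 0 := by
  by_contra hDi
  refine (hf.linearIndependent_aeval hfh hx).ne_zero ⟨i, hi⟩ (funext fun j => ?_)
  have hDg (g : MvPolynomial σ k) : D (aeval x g) = 0 := by simp [derivation_aeval, hDx]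
  have hD := congrArg D (hc j)
  simp only [map_sum, Derivation.leibniz, hDg, smul_eq_mul, mul_zero, zero_add, map_zero] at hD
  rw [Finset.sum_eq_single i (fun l _ hl => by rw [hDc l hl, mul_zero]) (by simp)] at hD
  exact (mul_eq_zero.1 hD).resolve_right hDi

lemma IsNormalCrossing.rank_derivation_le [CharZero k] (hf : IsNormalCrossing f)
    (hfh : ∀ i, (f i).IsHomogeneous (d i)) (hd : ∀ i, d i ≠ 0)
    (hcard : Fintype.card σ ≤ Fintype.card ι) {x : σ → L} {s : ι → L}
    (hgen : ∀ D : Derivation k L L, (∀ j, D (x j) = 0) → (∀ i, D (s i) = 0) → D = 0)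
    {i i₀ : ι} (hi : aeval x (f i) = 0)
    (hdep : x ≠ 0 → ∃ c : ι → L, (∀ j, ∑ l, c l * aeval x (pderiv j (f l)) = 0) ∧
      ∀ l, l ≠ i₀ → s l = c l * aeval x (f l)) :
    Module.rank L (Derivation k L L) ≤ Fintype.card ι := by
  classical
  have : CharZero L := charZero_of_injective_algebraMap (algebraMap k L).injective
  by_cases hx : x = 0
  · refine rank_derivation_le_card (k := k) (y := s)
      ((injective_iff_map_eq_zero _).2 fun D hD => ?_)
    exact hgen D (fun j => by rw [hx]; exact map_zero D) (congrFun hD)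
  obtain ⟨c, hc, hs⟩ := hdep hx
  have hrank := rank_derivation_le_card_add_one (k := k) (κ := {l // l ≠ i}) (c := fun l => c l)
    (y := fun l => aeval x (f l)) (a := s i₀) (fun D => ?_) (fun D hD hDs => ?_)
  · rw [Fintype.card_subtype_compl, Fintype.card_subtype_eq] at hrank
    have hpos : 1 ≤ Fintype.card ι := Fintype.card_pos_iff.2 ⟨i⟩
    exact_mod_cast hrank.trans_eq (by exact_mod_cast Nat.sub_add_cancel hpos)
  · rw [← Finset.sum_subtype (Finset.univ.erase i) (by simp) fun l => c l * D (aeval x (f l)),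
      Finset.sum_erase _ (by simp [hi])]
    simp only [derivation_aeval, Finset.mul_sum]
    rw [Finset.sum_comm]
    simp only [← mul_assoc, ← Finset.sum_mul, hc, zero_mul, Finset.sum_const_zero]
  · have hDc (l : ι) (hl : l ≠ i) : D (c l) = 0 := congrFun hD (Sum.inl ⟨l, hl⟩)
    have hDf (l : ι) : D (aeval x (f l)) = 0 := by
      rcases eq_or_ne l i with rfl | hl
      · rw [hi, map_zero]
      · exact congrFun hD (Sum.inr ⟨l, hl⟩)
    have hDx := derivation_eq_zero_of_isHomogeneous hfh hd (hf.X_mem_radical hfh hcard) D hDf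
    have hDci := hf.derivation_coeff_eq_zero hfh hx hi hc hDx hDc
    refine hgen D hDx fun l => ?_
    rcases eq_or_ne l i₀ with rfl | hl
    · exact hDs
    · have hDcl : D (c l) = 0 := by
        rcases eq_or_ne l i with rfl | hl'
        exacts [hDci, hDc l hl']
      rw [hs l hl, Derivation.leibniz, hDf, hDcl, smul_zero, smul_zero, add_zero]

end DimensionBound

section InteriorProduct

variable {S V : Type*} [CommRing S] [AddCommGroup V] [Module S V] {q : ℕ}
  {w : ExteriorAlgebra S V}

/-- The interior product with a functional on the exterior algebra, which is the contraction of
the Clifford algebra of the zero form. -/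
def interiorProduct (φ : Module.Dual S V) : ExteriorAlgebra S V →ₗ[S] ExteriorAlgebra S V :=
  CliffordAlgebra.contractLeft (Q := 0) φ

lemma interiorProduct_ι_mul (φ : Module.Dual S V) (v : V) (w : ExteriorAlgebra S V) :
    interiorProduct φ (ExteriorAlgebra.ι S v * w) =
      φ v • w - ExteriorAlgebra.ι S v * interiorProduct φ w :=
  CliffordAlgebra.contractLeft_ι_mul (Q := 0) φ v w

lemma interiorProduct_eq_zero_of_mem_zero (φ : Module.Dual S V) (hw : w ∈ ⋀[S]^0 V) :
    interiorProduct φ w = 0 := by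
  rw [ExteriorAlgebra.exteriorPower, pow_zero, Submodule.mem_one] at hw
  obtain ⟨r, rfl⟩ := hw
  exact CliffordAlgebra.contractLeft_algebraMap (Q := 0) φ r

lemma exteriorPower_succ (q : ℕ) :
    ⋀[S]^(q + 1) V = (ExteriorAlgebra.ι S : V →ₗ[S] _).range * ⋀[S]^q V :=
  pow_succ' _ _

lemma ι_mul_mem_exteriorPower (v : V) (hw : w ∈ ⋀[S]^q V) :
    ExteriorAlgebra.ι S v * w ∈ ⋀[S]^(q + 1) V := by
  rw [exteriorPower_succ]
  exact Submodule.mul_mem_mul ⟨v, rfl⟩ hw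

lemma interiorProduct_mem_exteriorPower (φ : Module.Dual S V) (hw : w ∈ ⋀[S]^(q + 1) V) :
    interiorProduct φ w ∈ ⋀[S]^q V := by
  suffices h : ⋀[S]^(q + 1) V ≤ (⋀[S]^q V).comap (interiorProduct φ) from h hw
  clear hw
  induction q with
  | zero =>
    rw [exteriorPower_succ, Submodule.mul_le]
    rintro _ ⟨v, rfl⟩ w hw
    rw [Submodule.mem_comap, interiorProduct_ι_mul, interiorProduct_eq_zero_of_mem_zero φ hw,
      mul_zero, sub_zero]
    exact Submodule.smul_mem _ _ hw
  | succ q ih =>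
    rw [exteriorPower_succ, Submodule.mul_le]
    rintro _ ⟨v, rfl⟩ w hw
    rw [Submodule.mem_comap, interiorProduct_ι_mul]
    exact Submodule.sub_mem _ (Submodule.smul_mem _ _ hw) (ι_mul_mem_exteriorPower v (ih hw))

lemma ι_mul_ι_mul_swap (u v : V) (w : ExteriorAlgebra S V) :
    ExteriorAlgebra.ι S u * (ExteriorAlgebra.ι S v * w) =
      -(ExteriorAlgebra.ι S v * (ExteriorAlgebra.ι S u * w)) := by
  rw [eq_neg_iff_add_eq_zero, ← mul_assoc, ← mul_assoc, ← add_mul,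
    ExteriorAlgebra.ι_add_mul_swap, zero_mul]

lemma ι_mul_ι_mul_self (u : V) (w : ExteriorAlgebra S V) :
    ExteriorAlgebra.ι S u * (ExteriorAlgebra.ι S u * w) = 0 := by
  rw [← mul_assoc, ExteriorAlgebra.ι_sq_zero, zero_mul]

lemma ι_mul_mem_smul_exteriorPower {𝔟 : Ideal S} (v : V) (hw : w ∈ 𝔟 • ⋀[S]^q V) :
    ExteriorAlgebra.ι S v * w ∈ 𝔟 • ⋀[S]^(q + 1) V := by
  refine Submodule.smul_induction_on hw (fun r hr n hn => ?_) fun x y hx hy => ?_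
  · rw [mul_smul_comm]
    exact Submodule.smul_mem_smul hr (ι_mul_mem_exteriorPower v hn)
  · rw [mul_add]
    exact Submodule.add_mem _ hx hy

lemma interiorProduct_mem_smul_exteriorPower {𝔟 : Ideal S} (φ : Module.Dual S V)
    (hw : w ∈ 𝔟 • ⋀[S]^(q + 1) V) : interiorProduct φ w ∈ 𝔟 • ⋀[S]^q V := by
  refine Submodule.smul_induction_on hw (fun r hr n hn => ?_) fun x y hx hy => ?_
  · rw [map_smul]
    exact Submodule.smul_mem_smul hr (interiorProduct_mem_exteriorPower φ hn)
  · rw [map_add]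
    exact Submodule.add_mem _ hx hy

end InteriorProduct

section ExteriorIdeal

variable {S V : Type*} [CommRing S] [AddCommGroup V] [Module S V] {U : Submodule S V} {q : ℕ}
  {w : ExteriorAlgebra S V}

/-- The degree-`q` part of the ideal of the exterior algebra generated by a submodule `U ≤ V`. -/
def exteriorIdealPart (U : Submodule S V) : ℕ → Submodule S (ExteriorAlgebra S V)
  | 0 => ⊥
  | q + 1 => U.map (ExteriorAlgebra.ι S) * ⋀[S]^q V

lemma exteriorIdealPart_mono {U' : Submodule S V} (h : U ≤ U') (q : ℕ) :
    exteriorIdealPart U q ≤ exteriorIdealPart U' q := by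
  cases q with
  | zero => exact le_rfl
  | succ q => exact mul_le_mul_left (Submodule.map_mono h) _

lemma exteriorIdealPart_bot (q : ℕ) : exteriorIdealPart (⊥ : Submodule S V) q = ⊥ := by
  cases q with
  | zero => rfl
  | succ q => rw [exteriorIdealPart, Submodule.map_bot, Submodule.bot_mul]

lemma exteriorIdealPart_le_exteriorPower (U : Submodule S V) (q : ℕ) :
    exteriorIdealPart U q ≤ ⋀[S]^q V := by
  cases q with
  | zero => exact bot_le
  | succ q =>
    rw [exteriorPower_succ]
    exact mul_le_mul_left LinearMap.map_le_range _

lemma mem_exteriorIdealPart_sup_span_singleton (U : Submodule S V) (v : V) :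
    w ∈ exteriorIdealPart (U ⊔ Submodule.span S {v}) (q + 1) ↔
      ∃ x ∈ exteriorIdealPart U (q + 1), ∃ η ∈ ⋀[S]^q V, x + ExteriorAlgebra.ι S v * η = w := by
  simp only [exteriorIdealPart, Submodule.map_sup, Submodule.map_span, Set.image_singleton,
    Submodule.sup_mul, Submodule.mem_sup, Submodule.mem_span_singleton_mul,
    exists_exists_and_eq_and]

lemma ι_mul_mem_exteriorIdealPart (v : V) (hw : w ∈ exteriorIdealPart U q) :
    ExteriorAlgebra.ι S v * w ∈ exteriorIdealPart U (q + 1) := by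
  cases q with
  | zero =>
    rw [(Submodule.mem_bot S).1 hw, mul_zero]
    exact Submodule.zero_mem _
  | succ q =>
    suffices h : exteriorIdealPart U (q + 1) ≤
        (exteriorIdealPart U (q + 2)).comap (LinearMap.mulLeft S (ExteriorAlgebra.ι S v)) from
      h hw
    refine Submodule.mul_le.2 ?_
    rintro _ ⟨u, hu, rfl⟩ η hη
    rw [Submodule.mem_comap, LinearMap.mulLeft_apply, ι_mul_ι_mul_swap]
    exact Submodule.neg_mem _ (Submodule.mul_mem_mul ⟨u, hu, rfl⟩ (ι_mul_mem_exteriorPower v hη))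

lemma ι_mul_mem_of_mem_sup_span_singleton (v : V)
    (hw : w ∈ exteriorIdealPart (U ⊔ Submodule.span S {v}) q) :
    ExteriorAlgebra.ι S v * w ∈ exteriorIdealPart U (q + 1) := by
  cases q with
  | zero =>
    rw [(Submodule.mem_bot S).1 hw, mul_zero]
    exact Submodule.zero_mem _
  | succ q =>
    obtain ⟨x, hx, η, -, rfl⟩ := (mem_exteriorIdealPart_sup_span_singleton U v).1 hw
    rw [mul_add, ι_mul_ι_mul_self, add_zero]
    exact ι_mul_mem_exteriorIdealPart v hx

lemma interiorProduct_mem_exteriorIdealPart {φ : Module.Dual S V} (hφ : U ≤ φ.ker)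
    (hw : w ∈ exteriorIdealPart U (q + 1)) : interiorProduct φ w ∈ exteriorIdealPart U q := by
  suffices h : exteriorIdealPart U (q + 1) ≤
      (exteriorIdealPart U q).comap (interiorProduct φ) from h hw
  refine Submodule.mul_le.2 ?_
  rintro _ ⟨u, hu, rfl⟩ η hη
  rw [Submodule.mem_comap, interiorProduct_ι_mul, LinearMap.mem_ker.1 (hφ hu), zero_smul, zero_sub]
  cases q with
  | zero =>
    rw [interiorProduct_eq_zero_of_mem_zero φ hη, mul_zero]
    exact Submodule.neg_mem _ (Submodule.zero_mem _)
  | succ q =>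
    exact Submodule.neg_mem _
      (Submodule.mul_mem_mul ⟨u, hu, rfl⟩ (interiorProduct_mem_exteriorPower φ hη))

lemma smul_mem_of_ι_mul_mem {𝔟 : Ideal S} {φ : Module.Dual S V} {v : V} (hφ : U ≤ φ.ker)
    (hw : w ∈ ⋀[S]^q V)
    (h : ExteriorAlgebra.ι S v * w ∈ exteriorIdealPart U (q + 1) ⊔ 𝔟 • ⋀[S]^(q + 1) V) :
    φ v • w ∈ exteriorIdealPart (U ⊔ Submodule.span S {v}) q ⊔ 𝔟 • ⋀[S]^q V := by
  obtain ⟨x, hx, b, hb, hxb⟩ := Submodule.mem_sup.1 h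
  have hcontract : φ v • w = interiorProduct φ x + interiorProduct φ b +
      ExteriorAlgebra.ι S v * interiorProduct φ w := by
    rw [← map_add, hxb, interiorProduct_ι_mul, sub_add_cancel]
  rw [hcontract]
  refine Submodule.add_mem _ (Submodule.add_mem _ (Submodule.mem_sup_left ?_)
    (Submodule.mem_sup_right (interiorProduct_mem_smul_exteriorPower φ hb)))
    (Submodule.mem_sup_left ?_)
  · exact exteriorIdealPart_mono le_sup_left _ (interiorProduct_mem_exteriorIdealPart hφ hx)
  · cases q with
    | zero =>
      rw [interiorProduct_eq_zero_of_mem_zero φ hw, mul_zero]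
      exact Submodule.zero_mem _
    | succ q =>
      exact Submodule.mul_mem_mul ⟨v, Submodule.mem_sup_right (Submodule.mem_span_singleton_self v),
        rfl⟩ (interiorProduct_mem_exteriorPower φ hw)

end ExteriorIdeal

section Division

open RingTheory.Sequence
open scoped Pointwise

variable {S V κ : Type*} [CommRing S] [AddCommGroup V] [Module S V]

lemma isWeaklyRegular_quotient_cons_iff {𝔟 : Ideal S} {a : S} {l : List S} :
    IsWeaklyRegular (S ⧸ 𝔟) (a :: l) ↔
      IsSMulRegular (S ⧸ 𝔟) a ∧ IsWeaklyRegular (S ⧸ 𝔟 ⊔ Ideal.span {a}) l := by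
  have hspan : a • (⊤ : Submodule S (S ⧸ 𝔟)) =
      Submodule.map (Submodule.mkQ 𝔟) (Ideal.span {a}) := by
    rw [← Ideal.mul_top (Ideal.span {a}), ← smul_eq_mul, Submodule.ideal_span_singleton_smul,
      Submodule.map_pointwise_smul, Submodule.map_top, Submodule.range_mkQ]
  have e : QuotSMulTop a (S ⧸ 𝔟) ≃ₗ[S] S ⧸ 𝔟 ⊔ Ideal.span {a} :=
    Submodule.quotEquivOfEq _ _ hspan ≪≫ₗ Submodule.quotientQuotientEquivQuotientSup _ _
  rw [isWeaklyRegular_cons_iff, e.isWeaklyRegular_congr]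

lemma isSMulRegular_quotient_smul_top {M : Type*} [AddCommGroup M] [Module S M] [Module.Flat S M]
    {𝔟 : Ideal S} {a : S} (ha : IsSMulRegular (S ⧸ 𝔟) a) :
    IsSMulRegular (M ⧸ 𝔟 • (⊤ : Submodule S M)) a :=
  ((TensorProduct.quotTensorEquivQuotSMul M 𝔟).isSMulRegular_congr a).1 (ha.rTensor M)

lemma mem_smul_of_smul_mem_smul {M : Type*} [AddCommGroup M] [Module S M] {N : Submodule S M}
    [Module.Flat S N] {𝔟 : Ideal S} {a : S} (ha : IsSMulRegular (S ⧸ 𝔟) a) {w : M} (hw : w ∈ N)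
    (h : a • w ∈ 𝔟 • N) : w ∈ 𝔟 • N := by
  rw [← Submodule.mem_smul_top_iff 𝔟 N ⟨w, hw⟩]
  exact mem_of_isSMulRegular_quotient_of_smul_mem (isSMulRegular_quotient_smul_top ha)
    ((Submodule.mem_smul_top_iff 𝔟 N (a • ⟨w, hw⟩)).2 h)

/-- A scalar `δ` such that every member `ρ i` of the family admits a functional with value `δ` at
`ρ i` which kills all the other members. By Cramer's rule the maximal minors of a matrix have this
property with respect to its rows. -/
def HasDualFamily (ρ : κ → V) (δ : S) : Prop :=
  ∀ i, ∃ φ : Module.Dual S V, φ (ρ i) = δ ∧ ∀ j ≠ i, φ (ρ j) = 0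

/-- The relative de Rham–Saito division property in degree `q`: modulo an ideal `𝔟` and the
`ρ j` with `j ∈ T`, a `q`-form killed by multiplication with `ρ i` is divisible by `ρ i`, provided
that there is a sequence of length `q + 1` regular modulo `𝔟` of scalars having dual families. -/
def DivisionProperty (ρ : κ → V) (q : ℕ) : Prop :=
  ∀ (𝔟 : Ideal S) (l : List S), l.length = q + 1 → (∀ a ∈ l, HasDualFamily ρ a) →
    IsWeaklyRegular (S ⧸ 𝔟) l → ∀ (T : Finset κ), ∀ i ∉ T, ∀ w ∈ ⋀[S]^q V,
    ExteriorAlgebra.ι S (ρ i) * w ∈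
      exteriorIdealPart (Submodule.span S (ρ '' T)) (q + 1) ⊔ 𝔟 • ⋀[S]^(q + 1) V →
    w ∈ exteriorIdealPart (Submodule.span S (ρ '' T) ⊔ Submodule.span S {ρ i}) q ⊔ 𝔟 • ⋀[S]^q V

variable {ρ : κ → V} {𝔟 : Ideal S} {q : ℕ}

lemma span_image_insert [DecidableEq κ] (ρ : κ → V) (T : Finset κ) (i : κ) :
    Submodule.span S (ρ '' ↑(insert i T)) = Submodule.span S (ρ '' T) ⊔ Submodule.span S {ρ i} := by
  rw [Finset.coe_insert, Set.image_insert_eq, Submodule.span_insert, sup_comm]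

lemma HasDualFamily.smul_mem_of_ι_mul_mem {δ : S} (hδ : HasDualFamily ρ δ) {T : Finset κ} {i : κ}
    (hi : i ∉ T) {w : ExteriorAlgebra S V} (hw : w ∈ ⋀[S]^q V)
    (h : ExteriorAlgebra.ι S (ρ i) * w ∈
      exteriorIdealPart (Submodule.span S (ρ '' T)) (q + 1) ⊔ 𝔟 • ⋀[S]^(q + 1) V) :
    δ • w ∈
      exteriorIdealPart (Submodule.span S (ρ '' T) ⊔ Submodule.span S {ρ i}) q ⊔ 𝔟 • ⋀[S]^q V := by
  obtain ⟨φ, rfl, hφ⟩ := hδ i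
  refine _root_.smul_mem_of_ι_mul_mem (Submodule.span_le.2 ?_) hw h
  rintro _ ⟨j, hj, rfl⟩
  exact hφ j fun hji => hi (hji ▸ hj)

lemma DivisionProperty.exists_sub_smul_mem (hdiv : DivisionProperty (S := S) ρ q) {a : S}
    {l : List S} (hl : l.length = q + 1) (hdual : ∀ a ∈ l, HasDualFamily ρ a)
    (hreg : IsWeaklyRegular (S ⧸ 𝔟 ⊔ Ideal.span {a}) l) (T : Finset κ) {w : ExteriorAlgebra S V}
    (hw : w ∈ exteriorIdealPart (Submodule.span S (ρ '' T)) (q + 1))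
    (hwb : w ∈ (𝔟 ⊔ Ideal.span {a}) • ⋀[S]^(q + 1) V) :
    ∃ w' ∈ exteriorIdealPart (Submodule.span S (ρ '' T)) (q + 1),
      w - a • w' ∈ 𝔟 • ⋀[S]^(q + 1) V := by
  classical
  induction T using Finset.induction_on generalizing w with
  | empty =>
    rw [Finset.coe_empty, Set.image_empty, Submodule.span_empty, exteriorIdealPart_bot,
      Submodule.mem_bot] at hw
    exact ⟨0, Submodule.zero_mem _, by simp [hw]⟩
  | insert i T hi ih =>
    simp only [span_image_insert] at hw ⊢
    obtain ⟨x, hx, η, hη, rfl⟩ := (mem_exteriorIdealPart_sup_span_singleton _ _).1 hw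
    have hη' := hdiv _ l hl hdual hreg T i hi η hη <| by
      rw [← add_sub_cancel_left x (ExteriorAlgebra.ι S (ρ i) * η)]
      exact Submodule.sub_mem _ (Submodule.mem_sup_right hwb) (Submodule.mem_sup_left hx)
    obtain ⟨y, hy, c, hc, rfl⟩ := Submodule.mem_sup.1 hη'
    rw [Submodule.sup_smul, Submodule.ideal_span_singleton_smul] at hc
    obtain ⟨b, hb, _, ⟨ζ, hζ, rfl⟩, rfl⟩ := Submodule.mem_sup.1 hc
    replace hζ : ζ ∈ ⋀[S]^q V := hζ
    have hb' := ι_mul_mem_smul_exteriorPower (ρ i) hb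
    have hsplit : x + ExteriorAlgebra.ι S (ρ i) * (y + (b + a • ζ)) =
        x + ExteriorAlgebra.ι S (ρ i) * y +
          (ExteriorAlgebra.ι S (ρ i) * b + a • (ExteriorAlgebra.ι S (ρ i) * ζ)) := by
      rw [mul_add, mul_add, mul_smul_comm, add_assoc]
    obtain ⟨w', hw', hww'⟩ := ih
      (Submodule.add_mem _ hx (ι_mul_mem_of_mem_sup_span_singleton _ hy)) <| by
        rw [eq_sub_of_add_eq hsplit.symm]
        exact Submodule.sub_mem _ hwb (Submodule.add_mem _
          (Submodule.smul_mono_left le_sup_left hb')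
          (Submodule.smul_mem_smul (Ideal.mem_sup_right (Ideal.mem_span_singleton_self a))
            (ι_mul_mem_exteriorPower _ hζ)))
    refine ⟨w' + ExteriorAlgebra.ι S (ρ i) * ζ,
      (mem_exteriorIdealPart_sup_span_singleton _ _).2 ⟨w', hw', ζ, hζ, rfl⟩, ?_⟩
    convert Submodule.add_mem _ hww' hb' using 1
    exact (congrArg (· - _) hsplit).trans (by rw [smul_add]; abel)

variable [Module.Free S V]

lemma mem_of_smul_mem_of_isWeaklyRegular (hdiv : ∀ q' < q, DivisionProperty (S := S) ρ q')
    {a : S} {l : List S} (hl : l.length = q) (hdual : ∀ a ∈ l, HasDualFamily ρ a)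
    (hreg : IsWeaklyRegular (S ⧸ 𝔟) (a :: l)) {T : Finset κ} {w : ExteriorAlgebra S V}
    (hw : w ∈ ⋀[S]^q V)
    (h : a • w ∈ exteriorIdealPart (Submodule.span S (ρ '' T)) q ⊔ 𝔟 • ⋀[S]^q V) :
    w ∈ exteriorIdealPart (Submodule.span S (ρ '' T)) q ⊔ 𝔟 • ⋀[S]^q V := by
  rw [isWeaklyRegular_quotient_cons_iff] at hreg
  cases q with
  | zero =>
    rw [exteriorIdealPart, bot_sup_eq] at h ⊢
    exact mem_smul_of_smul_mem_smul hreg.1 hw h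
  | succ q =>
    obtain ⟨x, hx, b, hb, hxb⟩ := Submodule.mem_sup.1 h
    have hxa : x ∈ (𝔟 ⊔ Ideal.span {a}) • ⋀[S]^(q + 1) V := by
      rw [eq_sub_of_add_eq hxb]
      exact Submodule.sub_mem _
        (Submodule.smul_mem_smul (Ideal.mem_sup_right (Ideal.mem_span_singleton_self a)) hw)
        (Submodule.smul_mono_left le_sup_left hb)
    obtain ⟨x', hx', hxx'⟩ :=
      (hdiv q q.lt_succ_self).exists_sub_smul_mem hl hdual hreg.2 T hx hxa
    have hwx' : w - x' ∈ 𝔟 • ⋀[S]^(q + 1) V := by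
      refine mem_smul_of_smul_mem_smul hreg.1
        (Submodule.sub_mem _ hw (exteriorIdealPart_le_exteriorPower _ _ hx')) ?_
      have hsub : a • (w - x') = x - a • x' + b := by
        rw [smul_sub, ← hxb]
        abel
      rw [hsub]
      exact Submodule.add_mem _ hxx' hb
    rw [← add_sub_cancel x' w]
    exact Submodule.add_mem _ (Submodule.mem_sup_left hx') (Submodule.mem_sup_right hwx')

theorem divisionProperty (ρ : κ → V) (q : ℕ) : DivisionProperty (S := S) ρ q := by
  classical
  induction q using Nat.strong_induction_on with
  | _ q ih =>
    intro 𝔟 l hl hdual hreg T i hi w hw h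
    obtain ⟨a, l, rfl⟩ := List.exists_cons_of_length_eq_add_one hl
    obtain ⟨ha, hdual⟩ := List.forall_mem_cons.1 hdual
    rw [← span_image_insert]
    refine mem_of_smul_mem_of_isWeaklyRegular ih (Nat.succ_injective hl) hdual hreg hw ?_
    rw [span_image_insert]
    exact ha.smul_mem_of_ι_mul_mem hi hw h

end Division

section Wedge

open RingTheory.Sequence

variable {S V κ : Type*} [CommRing S] [AddCommGroup V] [Module S V] {ρ : κ → V} {t : List κ}
  {q : ℕ} {w : ExteriorAlgebra S V}

/-- The exterior product `ρ i₁ ∧ ⋯ ∧ ρ iᵣ` along a list of indices. -/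
def wedge (ρ : κ → V) (t : List κ) : ExteriorAlgebra S V :=
  (t.map fun i => ExteriorAlgebra.ι S (ρ i)).prod

lemma wedge_cons_mul (ρ : κ → V) (i : κ) (t : List κ) (w : ExteriorAlgebra S V) :
    wedge ρ (i :: t) * w = ExteriorAlgebra.ι S (ρ i) * (wedge ρ t * w) := by
  rw [wedge, List.map_cons, List.prod_cons, mul_assoc, ← wedge]

lemma wedge_mul_mem_exteriorPower (ρ : κ → V) (t : List κ) (hw : w ∈ ⋀[S]^q V) :
    wedge ρ t * w ∈ ⋀[S]^(q + t.length) V := by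
  induction t with
  | nil => simpa [wedge] using hw
  | cons i t ih =>
    rw [wedge_cons_mul]
    exact ι_mul_mem_exteriorPower _ ih

lemma wedge_mul_ι_mul (ρ : κ → V) (t : List κ) (v : V) (w : ExteriorAlgebra S V) :
    wedge ρ t * (ExteriorAlgebra.ι S v * w) =
      (-1 : S) ^ t.length • (ExteriorAlgebra.ι S v * (wedge ρ t * w)) := by
  induction t with
  | nil => simp [wedge]
  | cons i t ih =>
    rw [wedge_cons_mul, wedge_cons_mul, ih, mul_smul_comm, ι_mul_ι_mul_swap, List.length_cons,
      pow_succ, mul_neg_one, neg_smul, smul_neg]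

lemma wedge_mul_ι_mul_eq_zero {i : κ} (hi : i ∈ t) (w : ExteriorAlgebra S V) :
    wedge ρ t * (ExteriorAlgebra.ι S (ρ i) * w) = 0 := by
  induction t with
  | nil => cases hi
  | cons j t ih =>
    rw [wedge_cons_mul]
    rcases List.mem_cons.1 hi with rfl | hi
    · rw [wedge_mul_ι_mul, mul_smul_comm, ι_mul_ι_mul_self, smul_zero]
    · rw [ih hi, mul_zero]

lemma wedge_mul_eq_zero_of_mem_exteriorIdealPart
    (hw : w ∈ exteriorIdealPart (Submodule.span S (ρ '' {i | i ∈ t})) q) : wedge ρ t * w = 0 := by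
  cases q with
  | zero => rw [(Submodule.mem_bot S).1 hw, mul_zero]
  | succ q =>
    suffices h : exteriorIdealPart (Submodule.span S (ρ '' {i | i ∈ t})) (q + 1) ≤
        (LinearMap.mulLeft S (wedge ρ t)).ker from h hw
    rw [exteriorIdealPart, Submodule.map_span, Submodule.mul_le]
    intro u hu η _
    induction hu using Submodule.span_induction with
    | mem u hu =>
      obtain ⟨_, ⟨i, hi, rfl⟩, rfl⟩ := hu
      exact wedge_mul_ι_mul_eq_zero hi η
    | zero => simp
    | add u u' _ _ hu hu' =>
      rw [add_mul]
      exact Submodule.add_mem _ hu hu'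
    | smul c u _ hu =>
      rw [smul_mul_assoc]
      exact Submodule.smul_mem _ _ hu

lemma HasDualFamily.pow_smul_mem_of_wedge_mul_mem {𝔟 : Ideal S} {δ : S} [DecidableEq κ]
    (hδ : HasDualFamily ρ δ) (ht : t.Nodup) {T : Finset κ} (htT : ∀ i ∈ t, i ∉ T)
    (hw : w ∈ ⋀[S]^q V)
    (h : wedge ρ t * w ∈ exteriorIdealPart (Submodule.span S (ρ '' T)) (q + t.length) ⊔
      𝔟 • ⋀[S]^(q + t.length) V) :
    δ ^ t.length • w ∈
      exteriorIdealPart (Submodule.span S (ρ '' ↑(T ∪ t.toFinset))) q ⊔ 𝔟 • ⋀[S]^q V := by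
  induction t generalizing T w with
  | nil => simpa [wedge] using h
  | cons i t ih =>
    rw [List.nodup_cons] at ht
    rw [List.forall_mem_cons] at htT
    rw [wedge_cons_mul] at h
    have hi := hδ.smul_mem_of_ι_mul_mem htT.1 (wedge_mul_mem_exteriorPower ρ t hw) h
    rw [← span_image_insert, ← mul_smul_comm] at hi
    rw [List.length_cons, pow_succ, mul_smul, List.toFinset_cons, Finset.union_insert,
      ← Finset.insert_union]
    refine ih ht.2 (fun j hj => ?_) (Submodule.smul_mem _ _ hw) hi
    rw [Finset.mem_insert, not_or]
    exact ⟨fun hji => ht.1 (hji ▸ hj), htT.2 j hj⟩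

theorem mem_map_wedge_of_smul_mem [Module.Free S V] {p : ℕ} (ht : t.Nodup) {f : S} {l : List S}
    (hl : l.length = p + 1) (hdual : ∀ a ∈ l, HasDualFamily ρ a)
    (hreg : IsWeaklyRegular S (f :: l)) {x : ExteriorAlgebra S V}
    (hx : x ∈ ⋀[S]^(p + t.length) V)
    (h : f • x ∈ (⋀[S]^p V).map (LinearMap.mulLeft S (wedge ρ t))) :
    x ∈ (⋀[S]^p V).map (LinearMap.mulLeft S (wedge ρ t)) := by
  classical
  obtain ⟨w, hw, hwx⟩ := h
  rw [← (Submodule.quotEquivOfEqBot (⊥ : Ideal S) rfl).isWeaklyRegular_congr,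
    isWeaklyRegular_quotient_cons_iff, bot_sup_eq] at hreg
  obtain ⟨hf, hreg⟩ := hreg
  obtain ⟨a, l, rfl⟩ := List.exists_cons_of_length_eq_add_one hl
  obtain ⟨ha, hdual⟩ := List.forall_mem_cons.1 hdual
  have hpow := ha.pow_smul_mem_of_wedge_mul_mem (𝔟 := Ideal.span {f}) (T := ∅) ht (by simp) hw <| by
    refine Submodule.mem_sup_right ?_
    rw [show wedge ρ t * w = f • x from hwx]
    exact Submodule.smul_mem_smul (Ideal.mem_span_singleton_self f) hx
  have hmem : w ∈ exteriorIdealPart (Submodule.span S (ρ '' {i | i ∈ t})) p ⊔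
      Ideal.span {f} • ⋀[S]^p V := by
    rw [Finset.empty_union] at hpow
    rw [← List.coe_toFinset]
    generalize t.length = K at hpow
    induction K with
    | zero => simpa using hpow
    | succ K ih =>
      rw [pow_succ', mul_smul] at hpow
      exact ih (mem_of_smul_mem_of_isWeaklyRegular (fun q _ => divisionProperty ρ q)
        (Nat.succ_injective hl) hdual hreg (Submodule.smul_mem _ _ hw) hpow)
  rw [Submodule.ideal_span_singleton_smul] at hmem
  obtain ⟨y, hy, _, ⟨w', hw', rfl⟩, rfl⟩ := Submodule.mem_sup.1 hmem
  refine ⟨w', hw', ?_⟩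
  have hmul : f • (wedge ρ t * w') = f • x := by
    rw [← hwx, LinearMap.mulLeft_apply, mul_add, wedge_mul_eq_zero_of_mem_exteriorIdealPart hy,
      zero_add]
    exact (mul_smul_comm f _ w').symm
  have hsub := mem_smul_of_smul_mem_smul (𝔟 := ⊥) hf
    (Submodule.sub_mem _ (wedge_mul_mem_exteriorPower ρ t hw') hx)
    (by rw [smul_sub, hmul, sub_self]; exact Submodule.zero_mem _)
  rw [Submodule.bot_smul, Submodule.mem_bot] at hsub
  exact sub_eq_zero.1 hsub

end Wedge

section TopForm

variable {S V κ : Type*} [CommRing S] [AddCommGroup V] [Module S V] {N : ℕ}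
  (b : Module.Basis (Fin N) S V) {ρ : κ → V} {t : List κ} {p : ℕ} {w : ExteriorAlgebra S V}

/-- The coordinate of the top-degree part with respect to the volume element of a basis. -/
def topForm : ExteriorAlgebra S V →ₗ[S] S :=
  ExteriorAlgebra.liftAlternating (Pi.single N b.det)

lemma topForm_ιMulti (v : Fin N → V) : topForm b (ExteriorAlgebra.ιMulti S N v) = b.det v := by
  rw [topForm, ExteriorAlgebra.liftAlternating_apply_ιMulti, Pi.single_eq_same]

lemma ιMulti_eq_det_smul (v : Fin N → V) :
    ExteriorAlgebra.ιMulti S N v = b.det v • ExteriorAlgebra.ιMulti S N b := by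
  suffices h : ExteriorAlgebra.ιMulti S N =
      (LinearMap.toSpanSingleton S _ (ExteriorAlgebra.ιMulti S N b)).compAlternatingMap b.det from
    DFunLike.congr_fun h v
  refine Module.Basis.ext_alternating b fun v hv => ?_
  have hperm : (fun i => b (v i)) = b ∘ Equiv.ofBijective v (Finite.injective_iff_bijective.1 hv) :=
    rfl
  rw [hperm, AlternatingMap.map_perm, AlternatingMap.map_perm,
    LinearMap.compAlternatingMap_apply, b.det_self, LinearMap.toSpanSingleton_apply, one_smul]

lemma eq_topForm_smul (hw : w ∈ ⋀[S]^N V) :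
    w = topForm b w • ExteriorAlgebra.ιMulti S N b := by
  rw [← ExteriorAlgebra.ιMulti_span_fixedDegree] at hw
  induction hw using Submodule.span_induction with
  | mem w hw =>
    obtain ⟨v, rfl⟩ := hw
    rw [topForm_ιMulti, ← ιMulti_eq_det_smul]
  | zero => simp
  | add w w' _ _ hw hw' => rw [map_add, add_smul, ← hw, ← hw']
  | smul c w _ hw => rw [map_smul, smul_eq_mul, mul_smul, ← hw]

lemma eq_zero_of_mem_exteriorPower_succ (b : Module.Basis (Fin N) S V)
    (hw : w ∈ ⋀[S]^(N + 1) V) : w = 0 := by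
  have hzero : (ExteriorAlgebra.ιMulti S (N + 1) : V [⋀^Fin (N + 1)]→ₗ[S] _) = 0 :=
    Module.Basis.ext_alternating b fun v hv => by
      simpa using Fintype.card_le_of_injective v hv
  rw [← ExteriorAlgebra.ιMulti_span_fixedDegree, hzero] at hw
  have hle : Submodule.span S (Set.range (0 : V [⋀^Fin (N + 1)]→ₗ[S] ExteriorAlgebra S V)) ≤ ⊥ :=
    Submodule.span_le.2 (by rintro _ ⟨v, rfl⟩; rfl)
  exact (Submodule.mem_bot S).1 (hle hw)

lemma wedge_eq_ιMulti (ρ : κ → V) (t : List κ) :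
    wedge ρ t = ExteriorAlgebra.ιMulti S t.length (ρ ∘ t.get) := by
  rw [wedge, ExteriorAlgebra.ιMulti_apply]
  conv_lhs => rw [← List.ofFn_get t, List.map_ofFn]
  rfl

lemma isUnit_topForm_wedge (v : Module.Basis κ S V) (ht : t.Nodup) (hcov : ∀ i, i ∈ t)
    (hN : t.length = N) : IsUnit (topForm b (wedge v t)) := by
  classical
  subst hN
  have hv : v ∘ t.get = v.reindex (ht.getEquivOfForallMemList t hcov).symm := by
    ext i
    simp
  rw [wedge_eq_ιMulti, topForm_ιMulti, hv]
  exact b.isUnit_det _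

lemma wedge_append_mul (ρ : κ → V) (t t' : List κ) (w : ExteriorAlgebra S V) :
    wedge ρ (t ++ t') * w = wedge ρ t * (wedge ρ t' * w) := by
  rw [wedge, List.map_append, List.prod_append, mul_assoc, ← wedge, ← wedge]

lemma ι_mul_wedge_mul_eq_zero {i : κ} (hi : i ∈ t) (w : ExteriorAlgebra S V) :
    ExteriorAlgebra.ι S (ρ i) * (wedge ρ t * w) = 0 := by
  have h := wedge_mul_ι_mul ρ t (ρ i) w
  rw [wedge_mul_ι_mul_eq_zero hi] at h
  exact ((isUnit_one.neg.pow _).smul_eq_zero).1 h.symm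

lemma interiorProduct_wedge_mul {φ : Module.Dual S V} (hφ : ∀ i ∈ t, φ (ρ i) = 0)
    (w : ExteriorAlgebra S V) :
    interiorProduct φ (wedge ρ t * w) =
      (-1 : S) ^ t.length • (wedge ρ t * interiorProduct φ w) := by
  induction t with
  | nil => simp [wedge]
  | cons i t ih =>
    obtain ⟨hi, ht⟩ := List.forall_mem_cons.1 hφ
    rw [wedge_cons_mul, interiorProduct_ι_mul, hi, zero_smul, zero_sub, ih ht, mul_smul_comm,
      ← wedge_cons_mul, List.length_cons, pow_succ, mul_neg_one, neg_smul]

end TopForm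

section MaximalMinors

open RingTheory.Sequence

variable {S V κ : Type*} [CommRing S] [AddCommGroup V] [Module S V] {N : ℕ}
  (b : Module.Basis (Fin N) S V) {ρ : κ → V} {t : List κ} {p : ℕ}

/-- The ideal of maximal minors of the matrix with rows `ρ i`, `i ∈ t`, provided that `p` is the
difference between the rank of `V` and the number of rows: completing the rows by `p` vectors of
the basis `b` and taking determinants gives the minors up to sign. -/
def maximalMinors (b : Module.Basis (Fin N) S V) (ρ : κ → V) (t : List κ) (p : ℕ) : Ideal S :=
  (⋀[S]^p V).map (topForm b ∘ₗ LinearMap.mulLeft S (wedge ρ t))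

variable {b}

lemma mem_maximalMinors {u : S} :
    u ∈ maximalMinors b ρ t p ↔ ∃ w ∈ ⋀[S]^p V, topForm b (wedge ρ t * w) = u :=
  Iff.rfl

lemma hasDualFamily_of_mem_maximalMinors (ht : t.Nodup) (hcov : ∀ i, i ∈ t) {u : S}
    (hu : u ∈ maximalMinors b ρ t p) : HasDualFamily ρ u := by
  obtain ⟨w, -, rfl⟩ := mem_maximalMinors.1 hu
  intro i
  obtain ⟨s, s', rfl⟩ := List.append_of_mem (hcov i)
  refine ⟨topForm b ∘ₗ LinearMap.mulLeft S (wedge ρ s) ∘ₗ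
    LinearMap.mulRight S (wedge ρ s' * w) ∘ₗ ExteriorAlgebra.ι S, ?_, fun j hj => ?_⟩
  · rw [wedge_append_mul, wedge_cons_mul]
    rfl
  · simp only [LinearMap.comp_apply, LinearMap.mulLeft_apply, LinearMap.mulRight_apply]
    rcases List.mem_append.1 (hcov j) with hs | hs'
    · rw [wedge_mul_ι_mul_eq_zero hs, map_zero]
    · rw [ι_mul_wedge_mul_eq_zero ((List.mem_cons.1 hs').resolve_left hj), mul_zero, map_zero]

theorem mem_maximalMinors_of_mul_mem (ht : t.Nodup) (hcov : ∀ i, i ∈ t) (hN : p + t.length = N)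
    {f : S} {l : List S} (hl : l.length = p + 1) (hlI : ∀ a ∈ l, a ∈ maximalMinors b ρ t p)
    (hreg : IsWeaklyRegular S (f :: l)) {u : S} (h : f * u ∈ maximalMinors b ρ t p) :
    u ∈ maximalMinors b ρ t p := by
  have := Module.Free.of_basis b
  have hdual : ∀ a ∈ l, HasDualFamily ρ a := fun a ha =>
    hasDualFamily_of_mem_maximalMinors ht hcov (hlI a ha)
  subst hN
  obtain ⟨w, hw, hwu⟩ := mem_maximalMinors.1 h
  have htop : u • ExteriorAlgebra.ιMulti S (p + t.length) b ∈ ⋀[S]^(p + t.length) V :=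
    Submodule.smul_mem _ u (ExteriorAlgebra.ιMulti_range S _ ⟨b, rfl⟩)
  have hfu : f • u • ExteriorAlgebra.ιMulti S (p + t.length) b ∈
      (⋀[S]^p V).map (LinearMap.mulLeft S (wedge ρ t)) := by
    refine ⟨w, hw, ?_⟩
    rw [smul_smul, ← hwu, LinearMap.mulLeft_apply]
    exact eq_topForm_smul b (wedge_mul_mem_exteriorPower ρ t hw)
  obtain ⟨w', hw', hwu'⟩ := mem_map_wedge_of_smul_mem ht hl hdual hreg htop hfu
  refine mem_maximalMinors.2 ⟨w', hw', ?_⟩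
  rw [show wedge ρ t * w' = _ from hwu', map_smul, topForm_ιMulti, b.det_self, smul_eq_mul, mul_one]

lemma topForm_ι_sub_mul_mem_maximalMinors {i j : κ} (hN : p + (i :: j :: t).length = N)
    {ψ : Module.Dual S V} (hψ : ∀ k ∈ t, ψ (ρ k) = 0) {w : ExteriorAlgebra S V}
    (hw : w ∈ ⋀[S]^(p + 1) V) :
    topForm b (ExteriorAlgebra.ι S (ψ (ρ j) • ρ i - ψ (ρ i) • ρ j) * (wedge ρ t * w)) ∈
      maximalMinors b ρ (i :: j :: t) p := by
  have hdeg : p + 1 + (i :: j :: t).length = N + 1 := by omega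
  have hzero : wedge ρ (i :: j :: t) * w = 0 :=
    eq_zero_of_mem_exteriorPower_succ b (hdeg ▸ wedge_mul_mem_exteriorPower ρ (i :: j :: t) hw)
  have hcontract := congrArg (interiorProduct ψ) hzero
  simp only [wedge_cons_mul, interiorProduct_ι_mul, interiorProduct_wedge_mul hψ, map_zero,
    mul_sub, mul_smul_comm] at hcontract
  have hsign : ExteriorAlgebra.ι S (ψ (ρ j) • ρ i - ψ (ρ i) • ρ j) * (wedge ρ t * w) =
      (-1 : S) ^ t.length • (wedge ρ (i :: j :: t) * interiorProduct ψ w) := by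
    simp only [map_sub, map_smul, sub_mul, smul_mul_assoc, wedge_cons_mul]
    rw [← sub_eq_zero, ← neg_eq_zero, ← hcontract]
    abel
  rw [hsign, map_smul]
  exact Ideal.mul_mem_left _ _ ⟨_, interiorProduct_mem_exteriorPower ψ hw, rfl⟩

lemma mul_topForm_wedge_mul_mem {I : Ideal S} {v : V}
    (hI : ∀ w ∈ ⋀[S]^p V, topForm b (ExteriorAlgebra.ι S v * (wedge ρ t * w)) ∈ I)
    (hN : p + 1 + t.length = N) {ψ : Module.Dual S V} (hψ : ∀ k ∈ t, ψ (ρ k) = 0)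
    {w : ExteriorAlgebra S V} (hw : w ∈ ⋀[S]^(p + 1) V) :
    ψ v * topForm b (wedge ρ t * w) ∈ I := by
  have hzero : ExteriorAlgebra.ι S v * (wedge ρ t * w) = 0 :=
    eq_zero_of_mem_exteriorPower_succ b
      (hN ▸ ι_mul_mem_exteriorPower v (wedge_mul_mem_exteriorPower ρ t hw))
  have hcontract := congrArg (interiorProduct ψ) hzero
  rw [interiorProduct_ι_mul, interiorProduct_wedge_mul hψ, map_zero, sub_eq_zero] at hcontract
  rw [← smul_eq_mul, ← map_smul, hcontract, mul_smul_comm, map_smul]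
  exact Ideal.mul_mem_left _ _ (hI _ (interiorProduct_mem_exteriorPower ψ hw))

lemma wedge_mul_eq_prod_smul {v : κ → V} {a : κ → S} {w : ExteriorAlgebra S V}
    (h : ∀ i ∈ t, ExteriorAlgebra.ι S (ρ i - a i • v i) * w = 0) :
    wedge ρ t * w = (t.map a).prod • (wedge v t * w) := by
  induction t with
  | nil => simp [wedge]
  | cons i t ih =>
    obtain ⟨hi, ht⟩ := List.forall_mem_cons.1 h
    have hrow : ExteriorAlgebra.ι S (ρ i) * w = a i • (ExteriorAlgebra.ι S (v i) * w) := by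
      rwa [map_sub, sub_mul, sub_eq_zero, map_smul, smul_mul_assoc] at hi
    have hcomm : ∀ u : V, ExteriorAlgebra.ι S u * (wedge v t * w) =
        (-1 : S) ^ t.length • (wedge v t * (ExteriorAlgebra.ι S u * w)) := fun u => by
      rw [wedge_mul_ι_mul, smul_smul, ← mul_pow, neg_mul_neg, one_mul, one_pow, one_smul]
    rw [wedge_cons_mul, wedge_cons_mul, ih ht, mul_smul_comm, hcomm, hrow, mul_smul_comm,
      smul_comm _ (a i), ← hcomm, smul_smul, List.map_cons, List.prod_cons, mul_comm]

end MaximalMinors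

section Dependence

variable {L : Type*} [Field L]

lemma exists_linearIndependent_append {E ι : Type*} [AddCommGroup E] [Module L E]
    [FiniteDimensional L E] {g : ℕ} {v : Fin g → E} (hv : LinearIndependent L v) {u : ι → E}
    (hu : Submodule.span L (Set.range u) = ⊤) {p : ℕ} (hp : g + p ≤ Module.finrank L E) :
    ∃ c : Fin p → ι, LinearIndependent L (Fin.append v (u ∘ c)) := by
  induction p with
  | zero =>
    refine ⟨Fin.elim0, ?_⟩
    rwa [Fin.append_right_nil _ _ rfl]
  | succ p ih =>
    obtain ⟨c, hc⟩ := ih (by omega)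
    obtain ⟨k, hk⟩ : ∃ k, u k ∉ Submodule.span L (Set.range (Fin.append v (u ∘ c))) := by
      by_contra! hspan
      have htop : Submodule.span L (Set.range (Fin.append v (u ∘ c))) = ⊤ :=
        top_unique (hu.symm.trans_le (Submodule.span_le.2 (Set.range_subset_iff.2 hspan)))
      have hcard := finrank_span_eq_card hc
      rw [htop, finrank_top, Fintype.card_fin] at hcard
      omega
    refine ⟨Fin.snoc c k, ?_⟩
    rw [Fin.comp_snoc, Fin.append_snoc]
    exact hc.finSnoc hk

variable {S κ ι : Type*} [CommRing S] [Finite κ] {N p : ℕ}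

lemma map_det_basisFun (φ : S →+* L) (e : κ ≃ Fin N) (v : Fin N → κ → S) :
    φ (((Pi.basisFun S κ).reindex e).det v) =
      ((Pi.basisFun L κ).reindex e).det fun i => φ ∘ v i := by
  rw [Module.Basis.det_apply, Module.Basis.det_apply, RingHom.map_det]
  rfl

theorem not_linearIndependent_of_maximalMinors_le_ker (φ : S →+* L) (e : κ ≃ Fin N)
    {ρ : ι → κ → S} {t : List ι} (ht : t.Nodup) (hN : t.length + p = N)
    (h : maximalMinors ((Pi.basisFun S κ).reindex e) ρ t p ≤ RingHom.ker φ) :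
    ¬ LinearIndependent L fun i => φ ∘ ρ i := by
  intro hind
  classical
  have := Fintype.ofFinite κ
  subst hN
  have hrank : t.length + p = Module.finrank L (κ → L) := by
    rw [Module.finrank_fintype_fun_eq_card, Fintype.card_congr e, Fintype.card_fin]
  obtain ⟨c, hc⟩ := exists_linearIndependent_append
    (hind.comp t.get (List.nodup_iff_injective_get.1 ht)) (Pi.basisFun L κ).span_eq hrank.le
  have hmem : topForm ((Pi.basisFun S κ).reindex e) (wedge ρ t *
      ExteriorAlgebra.ιMulti S p (Pi.basisFun S κ ∘ c)) ∈ RingHom.ker φ :=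
    h ⟨_, ExteriorAlgebra.ιMulti_range S p ⟨_, rfl⟩, rfl⟩
  have happend : (fun i => φ ∘ Fin.append (ρ ∘ t.get) (Pi.basisFun S κ ∘ c) i) =
      Fin.append ((fun i => φ ∘ ρ i) ∘ t.get) (Pi.basisFun L κ ∘ c) := by
    funext i k
    refine Fin.addCases (fun i => ?_) (fun i => ?_) i
    · simp
    · simp [Pi.single_apply, apply_ite φ]
  rw [RingHom.mem_ker, wedge_eq_ιMulti, ExteriorAlgebra.ιMulti_mul_ιMulti, topForm_ιMulti,
    map_det_basisFun, happend] at hmem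
  refine not_isUnit_zero (hmem ▸ (Module.Basis.is_basis_iff_det _).1 ⟨hc, ?_⟩)
  exact hc.span_eq_top_of_card_eq_finrank' (by rw [Fintype.card_fin, hrank])

end Dependence

section LikelihoodIdeal

variable {n m : ℕ}

lemma SNC.isNormalCrossing {f : Fin m → Rp n} (hf : SNC n m f) : IsNormalCrossing f := by
  intro I hI p hp hpI
  rcases I.eq_empty_or_nonempty with rfl | hne
  · exact linearIndependent_empty_type
  rw [Fintype.card_fin] at hI
  rw [linearIndependent_iff_card_eq_finrank_span, Fintype.card_coe,
    ← hf.2 I hne.card_pos hI p hp hpI, Matrix.rank_eq_finrank_span_row]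
  rfl

lemma toS_injective (n m : ℕ) : Function.Injective (toS n m) :=
  rename_injective _ Sum.inr_injective

lemma algHom_toS {L : Type*} [CommRing L] [Algebra ℂ L] (φ : Sp n m →ₐ[ℂ] L) (g : Rp n) :
    φ (toS n m g) = aeval (fun j => φ (X (Sum.inr j))) g := by
  suffices h : φ.comp (toS n m) = aeval fun j => φ (X (Sum.inr j)) from DFunLike.congr_fun h g
  ext j
  simp [toS]

lemma sum_X_mul_toS_pderiv {g : Rp n} {e : ℕ} (hg : g.IsHomogeneous e) :
    ∑ j, X (Sum.inr j) * toS n m (pderiv j g) = (e : Sp n m) * toS n m g := by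
  simpa [toS] using congrArg (toS n m) hg.sum_X_mul_pderiv

lemma sumAlgEquiv_toS (g : Rp n) : sumAlgEquiv ℂ (Fin m) (Fin n) (toS n m g) = C g :=
  DFunLike.congr_fun (sumAlgEquiv_comp_rename_inr ℂ (Fin m) (Fin n)) g

variable {f : Fin m → Rp n}

/-- `S` is free over `R` on the monomials in the `sᵢ`, so kernel elements of `Q` over `S` split
into kernel elements over `R`. -/
lemma sum_X_mul_mem_preI {a : Fin m → Sp n m} {b : Fin n → Sp n m}
    (h : ∀ i, toS n m (f i) * a i + ∑ j, b j * toS n m (pderiv j (f i)) = 0) :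
    ∑ i, X (Sum.inl i) * a i ∈ preI n m f := by
  classical
  let e := sumAlgEquiv ℂ (Fin m) (Fin n)
  let T : Finset (Fin m →₀ ℕ) := Finset.univ.biUnion fun i => (e (a i)).support
  have ha (i : Fin m) : ∑ μ ∈ T, monomial μ ((e (a i)).coeff μ) = e (a i) := by
    refine .trans (Finset.sum_subset (Finset.subset_biUnion_of_mem _ (Finset.mem_univ i))
      fun μ _ hμ => ?_).symm (support_sum_monomial_coeff _)
    rw [notMem_support_iff.1 hμ, monomial_zero]
  have hsum : ∑ i, X (Sum.inl i) * a i = ∑ μ ∈ T, e.symm (monomial μ 1) *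
      ∑ i, X (Sum.inl i) * toS n m ((e (a i)).coeff μ) := by
    apply e.injective
    simp only [map_sum, map_mul, e.apply_symm_apply]
    simp only [e, sumAlgEquiv_X_inl, sumAlgEquiv_toS]
    simp only [Finset.mul_sum]
    rw [Finset.sum_comm]
    refine Finset.sum_congr rfl fun i _ => ?_
    conv_lhs => rw [← ha i, Finset.mul_sum]
    refine Finset.sum_congr rfl fun μ _ => ?_
    rw [mul_left_comm, mul_comm (monomial μ 1), C_mul_monomial, mul_one]
  rw [hsum]
  refine Ideal.sum_mem _ fun μ _ => Ideal.mul_mem_left _ _ (Ideal.subset_span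
    ⟨fun i => (e (a i)).coeff μ, fun j => (e (b j)).coeff μ, fun i => ?_, rfl⟩)
  have hμ := congrArg (fun g => (e g).coeff μ) (h i)
  simpa [e, sumAlgEquiv_toS, coeff_sum, mul_comm _ (C _), mul_comm (pderiv _ _)] using hμ

lemma toS_prod_mul_sum_X_mul {a : Fin m → Rp n} {b : Fin n → Rp n}
    (h : ∀ i, f i * a i + ∑ j, b j * pderiv j (f i) = 0) :
    toS n m (∏ i, f i) * ∑ i, X (Sum.inl i) * toS n m (a i) =
      -∑ j, toS n m (b j) * hpoly n m f j := by
  have hrow (i : Fin m) : (∏ l, f l) * a i =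
      -∑ j, b j * ((Finset.univ.erase i).prod f * pderiv j (f i)) := by
    rw [← Finset.mul_prod_erase _ _ (Finset.mem_univ i), mul_right_comm,
      eq_neg_of_add_eq_zero_left (h i), neg_mul, Finset.sum_mul]
    exact congrArg Neg.neg (Finset.sum_congr rfl fun j _ => by ring)
  simp only [hpoly, Finset.mul_sum]
  rw [Finset.sum_comm, ← Finset.sum_neg_distrib]
  refine Finset.sum_congr rfl fun i _ => ?_
  rw [mul_left_comm, ← map_mul, hrow, map_neg, map_sum, mul_neg, Finset.mul_sum]
  simp only [map_mul, mul_left_comm]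

lemma preI_le_IA (n m : ℕ) (f : Fin m → Rp n) : preI n m f ≤ IA n m f := by
  refine Ideal.span_le.2 ?_
  rintro _ ⟨a, b, h, rfl⟩
  rw [SetLike.mem_coe, IA, Ideal.mem_comap,
    ← Ideal.unit_mul_mem_iff_mem _ (IsLocalization.Away.algebraMap_isUnit (toS n m (∏ i, f i))),
    ← map_mul, toS_prod_mul_sum_X_mul h, map_neg, map_sum]
  refine neg_mem (Ideal.sum_mem _ fun j _ => ?_)
  rw [map_mul]
  exact Ideal.mul_mem_left _ _ (Ideal.subset_span ⟨j, rfl⟩)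

lemma exists_pow_mul_mem_of_mem_IA {P : Sp n m} (hP : P ∈ IA n m f) :
    ∃ k : ℕ, toS n m (∏ i, f i) ^ k * P ∈ Ideal.span (Set.range (hpoly n m f)) := by
  have hmap : (Ideal.span (Set.range (hpoly n m f))).map
      (algebraMap (Sp n m) (Localization.Away (toS n m (∏ i, f i)))) = Ideal.span (Set.range
      fun j => algebraMap (Sp n m) (Localization.Away (toS n m (∏ i, f i))) (hpoly n m f j)) := by
    rw [Ideal.map_span, ← Set.range_comp]
    rfl
  rw [IA, Ideal.mem_comap, ← hmap, IsLocalization.algebraMap_mem_map_algebraMap_iff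
    (Submonoid.powers (toS n m (∏ i, f i)))] at hP
  obtain ⟨_, ⟨k, rfl⟩, hk⟩ := hP
  exact ⟨k, hk⟩

lemma linForm_mem_preI {d : Fin m → ℕ} (hfh : ∀ i, (f i).IsHomogeneous (d i)) :
    linForm n m d ∈ preI n m f := by
  refine Ideal.subset_span ⟨fun i => d i, fun j => -X j, fun i => ?_, ?_⟩
  · simp only [neg_mul, Finset.sum_neg_distrib, (hfh i).sum_X_mul_pderiv, nsmul_eq_mul]
    ring
  · simp only [linForm, map_natCast, mul_comm]

end LikelihoodIdeal

section ReducedMinors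

open RingTheory.Sequence

variable {n m : ℕ}

/-- The indices `2, …, m` of the diagonal columns of `Q_{∖1}`. -/
abbrev DiagCol (m : ℕ) := {k : Fin m // (k : ℕ) ≠ 0}

@[to_additive]
lemma prod_diagCol [NeZero m] {M : Type*} [CommMonoid M] (g : Fin m → M) :
    ∏ k : DiagCol m, g k = ∏ i ∈ Finset.univ.erase 0, g i :=
  (Finset.prod_subtype _ (fun i => by simp) g).symm

lemma card_diagCol [NeZero m] : Fintype.card (DiagCol m) = m - 1 := by
  rw [Fintype.card_eq_sum_ones, sum_diagCol fun _ => 1, Finset.sum_const, smul_eq_mul, mul_one,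
    Finset.card_erase_of_mem (Finset.mem_univ _), Finset.card_fin]

/-- The standard basis of `S^{Col n m}`, enumerated in order to define determinants. -/
def colBasis (n m : ℕ) :
    Module.Basis (Fin (Fintype.card (Col n m))) (Sp n m) (Col n m → Sp n m) :=
  (Pi.basisFun (Sp n m) (Col n m)).reindex (Fintype.equivFin _)

/-- The functional `v ↦ Σ_k a_k v_k + Σ_j b_j v_j`, in which the entry `a 0` is not used. -/
def rowFunctional (a : Fin m → Sp n m) (b : Fin n → Sp n m) :
    Module.Dual (Sp n m) (Col n m → Sp n m) :=
  dotProductEquiv (Sp n m) (Col n m) (Sum.elim (fun k => a k) b)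

lemma rowFunctional_sumElim (a : Fin m → Sp n m) (b : Fin n → Sp n m) (v : DiagCol m → Sp n m)
    (v' : Fin n → Sp n m) :
    rowFunctional a b (Sum.elim v v') = ∑ k : DiagCol m, a k * v k + ∑ j, b j * v' j := by
  rw [rowFunctional, dotProductEquiv_apply_apply, sumElim_dotProduct_sumElim]
  rfl

lemma row_none (f : Fin m → Rp n) :
    (Qs1 n m f).row none = Sum.elim (fun k : DiagCol m => X (Sum.inl (k : Fin m))) 0 := by
  ext (k | j) <;> rfl

lemma row_some (f : Fin m → Rp n) (i : Fin m) :
    (Qs1 n m f).row (some i) = Sum.elim (fun k : DiagCol m => if i = k then toS n m (f i) else 0)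
      fun j => toS n m (pderiv j (f i)) := by
  ext (k | j)
  · simp [Qs1, Q1, apply_ite (toS n m)]
  · rfl

variable {L : Type} [Field L] [Algebra ℂ L]

lemma sum_smul_row_inl (φ : Sp n m →ₐ[ℂ] L) (f : Fin m → Rp n) (c : Fin m → L) (k : DiagCol m) :
    (∑ i, c i • (φ ∘ (Qs1 n m f).row (some i))) (Sum.inl k) =
      c k * aeval (fun j => φ (X (Sum.inr j))) (f k) := by
  simp [row_some, apply_ite φ, algHom_toS]

lemma sum_smul_row_inr (φ : Sp n m →ₐ[ℂ] L) (f : Fin m → Rp n) (c : Fin m → L) (j : Fin n) :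
    (∑ i, c i • (φ ∘ (Qs1 n m f).row (some i))) (Sum.inr j) =
      ∑ i, c i * aeval (fun j => φ (X (Sum.inr j))) (pderiv j (f i)) := by
  simp [row_some, algHom_toS]

/-- The rows of `Q_{∖1}` other than the first one. -/
def diagRows (m : ℕ) : List (Option (Fin m)) :=
  (Finset.univ : Finset (DiagCol m)).toList.map fun k : DiagCol m => some (k : Fin m)

lemma forall_mem_diagRows {p : Option (Fin m) → Prop} :
    (∀ i ∈ diagRows m, p i) ↔ ∀ k : DiagCol m, p (some k) := by
  simp [diagRows]

variable [NeZero m] {f : Fin m → Rp n} {d : Fin m → ℕ} {a : Fin m → Sp n m}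

lemma exists_eq_rowFunctional (φ : Module.Dual (Sp n m) (Col n m → Sp n m)) :
    ∃ (a : Fin m → Sp n m) (b : Fin n → Sp n m), a 0 = 0 ∧ φ = rowFunctional a b := by
  obtain ⟨ξ, rfl⟩ := (dotProductEquiv (Sp n m) (Col n m)).surjective φ
  refine ⟨fun i => if h : (i : ℕ) ≠ 0 then ξ (Sum.inl ⟨i, h⟩) else 0, fun j => ξ (Sum.inr j),
    by simp, congrArg _ (funext ?_)⟩
  rintro (k | j)
  · exact Eq.symm (dif_pos k.2 : dite _ _ _ = _)
  · rfl

lemma rowFunctional_row_none (ha : a 0 = 0) (b : Fin n → Sp n m) :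
    rowFunctional a b ((Qs1 n m f).row none) = ∑ i, X (Sum.inl i) * a i := by
  rw [row_none, rowFunctional_sumElim, sum_diagCol fun i => a i * X (Sum.inl i),
    Finset.sum_erase _ (by rw [ha, zero_mul])]
  simp [mul_comm]

lemma rowFunctional_row_some (ha : a 0 = 0) (b : Fin n → Sp n m) (i : Fin m) :
    rowFunctional a b ((Qs1 n m f).row (some i)) =
      toS n m (f i) * a i + ∑ j, b j * toS n m (pderiv j (f i)) := by
  rw [row_some, rowFunctional_sumElim,
    sum_diagCol fun k => a k * if i = k then toS n m (f i) else 0,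
    Finset.sum_erase _ (by rw [ha, zero_mul])]
  simp [mul_comm]

/-- The rows of `Q^s_{∖1}`, each occurring once; the appended row and the first row of `Q_{∖1}`,
which is zero in the diagonal columns, come first. -/
def rowList (m : ℕ) [NeZero m] : List (Option (Fin m)) := none :: some 0 :: diagRows m

lemma nodup_rowList : (rowList m).Nodup := by
  have hinj : Function.Injective fun k : DiagCol m => some (k : Fin m) :=
    (Option.some_injective _).comp Subtype.val_injective
  refine List.nodup_cons.2 ⟨by simp [diagRows], List.nodup_cons.2 ⟨by simp [diagRows], ?_⟩⟩
  exact (Finset.nodup_toList _).map hinj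

lemma mem_rowList (i : Option (Fin m)) : i ∈ rowList m := by
  rcases i with _ | i
  · simp [rowList]
  · by_cases hi : i = 0 <;> simp [rowList, diagRows, hi]

lemma length_rowList : (rowList m).length = m + 1 := by
  have := NeZero.pos m
  simp only [rowList, diagRows, List.length_cons, List.length_map, Finset.length_toList,
    Finset.card_univ, card_diagCol]
  omega

lemma card_col_eq (hn : 2 ≤ n) : n - 2 + (rowList m).length = Fintype.card (Col n m) := by
  have := NeZero.pos m
  rw [length_rowList, Fintype.card_sum, card_diagCol, Fintype.card_fin]
  omega

/-- The ideal of maximal minors of `Q^s_{∖1}`, for `2 ≤ n`. -/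
def reducedMinors (n m : ℕ) [NeZero m] (f : Fin m → Rp n) : Ideal (Sp n m) :=
  maximalMinors (colBasis n m) (Qs1 n m f).row (rowList m) (n - 2)

lemma reducedMinors_le_preI (n m : ℕ) [NeZero m] (f : Fin m → Rp n) :
    reducedMinors n m f ≤ preI n m f := by
  intro u hu
  obtain ⟨φ, rfl, hφ⟩ := hasDualFamily_of_mem_maximalMinors nodup_rowList mem_rowList hu none
  obtain ⟨a, b, ha, rfl⟩ := exists_eq_rowFunctional φ
  rw [rowFunctional_row_none ha]
  refine sum_X_mul_mem_preI (b := b) fun i => ?_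
  rw [← rowFunctional_row_some ha]
  exact hφ (some i) (Option.some_ne_none i)

section Dimension

variable {φ : Sp n m →ₐ[ℂ] L}

lemma linearIndependent_row_some (hfh : ∀ i, (f i).IsHomogeneous (d i)) (hd : d 0 ≠ 0)
    (hf : IsNormalCrossing f) (hx : (fun j => φ (X (Sum.inr j))) ≠ 0) :
    LinearIndependent L fun i => φ ∘ (Qs1 n m f).row (some i) := by
  have : CharZero L := charZero_of_injective_algebraMap (algebraMap ℂ L).injective
  refine Fintype.linearIndependent_iff.2 fun c hc => congrFun ?_
  have hpd (j : Fin n) : ∑ i, c i * aeval (fun j => φ (X (Sum.inr j))) (pderiv j (f i)) = 0 :=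
    (sum_smul_row_inr φ f c j).symm.trans (congrFun hc (Sum.inr j))
  refine hf.eq_zero_of_sum_mul_pderiv_eq_zero hfh hx hpd
    (mul_aeval_eq_zero_of_sum_mul_pderiv_eq_zero hfh hd hpd fun l hl => ?_)
  exact (sum_smul_row_inl φ f c ⟨l, Fin.val_ne_zero_iff.2 hl⟩).symm.trans (congrFun hc _)

lemma exists_row_none_eq_sum (hn : 2 ≤ n) (hfh : ∀ i, (f i).IsHomogeneous (d i)) (hd : d 0 ≠ 0)
    (hf : IsNormalCrossing f) (hφ : reducedMinors n m f ≤ RingHom.ker φ)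
    (hx : (fun j => φ (X (Sum.inr j))) ≠ 0) :
    ∃ c : Fin m → L,
      (∀ j, ∑ i, c i * aeval (fun j => φ (X (Sum.inr j))) (pderiv j (f i)) = 0) ∧
      ∀ i, i ≠ 0 → φ (X (Sum.inl i)) = c i * aeval (fun j => φ (X (Sum.inr j))) (f i) := by
  have hdep := not_linearIndependent_of_maximalMinors_le_ker (φ : Sp n m →+* L)
    (Fintype.equivFin _) nodup_rowList (by rw [add_comm, card_col_eq hn]) hφ
  rw [linearIndependent_option, not_and_not_right] at hdep
  obtain ⟨c, hc⟩ := (Submodule.mem_span_range_iff_exists_fun L).1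
    (hdep (linearIndependent_row_some hfh hd hf hx))
  refine ⟨c, fun j => ?_, fun i hi => ?_⟩
  · rw [← sum_smul_row_inr]
    exact (congrFun hc (Sum.inr j)).trans (by simp [row_none])
  · rw [← sum_smul_row_inl φ f c ⟨i, Fin.val_ne_zero_iff.2 hi⟩]
    exact (congrFun hc (Sum.inl ⟨i, _⟩)).symm

lemma trdeg_quotient_le (hn : 2 ≤ n) (hm : n ≤ m) (hfh : ∀ i, (f i).IsHomogeneous (d i))
    (hd : ∀ i, d i ≠ 0) (hf : IsNormalCrossing f) {i : Fin m} {𝔮 : Ideal (Sp n m)} [𝔮.IsPrime]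
    (hi : toS n m (f i) ∈ 𝔮) (hle : reducedMinors n m f ≤ 𝔮) :
    Algebra.trdeg ℂ (Sp n m ⧸ 𝔮) ≤ m := by
  let φ : Sp n m →ₐ[ℂ] FractionRing (Sp n m ⧸ 𝔮) :=
    (IsScalarTower.toAlgHom ℂ (Sp n m ⧸ 𝔮) _).comp (Ideal.Quotient.mkₐ ℂ 𝔮)
  have hφ : 𝔮 ≤ RingHom.ker φ := fun u hu => by
    rw [RingHom.mem_ker, AlgHom.comp_apply, Ideal.Quotient.mkₐ_eq_mk,
      Ideal.Quotient.eq_zero_iff_mem.2 hu, map_zero]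
  have hrank := hf.rank_derivation_le hfh hd (by simpa using hm)
    (x := fun j => φ (X (Sum.inr j))) (s := fun i => φ (X (Sum.inl i))) (i := i) (i₀ := 0)
    (fun D hDx hDs => ?_) ?_ (exists_row_none_eq_sum hn hfh (hd 0) hf (hle.trans hφ))
  · rw [Fintype.card_fin] at hrank
    exact ((trdeg_le_of_injective (IsScalarTower.toAlgHom ℂ _ (FractionRing (Sp n m ⧸ 𝔮)))
      (IsFractionRing.injective _ _)).trans (trdeg_le_rank_derivation ℂ _)).trans hrank
  · refine derivation_eq_zero_of_isFractionRing (A := Sp n m ⧸ 𝔮) fun y => ?_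
    obtain ⟨g, rfl⟩ := Ideal.Quotient.mkₐ_surjective ℂ 𝔮 y
    have hg : φ g = aeval (fun v => φ (X v)) g := DFunLike.congr_fun (aeval_unique φ) g
    refine (congrArg D hg).trans ?_
    rw [derivation_aeval, Fintype.sum_sum_type]
    simp [hDx, hDs]
  · rw [← algHom_toS]
    exact hφ hi

end Dimension

section Saturation

lemma mem_reducedMinors_of_toS_mul_mem (hn : 2 ≤ n) (hm : n ≤ m)
    (hfh : ∀ i, (f i).IsHomogeneous (d i)) (hd : ∀ i, d i ≠ 0) (hf : IsNormalCrossing f)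
    {i : Fin m} {u : Sp n m} (hu : toS n m (f i) * u ∈ reducedMinors n m f) :
    u ∈ reducedMinors n m f := by
  have : Nonempty (Fin n) := ⟨⟨0, by omega⟩⟩
  have hfi : IsSMulRegular (Sp n m) (toS n m (f i)) :=
    .of_ne_zero ((map_ne_zero_iff _ (toS_injective n m)).2 (hf.ne_zero i))
  have hdepth (P : Ideal (Sp n m)) (_ : P.IsMaximal) :
      ExtVanishesBelow (Sp n m) (QuotSMulTop (toS n m (f i)) (Sp n m)) (Sp n m ⧸ P)
        (m + n - 1) := by
    refine ExtVanishesBelow.quotSMulTop hfi ?_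
    rw [show m + n - 1 + 1 = Fintype.card (Fin m ⊕ Fin n) by simp; omega]
    exact extVanishesBelow_card_of_isMaximal P
  obtain ⟨l, hl, hlI, hreg⟩ := exists_isWeaklyRegular_of_trdeg_le ℂ (J := reducedMinors n m f)
    (e := m) (r := n - 1) (by omega) hdepth fun 𝔮 _ hann hle =>
      trdeg_quotient_le hn hm hfh hd hf (i := i) (hann (QuotSMulTop.mem_annihilator _ _)) hle
  exact mem_maximalMinors_of_mul_mem nodup_rowList mem_rowList (card_col_eq hn) (by omega) hlI
    ((isWeaklyRegular_cons_iff _ _ _).2 ⟨hfi, hreg⟩) hu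

lemma mem_reducedMinors_of_toS_prod_pow_mul_mem (hn : 2 ≤ n) (hm : n ≤ m)
    (hfh : ∀ i, (f i).IsHomogeneous (d i)) (hd : ∀ i, d i ≠ 0) (hf : IsNormalCrossing f)
    {r : ℕ} {u : Sp n m} (hu : toS n m (∏ i, f i) ^ r * u ∈ reducedMinors n m f) :
    u ∈ reducedMinors n m f := by
  have hprod (T : Finset (Fin m)) (u : Sp n m) :
      toS n m (∏ i ∈ T, f i) * u ∈ reducedMinors n m f → u ∈ reducedMinors n m f := by
    induction T using Finset.induction_on generalizing u with
    | empty => simp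
    | insert i T hi ih =>
      rw [Finset.prod_insert hi, map_mul, mul_assoc]
      exact fun h => ih u (mem_reducedMinors_of_toS_mul_mem hn hm hfh hd hf h)
  induction r with
  | zero => simpa using hu
  | succ r ih =>
    rw [pow_succ', mul_assoc] at hu
    exact ih (hprod _ _ hu)

end Saturation

end ReducedMinors

section EulerReduction

variable {n m : ℕ}

/-- The diagonal columns of `Q_{∖1}`. -/
def diagCols (n m : ℕ) : List (Col n m) := (Finset.univ : Finset (DiagCol m)).toList.map Sum.inl

/-- The Jacobian columns of `Q_{∖1}`. -/
def jacobianCols (n m : ℕ) : List (Col n m) := (Finset.univ : Finset (Fin n)).toList.map Sum.inr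

lemma ι_row_some_sub_mul_wedge_jacobianCols (f : Fin m → Rp n) (k : DiagCol m) :
    ExteriorAlgebra.ι (Sp n m)
        ((Qs1 n m f).row (some k) - toS n m (f k) • Pi.basisFun (Sp n m) (Col n m) (Sum.inl k)) *
      wedge (Pi.basisFun (Sp n m) (Col n m)) (jacobianCols n m) = 0 := by
  have hsub :
      (Qs1 n m f).row (some k) - toS n m (f k) • Pi.basisFun (Sp n m) (Col n m) (Sum.inl k) =
        ∑ j, toS n m (pderiv j (f k)) • Pi.basisFun (Sp n m) (Col n m) (Sum.inr j) := by
    ext (l | j) <;> simp [row_some, Pi.single_apply, Subtype.coe_inj, eq_comm]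
  have hzero (j : Fin n) :=
    ι_mul_wedge_mul_eq_zero (S := Sp n m) (ρ := Pi.basisFun (Sp n m) (Col n m))
      (t := jacobianCols n m) (i := Sum.inr j) (by simp [jacobianCols]) 1
  simp only [mul_one] at hzero
  simp only [hsub, map_sum, Finset.sum_mul, map_smul, smul_mul_assoc, hzero, smul_zero,
    Finset.sum_const_zero]

lemma isUnit_topForm_wedge_cols (n m : ℕ) : IsUnit (topForm (colBasis n m)
    (wedge (Pi.basisFun (Sp n m) (Col n m)) (diagCols n m ++ jacobianCols n m))) := by
  refine isUnit_topForm_wedge _ _ (List.nodup_append.2 ⟨?_, ?_, ?_⟩) ?_ ?_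
  · exact (Finset.nodup_toList _).map Sum.inl_injective
  · exact (Finset.nodup_toList _).map Sum.inr_injective
  · simp [diagCols, jacobianCols]
  · rintro (k | j) <;> simp [diagCols, jacobianCols]
  · simp [diagCols, jacobianCols]

lemma wedge_jacobianCols_mem_exteriorPower (hn : 2 ≤ n) :
    wedge (Pi.basisFun (Sp n m) (Col n m)) (jacobianCols n m) ∈ ⋀[Sp n m]^(n - 2 + 1 + 1) _ := by
  have hlen : 0 + (jacobianCols n m).length = n - 2 + 1 + 1 := by
    simp only [jacobianCols, List.length_map, Finset.length_toList, Finset.card_fin]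
    omega
  rw [← hlen, ← mul_one (wedge _ _)]
  exact wedge_mul_mem_exteriorPower _ _ (by simp)

variable [NeZero m] {f : Fin m → Rp n} {d : Fin m → ℕ}

/-- The variables `s_i`, with `s_1` replaced by the solution of `Σ_i d_i s_i = 0`. -/
def eulerVar (n m : ℕ) [NeZero m] (d : Fin m → ℕ) : Fin m → Sp n m :=
  Function.update (fun i => X (Sum.inl i)) 0 (X (Sum.inl 0) - C (d 0 : ℂ)⁻¹ * linForm n m d)

/-- Elimination of `s_1` by means of `Σ_i d_i s_i = 0`. -/
def eulerReduce (n m : ℕ) [NeZero m] (d : Fin m → ℕ) : Sp n m →ₐ[ℂ] Sp n m :=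
  aeval (Sum.elim (eulerVar n m d) fun j => X (Sum.inr j))

lemma eulerVar_of_ne {i : Fin m} (hi : i ≠ 0) : eulerVar n m d i = X (Sum.inl i) :=
  Function.update_of_ne hi _ _

lemma natCast_mul_eulerVar_zero (hd : d 0 ≠ 0) :
    (d 0 : Sp n m) * eulerVar n m d 0 = (d 0 : Sp n m) * X (Sum.inl 0) - linForm n m d := by
  have hinv : (d 0 : Sp n m) * C (d 0 : ℂ)⁻¹ = 1 := by
    rw [← map_natCast (C : ℂ →+* Sp n m), ← map_mul, mul_inv_cancel₀ (Nat.cast_ne_zero.2 hd),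
      map_one]
  rw [eulerVar, Function.update_self, mul_sub, ← mul_assoc, hinv, one_mul]

lemma eulerReduce_toS (g : Rp n) : eulerReduce n m d (toS n m g) = toS n m g := by
  rw [algHom_toS, toS, rename_eq_aeval]
  simp only [eulerReduce, aeval_X, Sum.elim_inr]
  rfl

lemma eulerReduce_hpoly (j : Fin n) : eulerReduce n m d (hpoly n m f j) =
    ∑ i, eulerVar n m d i * toS n m ((Finset.univ.erase i).prod f * pderiv j (f i)) := by
  simp only [hpoly, map_sum, map_mul (eulerReduce n m d), eulerReduce_toS]
  simp [eulerReduce]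

lemma sub_eulerReduce_mem_preI (hfh : ∀ i, (f i).IsHomogeneous (d i)) (P : Sp n m) :
    P - eulerReduce n m d P ∈ preI n m f := by
  suffices h : Ideal.Quotient.mkₐ ℂ (preI n m f) =
      (Ideal.Quotient.mkₐ ℂ (preI n m f)).comp (eulerReduce n m d) from
    Ideal.Quotient.eq.1 (DFunLike.congr_fun h P)
  refine algHom_ext fun v => Ideal.Quotient.eq.2 ?_
  rcases v with i | j
  · rcases eq_or_ne i 0 with rfl | hi
    · have hlin := Ideal.mul_mem_left _ (C (d 0 : ℂ)⁻¹) (linForm_mem_preI hfh)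
      rwa [AlgHom.coe_toRingHom, eulerReduce, aeval_X, Sum.elim_inl, eulerVar,
        Function.update_self, sub_sub_cancel]
    · simp [eulerReduce, eulerVar_of_ne hi]
  · simp [eulerReduce]

lemma topForm_ι_smul_row_sub_mul_mem_reducedMinors (hn : 2 ≤ n)
    (hfh : ∀ i, (f i).IsHomogeneous (d i)) (hd : d 0 ≠ 0)
    {w : ExteriorAlgebra (Sp n m) (Col n m → Sp n m)} (hw : w ∈ ⋀[Sp n m]^(n - 2 + 1) _) :
    topForm (colBasis n m) (ExteriorAlgebra.ι _ (toS n m (f 0) • (Qs1 n m f).row none -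
      eulerVar n m d 0 • (Qs1 n m f).row (some 0)) * (wedge (Qs1 n m f).row (diagRows m) * w)) ∈
      reducedMinors n m f := by
  let a : Fin m → Sp n m := Function.update (fun k => -(d k : Sp n m)) 0 0
  have ha : a 0 = 0 := Function.update_self _ _ _
  let ψ := rowFunctional a fun j : Fin n => X (Sum.inr j)
  have hrow (i : Fin m) : ψ ((Qs1 n m f).row (some i)) = (a i + d i) * toS n m (f i) := by
    rw [rowFunctional_row_some ha, sum_X_mul_toS_pderiv (hfh i)]
    ring
  have hnone : ψ ((Qs1 n m f).row none) = d 0 * eulerVar n m d 0 := by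
    rw [rowFunctional_row_none ha, natCast_mul_eulerVar_zero hd, linForm,
      ← Finset.add_sum_erase _ _ (Finset.mem_univ 0), ha, mul_zero, zero_add,
      ← Finset.add_sum_erase Finset.univ (fun i => (d i : Sp n m) * _) (Finset.mem_univ 0),
      sub_add_cancel_left, ← Finset.sum_neg_distrib]
    refine Finset.sum_congr rfl fun i hi => ?_
    rw [show a i = _ from Function.update_of_ne (Finset.ne_of_mem_erase hi) _ _]
    ring
  have hdiag : ∀ i ∈ diagRows m, ψ ((Qs1 n m f).row i) = 0 := forall_mem_diagRows.2 fun k => by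
    rw [hrow, show a k = _ from Function.update_of_ne (Fin.val_ne_zero_iff.1 k.2) _ _,
      neg_add_cancel, zero_mul]
  have hunit : IsUnit (d 0 : Sp n m) := by
    simpa using (IsUnit.mk0 (d 0 : ℂ) (Nat.cast_ne_zero.2 hd)).map (C : ℂ →+* Sp n m)
  have hmem := topForm_ι_sub_mul_mem_maximalMinors (b := colBasis n m) (card_col_eq hn) hdiag hw
  rw [hrow, hnone, ha, zero_add, mul_smul, mul_smul, ← smul_sub, map_smul, smul_mul_assoc,
    map_smul, smul_eq_mul] at hmem
  exact (Ideal.unit_mul_mem_iff_mem _ hunit).1 hmem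

lemma sumElim_eulerReduce_hpoly :
    (Sum.elim 0 fun j => eulerReduce n m d (hpoly n m f j) : Col n m → Sp n m) =
      ∑ k : DiagCol m,
        (X (Sum.inl (k : Fin m)) * toS n m ((Finset.univ.erase (k : Fin m)).prod f)) •
          (Qs1 n m f).row (some k) -
      toS n m ((Finset.univ.erase 0).prod f) • (toS n m (f 0) • (Qs1 n m f).row none -
        eulerVar n m d 0 • (Qs1 n m f).row (some 0)) := by
  funext c
  rcases c with k | j
  · have hk : (0 : Fin m) ≠ k := (Fin.val_ne_zero_iff.1 k.2).symm
    have hsum : ∑ l : DiagCol m, X (Sum.inl (l : Fin m)) *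
        toS n m ((Finset.univ.erase (l : Fin m)).prod f) *
          (if (l : Fin m) = k then toS n m (f l) else 0) = X (Sum.inl (k : Fin m)) *
        toS n m ((Finset.univ.erase (k : Fin m)).prod f) * toS n m (f k) := by
      simp [Subtype.coe_inj]
    simp only [row_none, row_some, Pi.sub_apply, Finset.sum_apply, Pi.smul_apply, Sum.elim_inl,
      smul_eq_mul, hsum, if_neg hk, Pi.zero_apply]
    rw [mul_assoc, ← map_mul, Finset.prod_erase_mul _ _ (Finset.mem_univ _), mul_zero, sub_zero,
      ← mul_assoc, ← map_mul, Finset.prod_erase_mul _ _ (Finset.mem_univ _), mul_comm, sub_self]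
  · simp only [row_none, row_some, Pi.sub_apply, Finset.sum_apply, Pi.smul_apply, Sum.elim_inr,
      smul_eq_mul, Pi.zero_apply, eulerReduce_hpoly]
    rw [sum_diagCol fun k => X (Sum.inl k) * toS n m ((Finset.univ.erase k).prod f) *
        toS n m (pderiv j (f k)), ← Finset.sum_erase_add _ _ (Finset.mem_univ 0), map_mul]
    have hsum : ∑ i ∈ Finset.univ.erase 0,
        eulerVar n m d i * toS n m ((Finset.univ.erase i).prod f * pderiv j (f i)) =
        ∑ i ∈ Finset.univ.erase 0,
          X (Sum.inl i) * toS n m ((Finset.univ.erase i).prod f) * toS n m (pderiv j (f i)) :=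
      Finset.sum_congr rfl fun i hi => by
        rw [eulerVar_of_ne (Finset.ne_of_mem_erase hi), map_mul, mul_assoc]
    rw [hsum]
    ring

lemma topForm_ι_sumElim_mul_mem_reducedMinors (hn : 2 ≤ n)
    (hfh : ∀ i, (f i).IsHomogeneous (d i)) (hd : d 0 ≠ 0)
    {w : ExteriorAlgebra (Sp n m) (Col n m → Sp n m)} (hw : w ∈ ⋀[Sp n m]^(n - 2 + 1) _) :
    topForm (colBasis n m) (ExteriorAlgebra.ι _
      (Sum.elim 0 fun j => eulerReduce n m d (hpoly n m f j) : Col n m → Sp n m) *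
        (wedge (Qs1 n m f).row (diagRows m) * w)) ∈ reducedMinors n m f := by
  have hdiag (k : DiagCol m) : ExteriorAlgebra.ι (Sp n m) ((Qs1 n m f).row (some k)) *
      (wedge (Qs1 n m f).row (diagRows m) * w) = 0 :=
    ι_mul_wedge_mul_eq_zero (forall_mem_diagRows.1 (fun _ => id) k) w
  rw [sumElim_eulerReduce_hpoly, map_sub, map_sum, sub_mul, Finset.sum_mul]
  simp only [map_smul (ExteriorAlgebra.ι _), smul_mul_assoc, hdiag, smul_zero,
    Finset.sum_const_zero, zero_sub, map_neg, map_smul (topForm _)]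
  exact neg_mem (Ideal.mul_mem_left _ _
    (topForm_ι_smul_row_sub_mul_mem_reducedMinors hn hfh hd hw))

lemma wedge_diagRows_mul_wedge_jacobianCols (f : Fin m → Rp n) :
    wedge (S := Sp n m) (Qs1 n m f).row (diagRows m) *
        wedge (Pi.basisFun (Sp n m) (Col n m)) (jacobianCols n m) =
      toS n m ((Finset.univ.erase 0).prod f) •
        wedge (Pi.basisFun (Sp n m) (Col n m)) (diagCols n m ++ jacobianCols n m) := by
  have h := wedge_mul_eq_prod_smul (t := Finset.univ.toList)
    (ρ := fun k : DiagCol m => (Qs1 n m f).row (some (k : Fin m)))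
    (v := fun k => Pi.basisFun (Sp n m) (Col n m) (Sum.inl k))
    (a := fun k => toS n m (f k)) fun k _ => ι_row_some_sub_mul_wedge_jacobianCols f k
  rw [Finset.prod_map_toList, prod_diagCol fun k => toS n m (f k), ← map_prod] at h
  have happend := wedge_append_mul (S := Sp n m) (Pi.basisFun (Sp n m) (Col n m)) (diagCols n m)
    (jacobianCols n m) 1
  rw [mul_one, mul_one] at happend
  rw [happend]
  simpa only [wedge, diagRows, diagCols, List.map_map, Function.comp_def] using h

lemma toS_prod_sq_mul_eulerReduce_hpoly_mem (hn : 2 ≤ n)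
    (hfh : ∀ i, (f i).IsHomogeneous (d i)) (hd : d 0 ≠ 0) (j : Fin n) :
    toS n m (∏ i, f i) ^ 2 * eulerReduce n m d (hpoly n m f j) ∈ reducedMinors n m f := by
  let a : Fin m → Sp n m := Function.update
    (fun k => -toS n m ((Finset.univ.erase k).prod f * pderiv j (f k))) 0 0
  have ha : a 0 = 0 := Function.update_self _ _ _
  let ψ := rowFunctional a (Pi.single j (toS n m (∏ i, f i)))
  have hdiag : ∀ i ∈ diagRows m, ψ ((Qs1 n m f).row i) = 0 := forall_mem_diagRows.2 fun k => by
    rw [rowFunctional_row_some ha,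
      show a k = _ from Function.update_of_ne (Fin.val_ne_zero_iff.1 k.2) _ _, mul_neg, ← map_mul,
      ← mul_assoc, Finset.mul_prod_erase _ _ (Finset.mem_univ _)]
    simp [Pi.single_apply]
  have hψ : ψ (Sum.elim (0 : DiagCol m → Sp n m) fun j => eulerReduce n m d (hpoly n m f j)) =
      toS n m (∏ i, f i) * eulerReduce n m d (hpoly n m f j) := by
    rw [rowFunctional_sumElim]
    simp [Pi.single_apply]
  have hmem := mul_topForm_wedge_mul_mem
    (fun w hw => topForm_ι_sumElim_mul_mem_reducedMinors (f := f) hn hfh hd hw)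
    (by rw [← card_col_eq hn]; simp only [rowList, List.length_cons]; omega) hdiag
    (wedge_jacobianCols_mem_exteriorPower hn)
  rw [hψ, wedge_diagRows_mul_wedge_jacobianCols, map_smul, smul_eq_mul, ← mul_assoc,
    Ideal.mul_unit_mem_iff_mem _ (isUnit_topForm_wedge_cols n m)] at hmem
  convert Ideal.mul_mem_left _ (toS n m (f 0)) hmem using 1
  rw [pow_two, ← Finset.mul_prod_erase _ _ (Finset.mem_univ 0), map_mul]
  ring

lemma toS_prod_sq_mul_eulerReduce_mem (hn : 2 ≤ n) (hfh : ∀ i, (f i).IsHomogeneous (d i))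
    (hd : d 0 ≠ 0) {P : Sp n m} (hP : P ∈ Ideal.span (Set.range (hpoly n m f))) :
    toS n m (∏ i, f i) ^ 2 * eulerReduce n m d P ∈ reducedMinors n m f := by
  induction hP using Submodule.span_induction with
  | mem _ h =>
    obtain ⟨j, rfl⟩ := h
    exact toS_prod_sq_mul_eulerReduce_hpoly_mem hn hfh hd j
  | zero => simp
  | add _ _ _ _ hx hy => simpa only [map_add, mul_add] using add_mem hx hy
  | smul a x _ hx =>
    rw [smul_eq_mul, map_mul, mul_left_comm]
    exact Ideal.mul_mem_left _ _ hx

lemma IA_le_preI (hn : 2 ≤ n) (hm : n ≤ m) (hfh : ∀ i, (f i).IsHomogeneous (d i))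
    (hd : ∀ i, d i ≠ 0) (hf : IsNormalCrossing f) : IA n m f ≤ preI n m f := by
  intro P hP
  obtain ⟨k, hk⟩ := exists_pow_mul_mem_of_mem_IA hP
  have hmul := toS_prod_sq_mul_eulerReduce_mem hn hfh (hd 0) hk
  rw [map_mul, map_pow, eulerReduce_toS, ← mul_assoc, ← pow_add] at hmul
  have hred := mem_reducedMinors_of_toS_prod_pow_mul_mem hn hm hfh hd hf hmul
  have hadd := add_mem (sub_eulerReduce_mem_preI hfh P) (reducedMinors_le_preI n m f hred)
  rwa [sub_add_cancel] at hadd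

end EulerReduction

theorem snc_is_gentle_general (n m : ℕ) (hn : 2 ≤ n) (hm : n ≤ m) (f : Fin m → Rp n)
    (d : Fin m → ℕ) (hfh : ∀ i, (f i).IsHomogeneous (d i)) (hd : ∀ i, d i ≠ 0)
    (hf : IsNormalCrossing f) : preI n m f = IA n m f :=
  have : NeZero m := ⟨by omega⟩
  (preI_le_IA n m f).antisymm (IA_le_preI hn hm hfh hd hf)

/-- Under the SNC hypothesis, the pre-likelihood ideal equals the
likelihood ideal: every SNC arrangement is gentle. -/
theorem snc_is_gentle (n m : ℕ) (hn : 2 ≤ n) (hm : n + 1 ≤ m)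
    (f : Fin m → Rp n) (d : Fin m → ℕ)
    (hf0 : ∀ i, f i ≠ 0) (hfh : ∀ i, (f i).IsHomogeneous (d i)) (hd : ∀ i, 1 ≤ d i)
    (hsnc : SNC n m f) :
    preI n m f = IA n m f :=
  snc_is_gentle_general n m hn (by omega) f d hfh (fun i => Nat.one_le_iff_ne_zero.1 (hd i))
    hsnc.isNormalCrossing
end
end
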